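/- Let Γ be a finite connected simple graph with at least one edge. The graph 3-braid group B₃(Γ) is isomorphic to a free group if and only if at least one of the following holds: (a) Γ contains no cycle subgraph (Γ is a tree); (b) Γ has at most one vertex of degree at least 3; (c) Γ contains exactly one cycle subgraph, and that cycle contains every vertex of Γ of degree at least 3; (d) the realization |Γ| is homeomorphic to |Γ₀| for some simple graph Γ₀ obtained from the complete bipartite graph K_{2,3} by attaching finitely many (possibly zero) pendant edges at its two vertices of degree 3. -/

import Mathlib

/-!
Call a vertex essential if its degree is at least three.

**Presentation.** The configuration space is stratified by the cells of the graph occupied by the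
three points. A *labelling* assigns to each elementary move, in which one point passes from an edge
`h` to an end `v` of `h` while the others stay in cells `a`, `b`, a group element `g v h a b`; it is
*flat* (`Flat`) if two moves at different vertices commute. Theorem `presents` says that the braid
group carries a flat labelling through which all others factor up to gauge (a change of basepoint in
each stratum), and that it is generated by products along closed sequences of moves (`Presents`).
This is deduced from a general principle (`CSys`): in a space with a degeneration preorder whose
intervals are simply connected, a compatible system of transition elements is a local system, whose
monodromy gives the universal property (`CSys.univ`), while subdividing paths gives generation
(`CSys.zig_path`).

**Proving freeness.** If some flat labelling in a free group is universal, the presented group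
embeds into that free group, so it is free by Nielsen–Schreier (`free_of_universal`). Universality is
proved by gauge fixing: a confluent system of moves can be given trivial labels at once (`fw`), and
the remaining squares are solved explicitly. In cases (a), (b), (c) the graph is a tree away from one
vertex `vs`, and every other essential vertex disconnects the graph suitably (`StarData`,
`abc_star`); the solution is `StarData.lam`. In case (d) it is `Theta.lam3`.

**Disproving freeness.** A homomorphism from a free group to `(ℤ/2)²` lifts to the Heisenberg group
modulo 2. Hence for two flat labellings in `ℤ/2` the product cochain is a coboundary (`nf`). Taking
the parity of the permutation of the points for one of them and the class of an edge for the other,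
and summing over suitable squares, gives a contradiction when some cycle misses an essential vertex
(`case1`), and for two vertices joined by at least four strands (`case2`).

**Classification.** If (a), (b), (c) fail and every cycle contains all essential vertices, counting
edges shows that there are exactly two essential vertices (`no_three`, `dsum_two_cycles`). Smoothing
vertices of degree two then turns the graph into a generalized theta graph with pendant edges at its
two branch vertices (`exists_theta`). Three strands is case (d), and more strands are excluded by
`case2`.
-/

open scoped Classical

noncomputable section

namespace GraphBraid

/-- The standard basis vector `e_v` in `ℝ^V`. -/
def basisVec {V : Type} [DecidableEq V] (v : V) : V → ℝ := fun w => if w = v then 1 else 0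

/-- The geometric realization of a simple graph, as the subspace of `ℝ^V` given by the
union over the edges of the straight segments joining the corresponding basis vectors. -/
def realization {V : Type} [DecidableEq V] (G : SimpleGraph V) : Set (V → ℝ) :=
  ⋃ (u : V) (v : V) (_ : G.Adj u v), segment ℝ (basisVec u) (basisVec v)

/-- The realization of a subgraph, as a subspace of `ℝ^V`. -/
def subRealization {V : Type} [DecidableEq V] {G : SimpleGraph V} (H : G.Subgraph) :
    Set (V → ℝ) :=
  ⋃ (u : V) (v : V) (_ : H.Adj u v), segment ℝ (basisVec u) (basisVec v)

/-- The ordered `n`-point configuration space of a topological space. -/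
abbrev Conf (n : ℕ) (X : Type) [TopologicalSpace X] : Type :=
  {f : Fin n → X // Function.Injective f}

/-- Two ordered configurations are related when they differ by a permutation of coordinates. -/
def permRel (n : ℕ) (X : Type) [TopologicalSpace X] (f g : Conf n X) : Prop :=
  ∃ σ : Equiv.Perm (Fin n), (f : Fin n → X) = (g : Fin n → X) ∘ σ

/-- The unordered `n`-point configuration space: the quotient of the ordered configuration
space by the symmetric group permuting coordinates. -/
abbrev UConf (n : ℕ) (X : Type) [TopologicalSpace X] : Type :=
  Quot (permRel n X)

/-- A group is free when it is isomorphic to `FreeGroup S` for some set `S`. -/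
def IsFreeGroupType (G : Type*) [Group G] : Prop :=
  ∃ S : Type, Nonempty (G ≃* FreeGroup S)

/-- A cycle subgraph: a subgraph with at least one edge which is connected and all of whose
vertices have degree exactly two (inside the subgraph). -/
def IsCycleSubgraph {W : Type*} {G : SimpleGraph W} (H : G.Subgraph) : Prop :=
  H.edgeSet.Nonempty ∧ H.Connected ∧ ∀ v ∈ H.verts, (H.neighborSet v).ncard = 2

/-- The graph obtained from the complete bipartite graph `K_{2,3}` by attaching `a` pendant
edges at the first degree-3 vertex and `b` pendant edges at the second degree-3 vertex. -/
def K23Pendant (a b : ℕ) : SimpleGraph ((Fin 2 ⊕ Fin 3) ⊕ (Fin a ⊕ Fin b)) :=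
  SimpleGraph.fromEdgeSet
    ({e | ∃ (i : Fin 2) (j : Fin 3), e = s(Sum.inl (Sum.inl i), Sum.inl (Sum.inr j))} ∪
     {e | ∃ k : Fin a, e = s(Sum.inl (Sum.inl 0), Sum.inr (Sum.inl k))} ∪
     {e | ∃ k : Fin b, e = s(Sum.inl (Sum.inl 1), Sum.inr (Sum.inr k))})

set_option linter.unusedSectionVars false
set_option linter.unnecessarySimpa false

/-! ### Flat labellings and presentations -/

section
open Sum

/-- A labelling of the elementary moves by group elements: `g v h a b` is the label of the move in
which one particle goes from the edge `h` to its end `v` while the other two stay in the cells `a`,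
`b` (vertices are `inl`, edges are `inr`). It is flat if it does not depend on the order of `a`, `b`
and if moves at distinct vertices commute. Values on moves that are not `Valid` are irrelevant. -/
structure Flat {V E F : Type*} [Group F] (inc : V → E → Prop)
    (g : V → E → V ⊕ E → V ⊕ E → F) : Prop where
  symm : ∀ v h a b, g v h a b = g v h b a
  sq : ∀ v h w k e, v ≠ w → inc v h → inc w k → e ≠ inl v → e ≠ inl w →
    g v h e (inr k) * g w k e (inl v) = g w k e (inr h) * g v h e (inl w)

/-- The move from `h` to `v` with the other particles in `a`, `b` makes sense: `v` is an end of `h`,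
and no vertex carries two particles. -/
structure Valid {V E : Type*} (inc : V → E → Prop) (v : V) (h : E) (a b : V ⊕ E) : Prop where
  inc : inc v h
  ha : a ≠ inl v
  hb : b ≠ inl v
  hab : ∀ u, a = inl u → b ≠ inl u

theorem Valid.symm {V E : Type*} {inc : V → E → Prop} {v : V} {h : E} {a b : V ⊕ E}
    (H : Valid inc v h a b) : Valid inc v h b a :=
  ⟨H.inc, H.hb, H.ha, fun u hb ha => H.hab u ha hb⟩

/-- The state with particles in the cells `x`, `a`, `b`. -/
def st {V E : Type*} (x a b : V ⊕ E) : Multiset (V ⊕ E) := {x, a, b}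

theorem st_swap {V E : Type*} (x a b : V ⊕ E) : st x a b = st x b a := by
  simp only [st, Multiset.insert_eq_cons, ← Multiset.singleton_add]; abel
theorem st_rot {V E : Type*} (x a b : V ⊕ E) : st x a b = st a x b := by
  simp only [st, Multiset.insert_eq_cons, ← Multiset.singleton_add]; abel

/-- `Reach inc g s t x`: the element `x` is the product of labels along a sequence of moves and
inverse moves from the state `s` to the state `t`. -/
inductive Reach {V E F : Type*} [Group F] (inc : V → E → Prop)
    (g : V → E → V ⊕ E → V ⊕ E → F) (s : Multiset (V ⊕ E)) : Multiset (V ⊕ E) → F → Prop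
  | refl : Reach inc g s s 1
  | fwd {x : F} {v h a b} : Valid inc v h a b → Reach inc g s (st (inr h) a b) x →
      Reach inc g s (st (inl v) a b) (x * g v h a b)
  | bwd {x : F} {v h a b} : Valid inc v h a b → Reach inc g s (st (inl v) a b) x →
      Reach inc g s (st (inr h) a b) (x * (g v h a b)⁻¹)

/-- The labellings `g` and `g'` differ by the change of basepoints `q` on valid moves. -/
def Gauge {V E F : Type*} [Group F] (inc : V → E → Prop)
    (g g' : V → E → V ⊕ E → V ⊕ E → F) (q : Multiset (V ⊕ E) → F) : Prop :=
  ∀ v h a b, Valid inc v h a b → g v h a b = q (st (inr h) a b) * g' v h a b * (q (st (inl v) a b))⁻¹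

/-- The group `P` is presented by the moves: it carries a flat labelling through which every flat
labelling factors up to gauge, and whose products along closed sequences of moves at some state
exhaust `P`. -/
structure Presents {V E : Type} (inc : V → E → Prop) (P : Type) [Group P] : Prop where
  ex : ∃ g : V → E → V ⊕ E → V ⊕ E → P, Flat inc g ∧
    (∀ (F : Type) [Group F] (lam : V → E → V ⊕ E → V ⊕ E → F), Flat inc lam →
      ∃ (Φ : P →* F) (q : Multiset (V ⊕ E) → F), Gauge inc (fun v h a b => Φ (g v h a b)) lam q) ∧
    ∃ s0, ∀ x, Reach inc g s0 s0 x

/-- Every flat labelling is, up to gauge, the image of `lam` under a homomorphism. -/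
def Universal {V E F : Type} [Group F] (inc : V → E → Prop)
    (lam : V → E → V ⊕ E → V ⊕ E → F) : Prop :=
  ∀ (P : Type) [Group P] (g : V → E → V ⊕ E → V ⊕ E → P), Flat inc g →
    ∃ (θ : F →* P) (q : Multiset (V ⊕ E) → P), Gauge inc g (fun v h a b => θ (lam v h a b)) q

/-- The universal properties of `P` and of `lam` give homomorphisms in both directions which compose
to an inner automorphism on closed sequences of moves, so `P` embeds into a free group and is free
by Nielsen–Schreier. -/
theorem free_of_universal {V E : Type} {inc : V → E → Prop} {P : Type} [Group P]
    (hP : Presents inc P) {S : Type} (lam : V → E → V ⊕ E → V ⊕ E → FreeGroup S)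
    (hl : Flat inc lam) (hu : Universal inc lam) : IsFreeGroupType P := by
  obtain ⟨g, hg, univ, s0, gen⟩ := hP.ex
  obtain ⟨Φ, q', hΦ⟩ := univ _ lam hl
  obtain ⟨θ, q, hθ⟩ := hu P g hg
  have key : ∀ s t x, Reach inc g s t x → x = q s * θ ((q' s)⁻¹ * Φ x * q' t) * (q t)⁻¹ := by
    intro s t x h
    induction h with
    | refl => simp
    | @fwd x v h a b hv _ ih =>
      have h1 := hθ v h a b hv
      have h2 := hΦ v h a b hv
      simp only at h1 h2
      rw [map_mul Φ, h2]
      conv_lhs => rw [ih, h1]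
      simp only [map_mul, map_inv]
      group
    | @bwd x v h a b hv _ ih =>
      have h1 := hθ v h a b hv
      have h2 := hΦ v h a b hv
      simp only at h1 h2
      rw [map_mul Φ, map_inv, h2]
      conv_lhs => rw [ih, h1]
      simp only [map_mul, map_inv]
      group
  have inj : Function.Injective Φ := by
    intro x y hxy
    rw [key _ _ _ (gen x), key _ _ _ (gen y), hxy]
  have e : P ≃* Φ.range := MonoidHom.ofInjective inj
  haveI : IsFreeGroup Φ.range := inferInstance
  exact ⟨IsFreeGroup.Generators Φ.range, ⟨e.trans (IsFreeGroup.mulEquiv Φ.range).symm⟩⟩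

theorem Gauge.flat {V E F : Type*} [Group F] {inc : V → E → Prop}
    {g g' : V → E → V ⊕ E → V ⊕ E → F} {q : Multiset (V ⊕ E) → F} (h : Gauge inc g g' q)
    (hg : Flat inc g) (hs : ∀ v h a b, g' v h a b = g' v h b a) : Flat inc g' := by
  refine ⟨hs, fun v h' w k e hvw hv hw hev hew => ?_⟩
  have e1 := h v h' e (inr k) ⟨hv, hev, by simp, by simp⟩
  have e2 := h w k e (inl v) ⟨hw, hew, by simpa using hvw, by rintro u rfl; simpa using fun h => hev (by rw [h])⟩
  have e3 := h w k e (inr h') ⟨hw, hew, by simp, by simp⟩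
  have e4 := h v h' e (inl w) ⟨hv, hev, by simpa using hvw.symm, by rintro u rfl; simpa using fun h => hew (by rw [h])⟩
  have := hg.sq v h' w k e hvw hv hw hev hew
  rw [e1, e2, e3, e4] at this
  have s1 : st (inr k) e (inl v) = st (inl v) e (inr k) := by
    rw [st_swap, st_rot, st_swap]
  have s2 : st (inr h') e (inl w) = st (inl w) e (inr h') := by
    rw [st_swap, st_rot, st_swap]
  have s3 : st (inr k) e (inr h') = st (inr h') e (inr k) := by
    rw [st_swap, st_rot, st_swap]
  have s4 : st (inl w) e (inl v) = st (inl v) e (inl w) := by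
    rw [st_swap, st_rot, st_swap]
  rw [s1, s2, s3, s4] at this
  have := congrArg (fun x => (q (st (inr h') e (inr k)))⁻¹ * x * q (st (inl v) e (inl w))) this
  simpa [mul_assoc] using this

/-- The transform of the labelling `g` by the gauge `q`. -/
def gaugeBy {V E F : Type*} [Group F] (g : V → E → V ⊕ E → V ⊕ E → F)
    (q : Multiset (V ⊕ E) → F) : V → E → V ⊕ E → V ⊕ E → F :=
  fun v h a b => (q (st (inr h) a b))⁻¹ * g v h a b * q (st (inl v) a b)

theorem gaugeBy_gauge {V E F : Type*} [Group F] (inc : V → E → Prop)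
    (g : V → E → V ⊕ E → V ⊕ E → F) (q : Multiset (V ⊕ E) → F) :
    Gauge inc g (gaugeBy g q) q := by
  intro v h a b _; simp [gaugeBy, mul_assoc]

theorem gaugeBy_flat {V E F : Type*} [Group F] {inc : V → E → Prop}
    {g : V → E → V ⊕ E → V ⊕ E → F} (hg : Flat inc g) (q : Multiset (V ⊕ E) → F) :
    Flat inc (gaugeBy g q) :=
  (gaugeBy_gauge inc g q).flat hg fun v h a b => by
    simp only [gaugeBy]; rw [st_swap, hg.symm, st_swap (inl v)]

theorem Gauge.trans {V E F : Type*} [Group F] {inc : V → E → Prop}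
    {g g' g'' : V → E → V ⊕ E → V ⊕ E → F} {q q' : Multiset (V ⊕ E) → F}
    (h : Gauge inc g g' q) (h' : Gauge inc g' g'' q') : Gauge inc g g'' (fun s => q s * q' s) := by
  intro v k a b H
  rw [h _ _ _ _ H, h' _ _ _ _ H]; simp [mul_assoc]

/-! ### Confluent rewriting with labels -/

/-- Labels of a terminating rewriting system with the diamond property up to labels are
coboundaries: `q s` is the product of labels from `s` down to its normal form. -/
theorem newman {S F : Type*} [Group F] (Step : S → S → F → Prop) (μ : S → ℕ)
    (hμ : ∀ s t x, Step s t x → μ t < μ s)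
    (dia : ∀ s t x t' x', Step s t x → Step s t' x' → (t = t' ∧ x = x') ∨
      ∃ u y y', Step t u y ∧ Step t' u y' ∧ x * y = x' * y') :
    ∃ q : S → F, ∀ s t x, Step s t x → x = q s * (q t)⁻¹ := by
  let nxt : S → Prop := fun s => ∃ p : S × F, Step s p.1 p.2
  have wf : WellFounded (fun t s => μ t < μ s) := (measure μ).wf
  let q : S → F := wf.fix (fun s rec => if h : nxt s then
    h.choose.2 * rec h.choose.1 (hμ _ _ _ h.choose_spec) else 1)
  have hq : ∀ s (h : nxt s), q s = h.choose.2 * q h.choose.1 := by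
    intro s h
    change wf.fix _ s = _
    rw [wf.fix_eq, dif_pos h]
  have key : ∀ n s, μ s ≤ n → ∀ t x, Step s t x → q s = x * q t := by
    intro n
    induction n with
    | zero => intro s hs t x h; have := hμ _ _ _ h; omega
    | succ n ih =>
      intro s hs t x h
      have hn : nxt s := ⟨(t, x), h⟩
      rw [hq s hn]
      have h0 := hn.choose_spec
      generalize hn.choose = p at h0
      obtain ⟨t0, x0⟩ := p
      simp only at h0 ⊢
      have m1 := hμ _ _ _ h
      have m2 := hμ _ _ _ h0
      rcases dia _ _ _ _ _ h h0 with ⟨rfl, rfl⟩ | ⟨u, y, y', h1, h2, e⟩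
      · rfl
      · rw [ih t (by omega) _ _ h1, ih t0 (by omega) _ _ h2, ← mul_assoc, ← mul_assoc, e]
  exact ⟨q, fun s t x h => by rw [key _ s le_rfl t x h]; simp⟩

/-- Data of a discrete flow on states: each participating vertex `w` has a chosen edge `dn w` below
it, its other edges lying above it with respect to the height `ht`; the moves of `w` along `k` with
the others in `a`, `b` satisfying `tr w k a b` are to be trivialized. The last two conditions make
the flow confluent. -/
structure FWData {V E : Type*} (inc : V → E → Prop) where
  Pt : V → Prop
  dn : V → E
  ht : V ⊕ E → ℕ
  tr : V → E → V ⊕ E → V ⊕ E → Prop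
  dn_inc : ∀ w, Pt w → inc w (dn w)
  ht_dn : ∀ w, Pt w → ht (inr (dn w)) < ht (inl w)
  ht_up : ∀ w k, Pt w → inc w k → k ≠ dn w → ht (inl w) < ht (inr k)
  uu : ∀ u w k, Pt u → Pt w → u ≠ w → inc u k → inc w k → k = dn u ∨ k = dn w
  tr_symm : ∀ w k a b, tr w k a b → tr w k b a
  tr_inv : ∀ w k u j e, Pt w → Pt u → u ≠ w → inc u j → (tr w k (inr j) e ↔ tr w k (inl u) e)
  td : ∀ w k₁ k₂ e, Pt w → inc w k₁ → inc w k₂ → k₁ ≠ dn w → k₂ ≠ dn w → k₁ ≠ k₂ →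
    tr w k₁ (inr k₂) e → tr w k₂ (inr k₁) e → e ≠ inl w → False

/-- A height-decreasing step of the flow, with its label: a particle at `w` goes down to `dn w`, or
a particle on another edge `k` of `w` goes to `w`. -/
inductive FWStep {V E F : Type*} [Group F] {inc : V → E → Prop} (D : FWData inc)
    (g : V → E → V ⊕ E → V ⊕ E → F) : Multiset (V ⊕ E) → Multiset (V ⊕ E) → F → Prop
  | down {w a b} : D.Pt w → Valid inc w (D.dn w) a b → D.tr w (D.dn w) a b →
      FWStep D g (st (inl w) a b) (st (inr (D.dn w)) a b) (g w (D.dn w) a b)⁻¹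
  | up {w k a b} : D.Pt w → Valid inc w k a b → k ≠ D.dn w → D.tr w k a b →
      FWStep D g (st (inr k) a b) (st (inl w) a b) (g w k a b)

theorem st_eq {V E : Type*} {x a b x' a' b' : V ⊕ E} (h : st x a b = st x' a' b') :
    (x = x' ∧ (a = a' ∧ b = b' ∨ a = b' ∧ b = a')) ∨ (x ≠ x' ∧ ∃ e,
      (a = x' ∧ b = e ∨ a = e ∧ b = x') ∧ (a' = x ∧ b' = e ∨ a' = e ∧ b' = x)) := by
  unfold st at h
  by_cases hx : x = x'
  · subst hx
    left
    refine ⟨rfl, ?_⟩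
    simp only [Multiset.insert_eq_cons, Multiset.cons_inj_right] at h
    have ha : a ∈ ({a', b'} : Multiset (V ⊕ E)) := by
      rw [Multiset.insert_eq_cons, ← h]; simp
    simp only [Multiset.insert_eq_cons, Multiset.mem_cons, Multiset.mem_singleton] at ha
    rcases ha with rfl | rfl
    · simp only [Multiset.cons_inj_right, Multiset.singleton_inj] at h; exact Or.inl ⟨rfl, h⟩
    · rw [← Multiset.singleton_add, ← Multiset.singleton_add, add_comm, Multiset.singleton_add, Multiset.singleton_add] at h
      right; refine ⟨rfl, ?_⟩
      have : ({a', a} : Multiset (V ⊕ E)) = {a, a'} := Multiset.pair_comm _ _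
      simp only [Multiset.insert_eq_cons] at this
      rw [this] at h
      have h2 : ({b, a} : Multiset (V ⊕ E)) = {a, b} := Multiset.pair_comm _ _
      simp only [Multiset.insert_eq_cons] at h2
      rw [h2] at h
      simpa using h
  · right
    refine ⟨hx, ?_⟩
    have e1 : ∀ p q r : V ⊕ E, ({p, q, r} : Multiset (V ⊕ E)) = {q, p, r} := fun p q r => st_rot p q r
    have e2 : ∀ p q r : V ⊕ E, ({p, q, r} : Multiset (V ⊕ E)) = {p, r, q} := fun p q r => st_swap p q r
    have hx' : x' ∈ ({x, a, b} : Multiset (V ⊕ E)) := by rw [h]; simp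
    simp only [Multiset.insert_eq_cons, Multiset.mem_cons, Multiset.mem_singleton] at hx'
    have main : ∀ a b, ({x, a, b} : Multiset (V ⊕ E)) = {x', a', b'} → a = x' →
        (a' = x ∧ b' = b ∨ a' = b ∧ b' = x) := by
      rintro a b h rfl
      rw [e1] at h
      simp only [Multiset.insert_eq_cons, Multiset.cons_inj_right] at h
      have ha : x ∈ ({a', b'} : Multiset (V ⊕ E)) := by
        rw [Multiset.insert_eq_cons, ← h]; simp
      simp only [Multiset.insert_eq_cons, Multiset.mem_cons, Multiset.mem_singleton] at ha
      rcases ha with rfl | rfl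
      · simp at h; exact Or.inl ⟨rfl, h.symm⟩
      · have : ({a', x} : Multiset (V ⊕ E)) = {x, a'} := Multiset.pair_comm _ _
        simp only [Multiset.insert_eq_cons] at this
        rw [this] at h; simp at h; exact Or.inr ⟨h.symm, rfl⟩
    rcases hx' with h' | rfl | rfl
    · exact absurd h'.symm hx
    · exact ⟨b, Or.inl ⟨rfl, rfl⟩, main _ _ h rfl⟩
    · exact ⟨a, Or.inr ⟨rfl, rfl⟩, main _ _ (by rw [e2, h]) rfl⟩

end

/-! ### Gauge fixing -/

section
open Sum

theorem FWStep.down' {V E F : Type*} [Group F] {inc : V → E → Prop} {D : FWData inc}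
    {g : V → E → V ⊕ E → V ⊕ E → F} {w a b s t x} (h1 : D.Pt w) (h2 : Valid inc w (D.dn w) a b)
    (h3 : D.tr w (D.dn w) a b) (hs : s = st (inl w) a b) (ht : t = st (inr (D.dn w)) a b)
    (hx : x = (g w (D.dn w) a b)⁻¹) : FWStep D g s t x := by
  subst hs ht hx; exact .down h1 h2 h3
theorem FWStep.up' {V E F : Type*} [Group F] {inc : V → E → Prop} {D : FWData inc}
    {g : V → E → V ⊕ E → V ⊕ E → F} {w k a b s t x} (h1 : D.Pt w) (h2 : Valid inc w k a b)
    (h0 : k ≠ D.dn w)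
    (h3 : D.tr w k a b) (hs : s = st (inr k) a b) (ht : t = st (inl w) a b)
    (hx : x = (g w k a b)) : FWStep D g s t x := by
  subst hs ht hx; exact .up h1 h2 h0 h3

/-- The steps of the flow with the moving particle singled out: `FWS D g x a b y c` moves it from
`x` to `y` with label `c`, the others being in `a`, `b`. -/
inductive FWS {V E F : Type*} [Group F] {inc : V → E → Prop} (D : FWData inc)
    (g : V → E → V ⊕ E → V ⊕ E → F) : (V ⊕ E) → (V ⊕ E) → (V ⊕ E) → (V ⊕ E) → F → Prop
  | down {w a b} : D.Pt w → Valid inc w (D.dn w) a b → D.tr w (D.dn w) a b →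
      FWS D g (inl w) a b (inr (D.dn w)) (g w (D.dn w) a b)⁻¹
  | up {w k a b} : D.Pt w → Valid inc w k a b → k ≠ D.dn w → D.tr w k a b →
      FWS D g (inr k) a b (inl w) (g w k a b)

theorem FWS.symm {V E F : Type*} [Group F] {inc : V → E → Prop} {D : FWData inc}
    {g : V → E → V ⊕ E → V ⊕ E → F} (hg : Flat inc g) {x a b y c} (h : FWS D g x a b y c) :
    FWS D g x b a y c := by
  cases h with
  | down h1 h2 h3 => rw [hg.symm]; exact .down h1 h2.symm (D.tr_symm _ _ _ _ h3)
  | up h1 h2 h3 h4 => rw [hg.symm]; exact .up h1 h2.symm h3 (D.tr_symm _ _ _ _ h4)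

theorem FWS.step {V E F : Type*} [Group F] {inc : V → E → Prop} {D : FWData inc}
    {g : V → E → V ⊕ E → V ⊕ E → F} {x a b y c} (h : FWS D g x a b y c) :
    FWStep D g (st x a b) (st y a b) c := by
  cases h with
  | down h1 h2 h3 => exact .down h1 h2 h3
  | up h1 h2 h3 h4 => exact .up h1 h2 h3 h4

theorem FWStep.iff {V E F : Type*} [Group F] {inc : V → E → Prop} {D : FWData inc}
    {g : V → E → V ⊕ E → V ⊕ E → F} {s t c} (h : FWStep D g s t c) :
    ∃ x a b y, s = st x a b ∧ t = st y a b ∧ FWS D g x a b y c := by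
  cases h with
  | down h1 h2 h3 => exact ⟨_, _, _, _, rfl, rfl, .down h1 h2 h3⟩
  | up h1 h2 h3 h4 => exact ⟨_, _, _, _, rfl, rfl, .up h1 h2 h3 h4⟩

theorem FWS.same {V E F : Type*} [Group F] {inc : V → E → Prop} {D : FWData inc}
    {g : V → E → V ⊕ E → V ⊕ E → F} {x a b y c y' c'}
    (h : FWS D g x a b y c) (h' : FWS D g x a b y' c') : y = y' ∧ c = c' := by
  cases h with
  | down h1 h2 h3 => cases h'; exact ⟨rfl, rfl⟩
  | @up w k _ _ h1 h2 h3 h4 =>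
    cases h' with
    | @up w' _ _ _ h1' h2' h3' h4' =>
      by_cases e : w = w'
      · subst e; exact ⟨rfl, rfl⟩
      · rcases D.uu w w' k h1 h1' e h2.inc h2'.inc with h | h
        · exact absurd h h3
        · exact absurd h h3'

theorem FWS.diff {V E F : Type*} [Group F] {inc : V → E → Prop} {D : FWData inc}
    {g : V → E → V ⊕ E → V ⊕ E → F} (hg : Flat inc g) {x x' e y c y' c'} (hx : x ≠ x')
    (h : FWS D g x e x' y c) (h' : FWS D g x' e x y' c') :
    ∃ d d', FWS D g x' e y y' d ∧ FWS D g x e y' y d' ∧ c * d = c' * d' := by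
  cases h with
  | @down w _ _ h1 h2 h3 =>
    cases h' with
    | @down w' _ _ h1' h2' h3' =>
      have hw : w ≠ w' := fun h => hx (by rw [h])
      refine ⟨_, _, .down h1' ⟨h2'.inc, h2'.ha, by simp, by simp⟩ (D.tr_symm _ _ _ _ ((D.tr_inv _ _ _ _ _ h1' h1 hw h2.inc).2 (D.tr_symm _ _ _ _ h3'))),
        .down h1 ⟨h2.inc, h2.ha, by simp, by simp⟩ (D.tr_symm _ _ _ _ ((D.tr_inv _ _ _ _ _ h1 h1' hw.symm h2'.inc).2 (D.tr_symm _ _ _ _ h3))), ?_⟩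
      have := hg.sq w (D.dn w) w' (D.dn w') e hw h2.inc h2'.inc h2.ha h2'.ha
      rw [← mul_inv_rev, ← mul_inv_rev, this]
    | @up w' k _ _ h1' h2' h3' h4' =>
      have hw : w ≠ w' := fun h => h2'.hb (by rw [h])
      refine ⟨_, _, .up h1' ⟨h2'.inc, h2'.ha, by simp, by simp⟩ h3' (D.tr_symm _ _ _ _ ((D.tr_inv _ _ _ _ _ h1' h1 hw h2.inc).2 (D.tr_symm _ _ _ _ h4'))),
        .down h1 ⟨h2.inc, h2.ha, by simpa using hw.symm, ?_⟩ (D.tr_symm _ _ _ _ ((D.tr_inv _ _ _ _ _ h1 h1' hw.symm h2'.inc).1 (D.tr_symm _ _ _ _ h3))), ?_⟩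
      · rintro u rfl h
        exact h2'.ha (by simpa using h.symm)
      have := hg.sq w (D.dn w) w' k e hw h2.inc h2'.inc h2.ha h2'.ha
      rw [inv_mul_eq_iff_eq_mul, ← mul_assoc, this]
      simp
  | @up w k _ _ h1 h2 h3 h4 =>
    cases h' with
    | @down w' _ _ h1' h2' h3' =>
      have hw : w ≠ w' := fun h => h2.hb (by rw [h])
      refine ⟨_, _, .down h1' ⟨h2'.inc, h2'.ha, by simpa using hw, ?_⟩ (D.tr_symm _ _ _ _ ((D.tr_inv _ _ _ _ _ h1' h1 hw h2.inc).1 (D.tr_symm _ _ _ _ h3'))), .up h1 ⟨h2.inc, h2.ha, by simp, by simp⟩ h3 (D.tr_symm _ _ _ _ ((D.tr_inv _ _ _ _ _ h1 h1' hw.symm h2'.inc).2 (D.tr_symm _ _ _ _ h4))),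
         ?_⟩
      · rintro u rfl h
        exact h2.ha (by simpa using h.symm)
      have := hg.sq w k w' (D.dn w') e hw h2.inc h2'.inc h2.ha h2'.ha
      rw [mul_inv_eq_iff_eq_mul, mul_assoc, eq_inv_mul_iff_mul_eq, this]
    | @up w' k' _ _ h1' h2' h3' h4' =>
      have hkk : k ≠ k' := fun h => hx (by rw [h])
      by_cases hw : w = w'
      · subst hw
        exact (D.td w k k' e h1 h2.inc h2'.inc h3 h3' hkk (D.tr_symm _ _ _ _ h4) (D.tr_symm _ _ _ _ h4') h2.ha).elim
      refine ⟨_, _, .up h1' ⟨h2'.inc, h2'.ha, by simpa using hw, ?_⟩ h3' (D.tr_symm _ _ _ _ ((D.tr_inv _ _ _ _ _ h1' h1 hw h2.inc).1 (D.tr_symm _ _ _ _ h4'))), .up h1 ⟨h2.inc, h2.ha, by simpa using Ne.symm hw, ?_⟩ h3 (D.tr_symm _ _ _ _ ((D.tr_inv _ _ _ _ _ h1 h1' (Ne.symm hw) h2'.inc).1 (D.tr_symm _ _ _ _ h4))),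
         ?_⟩
      · rintro u rfl h
        exact h2.ha (by simpa using h.symm)
      · rintro u rfl h
        exact h2'.ha (by simpa using h.symm)
      have hsq := hg.sq w k w' k' e hw h2.inc h2'.inc h2.ha h2'.ha
      exact hsq

/-- Gauge fixing: some gauge makes all labels of the flow trivial simultaneously. -/
theorem fw {V E F : Type*} [Group F] {inc : V → E → Prop} (D : FWData inc)
    {g : V → E → V ⊕ E → V ⊕ E → F} (hg : Flat inc g) :
    ∃ q : Multiset (V ⊕ E) → F, ∀ w k a b, D.Pt w → Valid inc w k a b → D.tr w k a b →
      gaugeBy g q w k a b = 1 := by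
  obtain ⟨q, hq⟩ := newman (FWStep D g) (fun s => (s.map D.ht).sum) (by
    intro s t c h
    cases h with
    | down h1 h2 h3 => have := D.ht_dn _ h1; simp [st]; omega
    | up h1 h2 h3 h4 => have := D.ht_up _ _ h1 h2.inc h3; simp [st]; omega) (by
    intro s t c t' c' h h'
    obtain ⟨x, a, b, y, rfl, rfl, H⟩ := h.iff
    obtain ⟨x', a', b', y', hs, rfl, H'⟩ := h'.iff
    rcases st_eq hs with ⟨rfl, h⟩ | ⟨hx, e, h1, h2⟩
    · left
      rcases h with ⟨rfl, rfl⟩ | ⟨rfl, rfl⟩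
      · obtain ⟨rfl, rfl⟩ := H.same H'; exact ⟨rfl, rfl⟩
      · obtain ⟨rfl, rfl⟩ := (H.symm hg).same H'; exact ⟨st_swap _ _ _, rfl⟩
    · right
      have H1 : FWS D g x e x' y c := by
        rcases h1 with ⟨rfl, rfl⟩ | ⟨rfl, rfl⟩
        · exact H.symm hg
        · exact H
      have H2 : FWS D g x' e x y' c' := by
        rcases h2 with ⟨rfl, rfl⟩ | ⟨rfl, rfl⟩
        · exact H'.symm hg
        · exact H'
      have t1 : st y a b = st y e x' := by
        rcases h1 with ⟨rfl, rfl⟩ | ⟨rfl, rfl⟩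
        · exact st_swap _ _ _
        · rfl
      have t2 : st y' a' b' = st y' e x := by
        rcases h2 with ⟨rfl, rfl⟩ | ⟨rfl, rfl⟩
        · exact st_swap _ _ _
        · rfl
      obtain ⟨d, d', D1, D2, e12⟩ := FWS.diff hg hx H1 H2
      refine ⟨st y' e y, d, d', ?_, ?_, e12⟩
      · rw [t1]; have := D1.step
        rwa [show st x' e y = st y e x' by rw [st_swap, st_rot, st_swap]] at this
      · rw [t2]; have := D2.step
        rwa [show st x e y' = st y' e x by rw [st_swap, st_rot, st_swap], show st y e y' = st y' e y by rw [st_swap, st_rot, st_swap]] at this)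
  refine ⟨q, fun w k a b hw hv htr => ?_⟩
  unfold gaugeBy
  by_cases hk : k = D.dn w
  · subst hk
    have := hq _ _ _ (.down hw hv htr)
    rw [← inv_inv (g w _ a b), this]; simp
  · have := hq _ _ _ (.up hw hv hk htr)
    rw [this]; simp

/-! ### The Heisenberg group modulo 2 -/

/-- The Heisenberg group over `ℤ/2`, a central extension of `(ℤ/2)²` with cocycle `s * c`. -/
@[ext] structure Heis where
  s : ZMod 2
  c : ZMod 2
  z : ZMod 2

namespace Heis
instance : Mul Heis := ⟨fun x y => ⟨x.s + y.s, x.c + y.c, x.z + y.z + x.s * y.c⟩⟩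
instance : One Heis := ⟨⟨0, 0, 0⟩⟩
instance : Inv Heis := ⟨fun x => ⟨-x.s, -x.c, -x.z + x.s * x.c⟩⟩
@[simp] theorem mul_s (x y : Heis) : (x * y).s = x.s + y.s := rfl
@[simp] theorem mul_c (x y : Heis) : (x * y).c = x.c + y.c := rfl
@[simp] theorem mul_z (x y : Heis) : (x * y).z = x.z + y.z + x.s * y.c := rfl
@[simp] theorem one_s : (1 : Heis).s = 0 := rfl
@[simp] theorem one_c : (1 : Heis).c = 0 := rfl
@[simp] theorem one_z : (1 : Heis).z = 0 := rfl
@[simp] theorem inv_s (x : Heis) : (x⁻¹).s = -x.s := rfl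
@[simp] theorem inv_c (x : Heis) : (x⁻¹).c = -x.c := rfl
@[simp] theorem inv_z (x : Heis) : (x⁻¹).z = -x.z + x.s * x.c := rfl
instance : Group Heis := Group.ofLeftAxioms
  (fun x y z => by ext <;> simp <;> ring) (fun x => by ext <;> simp)
  (fun x => by ext <;> simp only [mul_s, mul_c, mul_z, inv_s, inv_c, inv_z, one_s, one_c, one_z] <;> ring)

/-- The projection onto `(ℤ/2)²` with central kernel. -/
def pr : Heis →* Multiplicative (ZMod 2 × ZMod 2) where
  toFun x := Multiplicative.ofAdd (x.s, x.c)
  map_one' := rfl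
  map_mul' _ _ := rfl
end Heis

/-- If the presented group is free, the homomorphism to `(ℤ/2)²` given by two flat labellings `s`,
`χ` lifts to the Heisenberg group. The central coordinate `z` of the lift shows that the product of
`s` and `χ` is a coboundary. -/
theorem nf {V E : Type} {inc : V → E → Prop} {P : Type} [Group P]
    (hP : Presents inc P) (hfree : IsFreeGroupType P)
    (s χ : V → E → V ⊕ E → V ⊕ E → ZMod 2)
    (hs : ∀ v h a b, s v h a b = s v h b a) (hχ : ∀ v h a b, χ v h a b = χ v h b a)
    (hs2 : ∀ v h w k e, v ≠ w → inc v h → inc w k → e ≠ inl v → e ≠ inl w →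
      s v h e (inr k) + s w k e (inl v) = s w k e (inr h) + s v h e (inl w))
    (hχ2 : ∀ v h w k e, v ≠ w → inc v h → inc w k → e ≠ inl v → e ≠ inl w →
      χ v h e (inr k) + χ w k e (inl v) = χ w k e (inr h) + χ v h e (inl w)) :
    ∃ z : V → E → V ⊕ E → V ⊕ E → ZMod 2, (∀ v h a b, z v h a b = z v h b a) ∧
    ∀ v h w k e, v ≠ w → inc v h → inc w k → e ≠ inl v → e ≠ inl w →
      z v h e (inr k) + z w k e (inl v) + s v h e (inr k) * χ w k e (inl v) =
      z w k e (inr h) + z v h e (inl w) + s w k e (inr h) * χ v h e (inl w) := by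
  obtain ⟨S, ⟨e⟩⟩ := hfree
  obtain ⟨g, hg, univ, -⟩ := hP.ex
  let lam : V → E → V ⊕ E → V ⊕ E → Multiplicative (ZMod 2 × ZMod 2) :=
    fun v h a b => Multiplicative.ofAdd (s v h a b, χ v h a b)
  have hl : Flat inc lam := ⟨fun v h a b => by simp only [lam]; rw [hs, hχ],
    fun v h w k e h1 h2 h3 h4 h5 => by
      simp only [lam, ← ofAdd_add, Prod.mk_add_mk]
      rw [hs2 v h w k e h1 h2 h3 h4 h5, hχ2 v h w k e h1 h2 h3 h4 h5]⟩
  obtain ⟨Φ, q, hΦ⟩ := univ _ lam hl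
  let lift : Multiplicative (ZMod 2 × ZMod 2) → Heis := fun m => ⟨m.toAdd.1, m.toAdd.2, 0⟩
  have hlift : ∀ m, Heis.pr (lift m) = m := fun m => rfl
  let Ψ : P →* Heis := (FreeGroup.lift (fun x => lift (Φ (e.symm (.of x))))).comp e.toMonoidHom
  have hΨ : ∀ x, Heis.pr (Ψ x) = Φ x := by
    have : (Heis.pr.comp (FreeGroup.lift (fun x => lift (Φ (e.symm (.of x)))))) = Φ.comp e.symm.toMonoidHom := by
      refine FreeGroup.ext_hom _ _ fun x => ?_
      simp [hlift]
    intro x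
    have := DFunLike.congr_fun this (e x)
    simpa [Ψ] using this
  let H := gaugeBy (fun v h a b => Ψ (g v h a b)) (fun t => lift (q t))
  have hH : Flat inc H := gaugeBy_flat ⟨fun v h a b => by rw [hg.symm],
    fun v h w k e h1 h2 h3 h4 h5 => by
      rw [← map_mul, hg.sq v h w k e h1 h2 h3 h4 h5, map_mul]⟩ _
  have hpr : ∀ v h a b, Valid inc v h a b → Heis.pr (H v h a b) = lam v h a b := by
    intro v h a b hv
    have := hΦ v h a b hv
    simp only at this
    simp only [H, gaugeBy, map_mul, map_inv, hlift, hΨ, this]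
    group
  have hs' : ∀ v h a b, Valid inc v h a b → (H v h a b).s = s v h a b := fun v h a b hv =>
    congrArg Prod.fst (congrArg Multiplicative.toAdd (hpr v h a b hv))
  have hc' : ∀ v h a b, Valid inc v h a b → (H v h a b).c = χ v h a b := fun v h a b hv =>
    congrArg Prod.snd (congrArg Multiplicative.toAdd (hpr v h a b hv))
  refine ⟨fun v h a b => (H v h a b).z, fun v h a b => by simp only [hH.symm v h a b], ?_⟩
  intro v h w k e h1 h2 h3 h4 h5
  have := congrArg Heis.z (hH.sq v h w k e h1 h2 h3 h4 h5)
  simp only [Heis.mul_z] at this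
  rw [hs' v h e (inr k) ⟨h2, h4, by simp, by simp⟩, hs' w k e (inr h) ⟨h3, h5, by simp, by simp⟩,
    hc' w k e (inl v) ⟨h3, h5, by simpa using h1, by rintro u rfl; simpa using fun h => h4 (by rw [h])⟩,
    hc' v h e (inl w) ⟨h2, h4, by simpa using h1.symm, by rintro u rfl; simpa using fun h => h5 (by rw [h])⟩] at this
  exact this

end

/-! ### Sign labels and cycles avoiding an essential vertex -/

section
open Sum

/-- The indicator of a proposition, in `ℤ/2`. -/
def ind (p : Prop) : ZMod 2 := if p then 1 else 0

/-- The contribution of a particle in the cell `x` to the sign of the move from `h` to `v`: whether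
the two particles exchange their order with respect to the numbering `o` of the cells. If `x` is `h`
itself, the order on `h` is decided by the chosen end `lo h`. -/
def sgn1 {V E : Type*} (o : V ⊕ E → ℕ) (lo : E → V) (v : V) (h : E) (x : V ⊕ E) : ZMod 2 :=
  if x = inr h then ind (v = lo h) + ind (o (inl v) < o (inr h))
  else ind (o (inr h) < o x) + ind (o (inl v) < o x)

/-- The sign of a move: the parity of the permutation of particles sorted by the numbering `o`. -/
def sgn {V E : Type*} (o : V ⊕ E → ℕ) (lo : E → V) (v : V) (h : E) (a b : V ⊕ E) : ZMod 2 :=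
  sgn1 o lo v h a + sgn1 o lo v h b

theorem sgn_symm {V E : Type*} (o : V ⊕ E → ℕ) (lo : E → V) (v : V) (h : E) (a b : V ⊕ E) :
    sgn o lo v h a b = sgn o lo v h b a := add_comm _ _

theorem ind_ne {a b : ℕ} (h : a ≠ b) : ind (b < a) = 1 + ind (a < b) := by
  unfold ind
  rcases lt_or_gt_of_ne h with h | h
  · rw [if_neg (by omega), if_pos h]; decide
  · rw [if_pos h, if_neg (by omega)]; decide

theorem two_z (x : ZMod 2) : x + x = 0 := CharTwo.add_self_eq_zero x

theorem sgn_flat {V E : Type*} {inc : V → E → Prop} {o : V ⊕ E → ℕ} (ho : Function.Injective o)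
    {lo : E → V} (hlo : ∀ v w h, inc v h → inc w h → v ≠ w → v = lo h ∨ w = lo h)
    (v h w k e) (hvw : v ≠ w) (hv : inc v h) (hw : inc w k) :
      sgn o lo v h e (inr k) + sgn o lo w k e (inl v) = sgn o lo w k e (inr h) + sgn o lo v h e (inl w) := by
  suffices H : sgn1 o lo v h (inr k) + sgn1 o lo w k (inl v) = sgn1 o lo w k (inr h) + sgn1 o lo v h (inl w) by
    unfold sgn
    linear_combination H
  have n1 : o (inl v) ≠ o (inl w) := fun h => hvw (by simpa using ho h)
  have n2 : ∀ v k, o (inl v) ≠ o (inr k) := fun v k h => by simpa using ho h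
  unfold sgn1
  by_cases hk : h = k
  · subst hk
    simp only [if_true, reduceCtorEq, if_false]
    rw [ind_ne (n2 v h), ind_ne (n2 w h), ind_ne n1]
    rcases hlo v w h hv hw hvw with h1 | h1
    · have h2 : ¬ w = lo h := fun h2 => hvw (h1.trans h2.symm)
      have e1 : ind (v = lo h) = 1 := if_pos h1
      have e2 : ind (w = lo h) = 0 := if_neg h2
      rw [e1, e2]
      linear_combination two_z 1 + two_z (ind (o (inl v) < o (inr h))) - two_z (ind (o (inl w) < o (inr h)))
    · have h2 : ¬ v = lo h := fun h2 => hvw (h2.trans h1.symm)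
      have e1 : ind (w = lo h) = 1 := if_pos h1
      have e2 : ind (v = lo h) = 0 := if_neg h2
      rw [e1, e2]
      linear_combination two_z (ind (o (inl v) < o (inr h))) - two_z (ind (o (inl w) < o (inr h)))
  · have n3 : o (inr h) ≠ o (inr k) := fun h' => hk (by simpa using ho h')
    simp only [inr.injEq, Ne.symm hk, hk, if_false, reduceCtorEq]
    rw [ind_ne (n2 v k), ind_ne (n2 w h), ind_ne n1, ind_ne n3]
    linear_combination two_z (ind (o (inl v) < o (inr k))) - two_z (ind (o (inl w) < o (inr h)))

theorem sum_even_fst {A B : Type*} (s : Finset (A × B)) (hs : ∀ a, Even (s.filter (fun x => x.1 = a)).card)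
    (f : A → ZMod 2) : ∑ x ∈ s, f x.1 = 0 := by
  rw [← Finset.sum_fiberwise_of_maps_to (s := s) (t := s.image Prod.fst) (g := Prod.fst) (fun x hx => Finset.mem_image_of_mem _ hx)]
  refine Finset.sum_eq_zero fun a _ => ?_
  rw [Finset.sum_congr rfl (g := fun _ => f a) (fun x hx => by rw [(Finset.mem_filter.1 hx).2])]
  rw [Finset.sum_const]
  obtain ⟨n, hn⟩ := hs a
  rw [hn, add_smul, two_z]

theorem sum_even_snd {A B : Type*} (s : Finset (A × B)) (hs : ∀ b, Even (s.filter (fun x => x.2 = b)).card)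
    (f : B → ZMod 2) : ∑ x ∈ s, f x.2 = 0 := by
  rw [← Finset.sum_fiberwise_of_maps_to (s := s) (t := s.image Prod.snd) (g := Prod.snd) (fun x hx => Finset.mem_image_of_mem _ hx)]
  refine Finset.sum_eq_zero fun a _ => ?_
  rw [Finset.sum_congr rfl (g := fun _ => f a) (fun x hx => by rw [(Finset.mem_filter.1 hx).2])]
  rw [Finset.sum_const]
  obtain ⟨n, hn⟩ := hs a
  rw [hn, add_smul, two_z]

/-- A cycle (given by its vertex-edge flags `C`) missing a vertex `v` of degree at least three
obstructs freeness: one particle runs around the cycle while the other two exchange at `v`, which is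
a torus on which the product of the sign and the class dual to a flag of the cycle does not vanish.
-/
theorem case1 {V E : Type} [Finite V] [Finite E] {inc : V → E → Prop} {P : Type} [Group P]
    (hP : Presents inc P) (lo : E → V) (hlo : ∀ v w h, inc v h → inc w h → v ≠ w → v = lo h ∨ w = lo h)
    (C : Finset (V × E)) (hC : ∀ x ∈ C, inc x.1 x.2)
    (hC1 : ∀ a, Even (C.filter (fun x => x.1 = a)).card)
    (hC2 : ∀ a, Even (C.filter (fun x => x.2 = a)).card) (hne : C.Nonempty)
    (v : V) (hv : ∀ x ∈ C, x.1 ≠ v) (h : Fin 3 → E) (hinj : Function.Injective h)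
    (hinc : ∀ i, inc v (h i)) : ¬ IsFreeGroupType P := by
  intro hfree
  obtain ⟨x0, hx0⟩ := hne
  obtain ⟨n, ⟨eo⟩⟩ := Finite.exists_equiv_fin (V ⊕ E)
  let o : V ⊕ E → ℕ := fun x => (eo x : ℕ)
  have ho : Function.Injective o := fun x y hxy => eo.injective (Fin.ext hxy)
  let χ : V → E → V ⊕ E → V ⊕ E → ZMod 2 := fun w k _ _ => ind ((w, k) = x0)
  obtain ⟨z, zs, hz⟩ := nf hP hfree (sgn o lo) χ (sgn_symm o lo) (fun _ _ _ _ => rfl)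
    (fun v h w k e h1 h2 h3 _ _ => sgn_flat ho hlo v h w k e h1 h2 h3)
    (fun v h w k e _ _ _ _ _ => add_comm _ _)
  have key : ∀ i j, sgn o lo v (h i) (inr (h j)) (inr x0.2) =
      ∑ x ∈ C, z x.1 x.2 (inr (h j)) (inl v) + ∑ x ∈ C, z x.1 x.2 (inr (h j)) (inr (h i)) := by
    intro i j
    have := Finset.sum_congr rfl (s₁ := C) fun x hx =>
      hz v (h i) x.1 x.2 (inr (h j)) (hv x hx).symm (hinc i) (hC x hx) (by simp) (by simp)
    rw [Finset.sum_add_distrib, Finset.sum_add_distrib, Finset.sum_add_distrib, Finset.sum_add_distrib,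
      sum_even_snd C hC2 (fun k => z v (h i) (inr (h j)) (inr k)),
      sum_even_fst C hC1 (fun w => z v (h i) (inr (h j)) (inl w))] at this
    have e0 : ∑ x ∈ C, sgn o lo x.1 x.2 (inr (h j)) (inr (h i)) * χ v (h i) (inr (h j)) (inl x.1) = 0 := by
      refine Finset.sum_eq_zero fun x _ => ?_
      have : ¬ (v, h i) = x0 := fun h => hv x0 hx0 (by rw [← h])
      simp [χ, ind, this]
    have e1 : ∑ x ∈ C, sgn o lo v (h i) (inr (h j)) (inr x.2) * χ x.1 x.2 (inr (h j)) (inl v) =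
        sgn o lo v (h i) (inr (h j)) (inr x0.2) := by
      rw [Finset.sum_eq_single x0]
      · simp [χ, ind]
      · intro x _ hx; simp [χ, ind, hx]
      · intro h; exact absurd hx0 h
    rw [e0, e1] at this
    linear_combination this - two_z (∑ x ∈ C, z x.1 x.2 (inr (h j)) (inl v))
  have s1 : ∀ i j, i ≠ j → sgn1 o lo v (h i) (inr (h j)) = ind (o (inr (h i)) < o (inr (h j))) + ind (o (inl v) < o (inr (h j))) := by
    intro i j hij
    rw [sgn1, if_neg (by simpa using fun h => hij (hinj h).symm)]
  have ne : ∀ i j, i ≠ j → o (inr (h i)) ≠ o (inr (h j)) := fun i j hij h => hij (hinj (by simpa using ho h))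
  have B : ∀ i j, ∑ x ∈ C, z x.1 x.2 (inr (h j)) (inr (h i)) = ∑ x ∈ C, z x.1 x.2 (inr (h i)) (inr (h j)) :=
    fun i j => Finset.sum_congr rfl fun x _ => zs _ _ _ _
  have k01 := key 0 1
  have k10 := key 1 0
  have k02 := key 0 2
  have k20 := key 2 0
  have k12 := key 1 2
  have k21 := key 2 1
  unfold sgn at k01 k10 k02 k20 k12 k21
  rw [s1 _ _ (by decide)] at k01 k10 k02 k20 k12 k21
  rw [B 1 0, ind_ne (ne 0 1 (by decide))] at k10
  rw [B 2 0, ind_ne (ne 0 2 (by decide))] at k20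
  rw [B 2 1, ind_ne (ne 1 2 (by decide))] at k21
  have : (1 : ZMod 2) = 0 := by
    have k := congrArg₂ (· + ·) k01 (congrArg₂ (· + ·) k10 (congrArg₂ (· + ·) k02 (congrArg₂ (· + ·) k20 (congrArg₂ (· + ·) k12 k21))))
    have t : (2 : ZMod 2) = 0 := by decide
    ring_nf at k
    have f4 : (4 : ZMod 2) = 0 := by decide
    have f3 : (3 : ZMod 2) = 1 := by decide
    simp only [t, f4, f3, mul_zero, add_zero, zero_add] at k
    exact k
  exact absurd this (by decide)

end

/-! ### The two-vertex graph with at least four strands -/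

section
open Sum

/-- The two branch vertices of a generalized theta graph. -/
inductive TV | p | q

/-- The edges of the two-vertex graph: strands `T i` joining `p` and `q`, pendant edges `A i` at `p`
and `B i` at `q` (without end vertices). -/
inductive TE (τ α β : Type) | T (i : τ) | A (i : α) | B (i : β)

/-- Incidence in the two-vertex graph. -/
inductive tinc {τ α β : Type} : TV → TE τ α β → Prop
  | pT (i) : tinc .p (.T i)
  | qT (i) : tinc .q (.T i)
  | pA (i) : tinc .p (.A i)
  | qB (i) : tinc .q (.B i)

theorem TE_T_inj {τ α β : Type} : Function.Injective (TE.T : τ → TE τ α β) := fun _ _ h => by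
  cases h; rfl

/-- The linear contradiction behind `case2`: summing `H` over the ordered pairs in three of the four
indices determines the cyclic sum of `y` on that triple, and adding the four triples cancels all
terms but `c`. -/
theorem case2_aux (y : Fin 4 → Fin 4 → ZMod 2) (x : Fin 4 → Fin 4 → Fin 4 → ZMod 2)
    (f : Fin 4 → Fin 4 → ZMod 2) (zp : Fin 4 → Fin 4 → Fin 4 → ZMod 2)
    (c : Fin 4 → Fin 4 → ZMod 2) (d : Fin 4 → ZMod 2)
    (hx : ∀ k e h, x k e h = x k h e) (hz : ∀ h e k, zp h e k = zp h k e)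
    (hd0 : d 0 = 1) (hd : ∀ i, i ≠ 0 → d i = 0)
    (H : ∀ h k e, h ≠ k → h ≠ e → k ≠ e → zp h e k + y k e = x k e h + f h e + c k e * d h)
    (hc : c 1 2 + c 2 1 + c 1 3 + c 3 1 + c 2 3 + c 3 2 = 1) : False := by
  have fx : ∀ h a b c' : Fin 4, h ≠ a → h ≠ b → h ≠ c' → a ≠ b → a ≠ c' → b ≠ c' →
      y a b + y b a + y a c' + y c' a + y b c' + y c' b =
      x a b h + x b a h + x a c' h + x c' a h + x b c' h + x c' b h +
      (c a b + c b a + c a c' + c c' a + c b c' + c c' b) * d h := by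
    intro h a b e h1 h2 h3 h4 h5 h6
    have H1 := H h a b h1 h2 h4
    have H2 := H h b a h2 h1 h4.symm
    have H3 := H h a e h1 h3 h5
    have H4 := H h e a h3 h1 h5.symm
    have H5 := H h b e h2 h3 h6
    have H6 := H h e b h3 h2 h6.symm
    rw [hz h a b] at H2
    rw [hz h a e] at H4
    rw [hz h b e] at H6
    linear_combination H1 + H2 + H3 + H4 + H5 + H6 - two_z (zp h b a) - two_z (zp h e a) - two_z (zp h e b)
      + two_z (f h a) + two_z (f h b) + two_z (f h e)
  have F0 := fx 0 1 2 3 (by decide) (by decide) (by decide) (by decide) (by decide) (by decide)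
  have F1 := fx 1 0 2 3 (by decide) (by decide) (by decide) (by decide) (by decide) (by decide)
  have F2 := fx 2 0 1 3 (by decide) (by decide) (by decide) (by decide) (by decide) (by decide)
  have F3 := fx 3 0 1 2 (by decide) (by decide) (by decide) (by decide) (by decide) (by decide)
  rw [hd0, hc] at F0
  rw [hd _ (by decide)] at F1 F2 F3
  have K := congrArg₂ (· + ·) F0 (congrArg₂ (· + ·) F1 (congrArg₂ (· + ·) F2 F3))
  rw [hx 0 2 1, hx 0 3 1, hx 0 3 2, hx 1 2 0, hx 1 3 0, hx 1 3 2, hx 2 1 0, hx 2 3 0, hx 2 3 1,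
    hx 3 1 0, hx 3 2 0, hx 3 2 1] at K
  have t : (2 : ZMod 2) = 0 := by decide
  ring_nf at K
  simp [t] at K

/-- With at least four strands the group is not free: the sign times the class dual to one strand is
not a coboundary. -/
theorem case2 {τ α β : Type} [Finite τ] [Finite α] [Finite β] {P : Type} [Group P]
    (hP : Presents (tinc (τ := τ) (α := α) (β := β)) P) (t : Fin 4 → τ)
    (ht : Function.Injective t) : ¬ IsFreeGroupType P := by
  intro hfree
  have : Finite (TE τ α β) := Finite.of_injective (β := τ ⊕ (α ⊕ β))
    (fun x => match x with | .T i => inl i | .A i => inr (inl i) | .B i => inr (inr i)) (by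
      rintro (i|i|i) (j|j|j) h <;> simp_all)
  have : Finite TV := Finite.of_injective (β := Bool)
    (fun x => match x with | .p => true | .q => false) (by
      rintro (i|i) (j|j) h <;> simp_all)
  obtain ⟨n, ⟨eo⟩⟩ := Finite.exists_equiv_fin (TV ⊕ TE τ α β)
  let o : TV ⊕ TE τ α β → ℕ := fun x => (eo x : ℕ)
  have ho : Function.Injective o := fun x y hxy => eo.injective (Fin.ext hxy)
  let lo : TE τ α β → TV := fun _ => .p
  have hlo : ∀ v w (h : TE τ α β), tinc v h → tinc w h → v ≠ w → v = lo h ∨ w = lo h := by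
    rintro (_|_) (_|_) h - - h1 <;> simp_all [lo]
  let χ : TV → TE τ α β → TV ⊕ TE τ α β → TV ⊕ TE τ α β → ZMod 2 :=
    fun w k _ _ => ind (w = .p ∧ k = .T (t 0))
  obtain ⟨z, zs, hz⟩ := nf hP hfree (sgn o lo) χ (sgn_symm o lo) (fun _ _ _ _ => rfl)
    (fun v h w k e h1 h2 h3 _ _ => sgn_flat ho hlo v h w k e h1 h2 h3)
    (fun v h w k e _ _ _ _ _ => add_comm _ _)
  have Hz : ∀ h k e : Fin 4, _ := fun h k e => hz .p (.T (t h)) .q (.T (t k)) (inr (.T (t e)))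
    (by simp) (.pT _) (.qT _) (by simp) (by simp)
  have s1 : ∀ i j, i ≠ j → sgn1 o lo .q (.T (t i)) (inr (.T (t j))) =
      ind (o (inr (.T (t i))) < o (inr (.T (t j)))) + ind (o (inl .q) < o (inr (.T (t j)))) := by
    intro i j hij
    rw [sgn1, if_neg]
    intro h
    apply hij
    have := inr_injective h
    exact (ht (TE_T_inj this)).symm
  have ne : ∀ i j, i ≠ j → o (inr (.T (t i))) ≠ o (inr (.T (t j))) := fun i j hij h => hij (by
    have := inr_injective (ho h)
    exact (ht (TE_T_inj this)))
  refine case2_aux (fun k e => z .q (.T (t k)) (inr (.T (t e))) (inl .p))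
    (fun k e h => z .q (.T (t k)) (inr (.T (t e))) (inr (.T (t h))))
    (fun h e => z .p (.T (t h)) (inr (.T (t e))) (inl .q))
    (fun h e k => z .p (.T (t h)) (inr (.T (t e))) (inr (.T (t k))))
    (fun k e => sgn o lo .q (.T (t k)) (inr (.T (t e))) (inr (.T (t 0))))
    (fun h => ind (h = 0)) (fun _ _ _ => zs _ _ _ _) (fun _ _ _ => zs _ _ _ _)
    (by simp [ind]) (by intro i hi; simp [ind, hi]) ?_ ?_
  · intro h k e h1 h2 h3
    have := Hz h k e
    have e1 : χ .q (.T (t k)) (inr (.T (t e))) (inl .p) = 0 := by simp [χ, ind]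
    have e2 : χ .p (.T (t h)) (inr (.T (t e))) (inl .q) = ind (h = 0) := by
      simp [χ, ind, ht.eq_iff]
    rw [e1, e2] at this
    by_cases h0 : h = 0
    · subst h0; simpa using this
    · simpa [ind, h0] using this
  · unfold sgn
    rw [s1 1 2 (by decide), s1 2 1 (by decide), s1 1 3 (by decide), s1 3 1 (by decide), s1 2 3 (by decide), s1 3 2 (by decide)]
    rw [ind_ne (ne 1 2 (by decide)), ind_ne (ne 1 3 (by decide)), ind_ne (ne 2 3 (by decide))]
    have t : (2 : ZMod 2) = 0 := by decide
    have f3 : (3 : ZMod 2) = 1 := by decide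
    ring_nf
    simp [t, f3]

end

/-! ### Smoothing the middle vertices and leaves -/

section
open Sum

/-- The vertices of the generalized theta graph as a simple graph: branch vertices `p`, `q`, a
middle vertex on each strand, and the leaves of the pendant edges at `p` and at `q`. -/
inductive KV (τ α β : Type) | p | q | mid (i : τ) | la (i : α) | lb (i : β)

/-- The edges of this graph: the halves `pe i`, `qe i` of a strand and the pendant edges `ae i`, `be
i`. -/
inductive KE (τ α β : Type) | pe (i : τ) | qe (i : τ) | ae (i : α) | be (i : β)

/-- Incidence in the generalized theta graph. -/
inductive kinc {τ α β : Type} : KV τ α β → KE τ α β → Prop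
  | pp (i) : kinc .p (.pe i)
  | pm (i) : kinc (.mid i) (.pe i)
  | qq (i) : kinc .q (.qe i)
  | qm (i) : kinc (.mid i) (.qe i)
  | pa (i) : kinc .p (.ae i)
  | la (i) : kinc (.la i) (.ae i)
  | qb (i) : kinc .q (.be i)
  | lb (i) : kinc (.lb i) (.be i)

variable {τ α β : Type}

/-- The edge of the two-vertex graph containing a given edge. -/
def clE : KE τ α β → TE τ α β
  | .pe i => .T i
  | .qe i => .T i
  | .ae i => .A i
  | .be i => .B i

/-- The cell of the two-vertex graph containing a given cell. -/
def clC : KV τ α β ⊕ KE τ α β → TV ⊕ TE τ α β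
  | inl .p => inl .p
  | inl .q => inl .q
  | inl (.mid i) => inr (.T i)
  | inl (.la i) => inr (.A i)
  | inl (.lb i) => inr (.B i)
  | inr k => inr (clE k)

/-- The middle vertices and the leaves, which disappear in the two-vertex graph. -/
def KV.small : KV τ α β → Prop
  | .p => False
  | .q => False
  | _ => True

/-- The branch vertices as vertices of the generalized theta graph. -/
def tV : TV → KV τ α β
  | .p => .p
  | .q => .q

/-- The part of an edge that is adjacent to a given branch vertex (a section of `clE`). -/
def secE : TV → TE τ α β → KE τ α β
  | .p, .T i => .pe i
  | .q, .T i => .qe i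
  | _, .A i => .ae i
  | _, .B i => .be i

/-- A section of `clC`, choosing on each strand the half at `p`. -/
def secC : TV ⊕ TE τ α β → KV τ α β ⊕ KE τ α β
  | inl v => inl (tV v)
  | inr e => inr (secE .p e)

theorem secE_inc {v : TV} {h : TE τ α β} (H : tinc v h) : kinc (tV v) (secE v h) := by
  cases H <;> constructor

theorem clC_sec (x : TV ⊕ TE τ α β) : clC (secC x) = x := by
  rcases x with (_|_)|(_|_|_) <;> rfl
theorem clE_sec (v : TV) (x : TE τ α β) : clE (secE v x) = x := by
  rcases v with _|_ <;> rcases x with _|_|_ <;> rfl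
theorem clC_tV (v : TV) : clC (inl (tV v) : KV τ α β ⊕ KE τ α β) = inl v := by cases v <;> rfl

theorem clC_eq {a : KV τ α β ⊕ KE τ α β} {v : TV} (h : clC a = inl v) : a = inl (tV v) := by
  rcases a with (_|_|_|_|_)|(_|_|_|_) <;> rcases v with _|_ <;> simp_all [clC, tV]

theorem small_or (v : KV τ α β) : v.small ∨ ∃ u, v = tV u := by
  rcases v with _|_|_|_|_
  · exact Or.inr ⟨.p, rfl⟩
  · exact Or.inr ⟨.q, rfl⟩
  all_goals exact Or.inl trivial

theorem kinc_small {v : KV τ α β} {k : KE τ α β} (hv : v.small) (h : kinc v k) : clC (inl v) = inr (clE k) := by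
  cases h <;> first | rfl | exact hv.elim

theorem kinc_big {v : TV} {k : KE τ α β} (h : kinc (tV v) k) : tinc v (clE k) ∧ secE v (clE k) = k := by
  cases v <;> cases h <;> exact ⟨by constructor, rfl⟩

/-- The flow pushing particles off the middle vertices and leaves. -/
def smoothFW (i0 : τ) : FWData (kinc (τ := τ) (α := α) (β := β)) where
  Pt := KV.small
  dn v := match v with
    | .mid i => .pe i
    | .la i => .ae i
    | .lb i => .be i
    | .p => .pe i0
    | .q => .pe i0
  ht x := match x with
    | inl _ => 1
    | inr (.qe _) => 2
    | _ => 0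
  tr _ _ _ _ := True
  dn_inc w hw := by cases w <;> first | exact hw.elim | constructor
  ht_dn w hw := by cases w <;> first | exact hw.elim | simp
  ht_up w k hw h hk := by cases h <;> first | exact hw.elim | simp_all
  uu u w k hu hw huw h1 h2 := by cases h1 <;> cases h2 <;> first | exact hu.elim | exact hw.elim | exact absurd rfl huw
  tr_symm _ _ _ _ _ := trivial
  tr_inv _ _ _ _ _ _ _ _ _ := Iff.rfl
  td w k₁ k₂ e hw h1 h2 h3 h4 h5 _ _ _ := by
    cases h1 <;> cases h2 <;> first | exact hw.elim | exact h5 rfl | exact h3 rfl | exact h4 rfl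

section
variable {P : Type} [Group P] {g : KV τ α β → KE τ α β → KV τ α β ⊕ KE τ α β → KV τ α β ⊕ KE τ α β → P}

/-- All valid moves at middle vertices and leaves have trivial label. -/
def SmallTriv (g : KV τ α β → KE τ α β → KV τ α β ⊕ KE τ α β → KV τ α β ⊕ KE τ α β → P) : Prop :=
  ∀ w k a b, w.small → Valid kinc w k a b → g w k a b = 1

theorem smooth_swap (hg : Flat kinc g) (h1 : SmallTriv g) {v : TV} {h} (hv : kinc (tV v) h)
    {w k} (hw : KV.small w) (hk : kinc w k) {e} (he : e ≠ inl (tV v)) (hew : e ≠ inl w) :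
    g (tV v) h e (inr k) = g (tV v) h e (inl w) := by
  have hvw : tV v ≠ w := by rintro rfl; cases v <;> exact hw.elim
  have := hg.sq (tV v) h w k e hvw hv hk he hew
  rw [h1 w k e (inl (tV v)) hw ⟨hk, hew, by simpa using hvw, by rintro u rfl; simpa using fun h => he (by rw [h])⟩,
    h1 w k e (inr h) hw ⟨hk, hew, by simp, by simp⟩] at this
  simpa using this

/-- The cell is not a middle vertex or a leaf. -/
def notSmall (x : KV τ α β ⊕ KE τ α β) : Prop := ∀ w, x = inl w → ¬ w.small

theorem smooth_one (hg : Flat kinc g) (h1 : SmallTriv g) {v : TV} {h} (hv : kinc (tV v) h)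
    {e} (he : e ≠ inl (tV v)) (hes : notSmall e) (a) :
    g (tV v) h e a = g (tV v) h e (secC (clC a)) := by
  have S : ∀ w k, KV.small w → kinc w k → g (tV v) h e (inr k) = g (tV v) h e (inl w) :=
    fun w k hw hk => smooth_swap hg h1 hv hw hk he (fun h => hes w h hw)
  rcases a with (_|_|i|i|i)|(i|i|i|i)
  · rfl
  · rfl
  · exact (S (.mid i) (.pe i) trivial (.pm i)).symm
  · exact (S (.la i) (.ae i) trivial (.la i)).symm
  · exact (S (.lb i) (.be i) trivial (.lb i)).symm
  · rfl
  · exact (S (.mid i) (.qe i) trivial (.qm i)).trans (S (.mid i) (.pe i) trivial (.pm i)).symm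
  · rfl
  · rfl

theorem secC_notSmall (x : TV ⊕ TE τ α β) : notSmall (secC x) := by
  rintro w h hw
  rcases x with (_|_)|_ <;> simp [secC, tV] at h <;> subst h <;> exact hw

theorem secC_ne {a : KV τ α β ⊕ KE τ α β} {v : TV} (ha : a ≠ inl (tV v)) : secC (clC a) ≠ inl (tV v) := by
  intro h
  have := congrArg clC h
  rw [clC_sec, clC_tV] at this
  exact ha (clC_eq this)

theorem smooth_two (hg : Flat kinc g) (h1 : SmallTriv g) {v : TV} {h} {a b}
    (H : Valid kinc (tV v) h a b) :
    g (tV v) h a b = g (tV v) h (secC (clC a)) (secC (clC b)) := by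
  have A : ∀ {a b}, Valid kinc (tV v) h a b → notSmall b →
      g (tV v) h a b = g (tV v) h (secC (clC a)) (secC (clC b)) := by
    intro a b H hb
    rw [hg.symm, smooth_one hg h1 H.inc H.hb hb, hg.symm, smooth_one hg h1 H.inc (secC_ne H.ha) (secC_notSmall _)]
  by_cases hb : notSmall b
  · exact A H hb
  · simp only [notSmall, not_forall, not_not] at hb
    obtain ⟨w, rfl, hw⟩ := hb
    obtain ⟨k, hk⟩ : ∃ k, kinc w k := by
      cases w with
      | p => exact hw.elim
      | q => exact hw.elim
      | mid i => exact ⟨_, .pm i⟩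
      | la i => exact ⟨_, .la i⟩
      | lb i => exact ⟨_, .lb i⟩
    rw [← smooth_swap hg h1 H.inc hw hk H.ha (fun h => H.hab w h rfl), A ⟨H.inc, H.ha, by simp, by simp⟩ (by simp [notSmall])]
    rw [kinc_small hw hk]; rfl

/-- The labelling of the two-vertex graph induced by a labelling of the generalized theta graph. -/
def smoothed (g : KV τ α β → KE τ α β → KV τ α β ⊕ KE τ α β → KV τ α β ⊕ KE τ α β → P) :
    TV → TE τ α β → TV ⊕ TE τ α β → TV ⊕ TE τ α β → P :=
  fun v h a b => g (tV v) (secE v h) (secC a) (secC b)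

theorem smoothed_eq (hg : Flat kinc g) (h1 : SmallTriv g) {v : TV} {h} {a b}
    (H : Valid kinc (tV v) h a b) :
    g (tV v) h a b = smoothed g v (clE h) (clC a) (clC b) := by
  rw [smooth_two hg h1 H, smoothed, (kinc_big H.inc).2]

theorem secC_ne' {e : TV ⊕ TE τ α β} {v : TV} (ha : e ≠ inl v) : secC e ≠ inl (tV v) := by
  intro h
  have := congrArg clC h
  rw [clC_sec, clC_tV] at this
  exact ha this

theorem tV_inj {v w : TV} (h : (tV v : KV τ α β) = tV w) : v = w := by
  cases v <;> cases w <;> first | rfl | simp [tV] at h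

theorem smoothed_flat (hg : Flat kinc g) (h1 : SmallTriv g) : Flat tinc (smoothed g) := by
  refine ⟨fun v h a b => hg.symm _ _ _ _, fun v h w k e hvw hv hw hev hew => ?_⟩
  have hn : (tV v : KV τ α β) ≠ tV w := fun h => hvw (tV_inj h)
  have := hg.sq (tV v) (secE v h) (tV w) (secE w k) (secC e) hn (secE_inc hv) (secE_inc hw) (secC_ne' hev) (secC_ne' hew)
  rw [smoothed_eq hg h1 (a := secC e) (b := inr (secE w k)) ⟨secE_inc hv, secC_ne' hev, by simp, by simp⟩,
    smoothed_eq hg h1 (a := secC e) (b := inr (secE v h)) ⟨secE_inc hw, secC_ne' hew, by simp, by simp⟩,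
    smoothed_eq hg h1 (a := secC e) (b := inl (tV v)) ⟨secE_inc hw, secC_ne' hew, by simpa using hn, by
      intro u hu h'; rw [← h'] at hu; exact secC_ne' hev hu⟩,
    smoothed_eq hg h1 (a := secC e) (b := inl (tV w)) ⟨secE_inc hv, secC_ne' hev, by simpa using hn.symm, by
      intro u hu h'; rw [← h'] at hu; exact secC_ne' hew hu⟩] at this
  have hr : ∀ k : KE τ α β, clC (inr k) = inr (clE k) := fun k => rfl
  simpa only [clC_sec, clE_sec, clC_tV, hr] using this

/-- The pullback of a labelling of the two-vertex graph, trivial at middle vertices and leaves. -/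
def pulled (lam : TV → TE τ α β → TV ⊕ TE τ α β → TV ⊕ TE τ α β → P) :
    KV τ α β → KE τ α β → KV τ α β ⊕ KE τ α β → KV τ α β ⊕ KE τ α β → P
  | .p, h, a, b => lam .p (clE h) (clC a) (clC b)
  | .q, h, a, b => lam .q (clE h) (clC a) (clC b)
  | _, _, _, _ => 1

theorem pulled_small (lam : TV → TE τ α β → TV ⊕ TE τ α β → TV ⊕ TE τ α β → P)
    {w} (hw : KV.small w) (k a b) : pulled lam w k a b = 1 := by
  cases w <;> first | rfl | exact hw.elim
theorem pulled_big (lam : TV → TE τ α β → TV ⊕ TE τ α β → TV ⊕ TE τ α β → P)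
    (v k a b) : pulled lam (tV v) k a b = lam v (clE k) (clC a) (clC b) := by
  cases v <;> rfl

theorem pulled_flat {lam : TV → TE τ α β → TV ⊕ TE τ α β → TV ⊕ TE τ α β → P}
    (hl : Flat tinc lam) : Flat kinc (pulled lam) := by
  constructor
  · intro v h a b
    rcases small_or v with hv | ⟨v, rfl⟩
    · simp [pulled_small _ hv]
    · simp only [pulled_big]; exact hl.symm _ _ _ _
  · intro v h w k e hvw hv hw hev hew
    rcases small_or v with sv | ⟨v, rfl⟩
    · rcases small_or w with sw | ⟨w, rfl⟩
      · simp [pulled_small _ sv, pulled_small _ sw]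
      · simp only [pulled_small _ sv, pulled_big, one_mul, mul_one, kinc_small sv hv]; rfl
    · rcases small_or w with sw | ⟨w, rfl⟩
      · simp only [pulled_small _ sw, pulled_big, one_mul, mul_one, kinc_small sw hw]; rfl
      · simp only [pulled_big, clC_tV]
        exact hl.sq v _ w _ (clC e) (fun h => hvw (by rw [h])) (kinc_big hv).1 (kinc_big hw).1
          (fun h => hev (clC_eq h)) (fun h => hew (clC_eq h))
end

theorem reach_gauge {V E F : Type*} [Group F] {inc : V → E → Prop}
    {g : V → E → V ⊕ E → V ⊕ E → F} (q : Multiset (V ⊕ E) → F) {s t x}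
    (h : Reach inc g s t x) : Reach inc (gaugeBy g q) s t ((q s)⁻¹ * x * q t) := by
  induction h with
  | refl => simpa using Reach.refl
  | fwd hv _ ih =>
    have := Reach.fwd hv ih
    simp only [gaugeBy] at this
    convert this using 1
    group
  | bwd hv _ ih =>
    have := Reach.bwd hv ih
    simp only [gaugeBy] at this
    convert this using 1
    group

/-- Once the moves at middle vertices and leaves are gauged to be trivial, labels depend only on the
cells of the two-vertex graph, which therefore presents the same group. -/
theorem smooth_presents (i0 : τ) {P : Type} [Group P]
    (hP : Presents (kinc (τ := τ) (α := α) (β := β)) P) :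
    Presents (tinc (τ := τ) (α := α) (β := β)) P := by
  obtain ⟨g0, hg0, univ, s0, gen⟩ := hP.ex
  obtain ⟨q, hq⟩ := fw (smoothFW i0) hg0
  have hg : Flat kinc (gaugeBy g0 q) := gaugeBy_flat hg0 q
  have h1 : SmallTriv (gaugeBy g0 q) := fun w k a b hw hv => hq w k a b hw hv trivial
  refine ⟨smoothed (gaugeBy g0 q), smoothed_flat hg h1, ?_, s0.map clC, ?_⟩
  · intro F _ lam hl
    obtain ⟨Φ, Q, hΦ⟩ := univ F (pulled lam) (pulled_flat hl)
    let R : Multiset (KV τ α β ⊕ KE τ α β) → F := fun s => (Φ (q s))⁻¹ * Q s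
    have hR : Gauge kinc (fun v h a b => Φ (gaugeBy g0 q v h a b)) (pulled lam) R := by
      intro v h a b H
      have := hΦ v h a b H
      simp only at this
      simp only [gaugeBy, map_mul, this, R, map_inv]
      group
    have hR1 : ∀ w k a b, KV.small w → Valid kinc w k a b → R (st (inr k) a b) = R (st (inl w) a b) := by
      intro w k a b hw H
      have := hR w k a b H
      rw [pulled_small _ hw] at this
      simp only [h1 w k a b hw H, map_one, mul_one] at this
      exact mul_inv_eq_one.1 this.symm
    refine ⟨Φ, fun s => R (s.map secC), fun v h a b H => ?_⟩
    have hv : Valid kinc (tV v) (secE v h) (secC a) (secC b) :=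
      ⟨secE_inc H.inc, secC_ne' H.ha, secC_ne' H.hb, by
        intro u hu hb
        rcases small_or u with hs | ⟨u, rfl⟩
        · exact secC_notSmall _ _ hu hs
        · refine H.hab u ?_ ?_
          · rw [← clC_sec a, hu, clC_tV]
          · rw [← clC_sec b, hb, clC_tV]⟩
    have := hR _ _ _ _ hv
    simp only [pulled_big, clC_sec, clE_sec] at this
    simp only [smoothed, this, st, Multiset.insert_eq_cons, Multiset.map_cons, Multiset.map_singleton]
    have e1 : R (st (inr (secE v h)) (secC a) (secC b)) = R (st (secC (inr h)) (secC a) (secC b)) := by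
      cases H.inc with
      | pT i => rfl
      | pA i => rfl
      | qB i => rfl
      | qT i =>
        have V : ∀ k, kinc (.mid i) k → Valid kinc (.mid i) k (secC a) (secC b) := fun k hk => ⟨hk, fun h => secC_notSmall a _ h trivial, fun h => secC_notSmall b _ h trivial, hv.hab⟩
        exact (hR1 (.mid i) (.qe i) _ _ trivial (V _ (.qm i))).trans (hR1 (.mid i) (.pe i) _ _ trivial (V _ (.pm i))).symm
    simp only [st, Multiset.insert_eq_cons] at e1
    rw [e1]; rfl
  · have key : ∀ s t x, Reach kinc (gaugeBy g0 q) s t x →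
        Reach tinc (smoothed (gaugeBy g0 q)) (s.map clC) (t.map clC) x := by
      intro s t x h
      have ms : ∀ x a b : KV τ α β ⊕ KE τ α β, (st x a b).map clC = st (clC x) (clC a) (clC b) := by
        intro x a b; simp [st]
      have VV : ∀ {v : TV} {h a b}, Valid kinc (tV v : KV τ α β) h a b → Valid tinc v (clE h) (clC a) (clC b) := by
        intro v h a b H
        refine ⟨(kinc_big H.inc).1, fun h => H.ha (clC_eq h), fun h => H.hb (clC_eq h), fun u h1 h2 => ?_⟩
        exact H.hab _ (clC_eq h1) (clC_eq h2)
      induction h with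
      | refl => exact .refl
      | @fwd x v h a b hv _ ih =>
        rw [ms] at ih ⊢
        rcases small_or v with hs | ⟨v, rfl⟩
        · rw [h1 _ _ _ _ hs hv, mul_one, kinc_small hs hv.inc]; exact ih
        · rw [smoothed_eq hg h1 hv, clC_tV]
          exact .fwd (VV hv) ih
      | @bwd x v h a b hv _ ih =>
        rw [ms] at ih ⊢
        rcases small_or v with hs | ⟨v, rfl⟩
        · rw [h1 _ _ _ _ hs hv, inv_one, mul_one]; rw [kinc_small hs hv.inc] at ih; exact ih
        · rw [smoothed_eq hg h1 hv]
          rw [clC_tV] at ih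
          exact .bwd (VV hv) ih
    intro x
    have := key _ _ _ (reach_gauge q (gen (q s0 * x * (q s0)⁻¹)))
    convert this using 1
    group

end

/-! ### The theta graph with three strands -/

section
open Sum

/-- The index set of the three strands. -/
inductive Three | x | y | z

namespace Theta
variable {α β : Type} [LinearOrder α] {F : Type} [Group F]

/-- Edges of the two-vertex graph with three strands. -/
abbrev E3 (α β : Type) := TE Three α β

/-- Cells of the two-vertex graph with three strands. -/
abbrev C3 (α β : Type) := TV ⊕ TE Three α β

/-- A family of values, indexed by moves, from which the labelling `lam3` is built; only some of the
values are used as free parameters. -/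
abbrev Lett (α β F : Type) := TV → E3 α β → Sym2 (C3 α β) → F

/-- The branch vertex `p` as a cell. -/
abbrev cp : C3 α β := inl .p

/-- The branch vertex `q` as a cell. -/
abbrev cq : C3 α β := inl .q

/-- The first strand, which is the descending edge at `q`. -/
abbrev t1 : E3 α β := .T .x

/-- The second strand. -/
abbrev t2 : E3 α β := .T .y

/-- The third strand, whose moves at `q` are not trivialized. -/
abbrev t3 : E3 α β := .T .z

variable (l : Lett α β F)

/-- Label of the move `p`, `h` with the others at `t1` (or `t2`) and `q`. -/
def fA (h : E3 α β) : F := l .p h s(inr t1, cq)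

/-- Label of the move `p`, `h` with the others at `t3` and `q`. -/
def fB (h : E3 α β) : F := l .p h s(inr t3, cq)

/-- Label of the move `p`, `h` with the others on a pendant edge at `p` and at `q`. -/
def fZ (h : E3 α β) (a : α) : F := l .p h s(inr (.A a), cq)

/-- Label of the move `q`, `t3` with the others at `t1` and `p`. -/
def y1 : F := l .q t3 s(inr t1, cp)

/-- Label of the move `q`, `t3` with the others at `t2` and `p`, solved from the symmetry of `fM`.
-/
def y2 : F := (fB l t1)⁻¹ * fB l t2 * y1 l * (fA l t2)⁻¹ * fA l t1

/-- Label of the move `q`, `t3` with the others at `t3` and `p`, solved from the symmetry of `fM`.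
-/
def y3 : F := (l .p t1 s(inr t3, inr t3))⁻¹ * fB l t3 * y1 l * (fA l t3)⁻¹ * fB l t1

/-- `fY e` is the label of the move `q`, `t3` with the others at `e` and `p`. -/
def fY : E3 α β → F
  | .T .x => y1 l
  | .T .y => y2 l
  | .T .z => y3 l
  | .A a => l .q t3 s(inr (.A a), cp)
  | .B b => l .q t3 s(inr (.B b), cp)

/-- Label of the move `p`, `h` with both others at `t3`; for `h = t2` it is solved from the symmetry
of `fM`. -/
def fC : E3 α β → F
  | .T .y => fB l t3 * y2 l * (fA l t3)⁻¹ * fB l t2 * (y3 l)⁻¹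
  | h => l .p h s(inr t3, inr t3)
/-- `fG h e` is the label of the move `p`, `h` with the others at `e` and `q`. -/
def fG (h : E3 α β) : E3 α β → F
  | .T .x => fA l h
  | .T .y => fA l h
  | .T .z => fB l h
  | .A a => fZ l h a
  | .B b => l .p h s(inr (.B b), cq)

/-- Label of the move `p`, `h` with the others on the pendant edge `A a` and `t3`, solved from the
symmetry of `fM` unless `h` is a pendant edge at `q`, or a pendant edge `A c` with `a ≤ c`. -/
def fW (h : E3 α β) (a : α) : F :=
  match h with
  | .T .x => fB l (.A a) * y1 l * (fA l (.A a))⁻¹ * fZ l h a * (fY l (.A a))⁻¹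
  | .T .y => fB l (.A a) * y2 l * (fA l (.A a))⁻¹ * fZ l h a * (fY l (.A a))⁻¹
  | .T .z => fC l (.A a) * y3 l * (fB l (.A a))⁻¹ * fZ l h a * (fY l (.A a))⁻¹
  | .A c => if c < a then l .p (.A a) s(inr (.A c), inr t3) * fY l (.A c) * (fZ l (.A a) c)⁻¹ *
      fZ l (.A c) a * (fY l (.A a))⁻¹ else l .p (.A c) s(inr (.A a), inr t3)
  | .B b => l .p (.B b) s(inr (.A a), inr t3)
/-- Label of the move `p`, `h` with the others at `e` and `t3`. -/
def fG' (h : E3 α β) : E3 α β → F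
  | .T .x => fB l h
  | .T .y => fB l h
  | .T .z => fC l h
  | .A a => fW l h a
  | .B _ => fB l h

/-- Label of the move `q`, `t3` with the others at `e` and `h`, solved from the square of the moves
`p`, `h` and `q`, `t3`. It has to be symmetric in `e` and `h`, which is the content of `fM_symm`. -/
def fM (e h : E3 α β) : F := fG' l h e * fY l e * (fG l h e)⁻¹

/-- The edge is not a pendant edge at `q`. -/
def notB : E3 α β → Prop
  | .B _ => False
  | _ => True

theorem fM_symm (e h : E3 α β) (he : notB e) (hh : notB h) : fM l e h = fM l h e := by
  rcases e with (_|_|_)|a|b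
  case B => exact he.elim
  all_goals rcases h with (_|_|_)|c|d
  case A.A =>
    simp only [fM, fG', fG, fW, fY]
    rcases lt_trichotomy a c with hac | rfl | hac
    · rw [if_neg (not_lt.2 hac.le), if_pos hac]; group
    · rfl
    · rw [if_pos hac, if_neg (not_lt.2 hac.le)]; group
  all_goals first | exact hh.elim | rfl | (simp only [fM, fG', fG, fW, fY, fC, y3, y2]; group)

/-- The labels of moves at `p`. -/
def lamP (h : E3 α β) : C3 α β → C3 α β → F
  | inr (.T .z), inr e => fG' l h e
  | inr e, inr (.T .z) => fG' l h e
  | inr (.A a), inr (.A b) => l .p h s(inr (.A a), inr (.A b))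
  | inr (.B a), inr (.B b) => l .p h s(inr (.B a), inr (.B b))
  | inr (.A a), _ => fZ l h a
  | _, inr (.A a) => fZ l h a
  | inr (.T .z), _ => fB l h
  | _, inr (.T .z) => fB l h
  | inr (.T _), _ => fA l h
  | _, inr (.T _) => fA l h
  | x, y => l .p h s(x, y)

/-- The labels of moves at `q`. They are trivial off `t3` when no other particle is on a pendant
edge at `q`; with a particle on such an edge they are solved from the squares. -/
def lamQ (k : E3 α β) : C3 α β → C3 α β → F
  | inr (.B i), inr (.B j) => l .q k s(inr (.B i), inr (.B j))
  | inr (.B i), inr h => lamP l h (inr (.B i)) (inr k) * l .q k s(inr (.B i), cp) * (l .p h s(inr (.B i), cq))⁻¹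
  | inr h, inr (.B i) => lamP l h (inr (.B i)) (inr k) * l .q k s(inr (.B i), cp) * (l .p h s(inr (.B i), cq))⁻¹
  | inr (.B i), inl _ => l .q k s(inr (.B i), cp)
  | inl _, inr (.B i) => l .q k s(inr (.B i), cp)
  | inr e, inr h => match k with
    | .T .z => fM l e h
    | _ => 1
  | inr e, inl _ => match k with
    | .T .z => fY l e
    | _ => 1
  | inl _, inr e => match k with
    | .T .z => fY l e
    | _ => 1
  | inl _, inl _ => 1

/-- The general solution of the flatness equations for three strands after gauge fixing by `d3FW`.
-/
def lam3 : TV → E3 α β → C3 α β → C3 α β → F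
  | .p => lamP l
  | .q => lamQ l

theorem lamP_symm (h : E3 α β) (x y : C3 α β) : lamP l h x y = lamP l h y x := by
  rcases x with (_|_)|((_|_|_)|_|_) <;> rcases y with (_|_)|((_|_|_)|_|_) <;>
    first | rfl | (simp only [lamP]; rw [Sym2.eq_swap])

theorem lamQ_symm (h : E3 α β) (x y : C3 α β) : lamQ l h x y = lamQ l h y x := by
  rcases x with _|(t|_|_) <;> rcases y with _|(t'|_|_) <;>
    first | rfl | (simp only [lamQ]; rw [Sym2.eq_swap]) | (rcases h with (_|_|_)|_|_ <;> first | rfl | exact fM_symm _ _ _ trivial trivial)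

theorem sq1 (h k : E3 α β) (hh : tinc .p h) (hk : tinc .q k) (e : E3 α β) :
    lamP l h (inr e) (inr k) * lamQ l k (inr e) cp = lamQ l k (inr e) (inr h) * lamP l h (inr e) cq := by
  cases hk with
  | qT i =>
    cases hh with
    | pT j => rcases i with _|_|_ <;> rcases e with (_|_|_)|_|_ <;> simp only [lamP, lamQ, fM, fG, fG'] <;> group
    | pA j => rcases i with _|_|_ <;> rcases e with (_|_|_)|_|_ <;> simp only [lamP, lamQ, fM, fG, fG'] <;> group
  | qB i =>
    cases hh with
    | pT j => rcases e with (_|_|_)|_|_ <;> simp only [lamP, lamQ, fM, fG, fG'] <;> group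
    | pA j => rcases e with (_|_|_)|_|_ <;> simp only [lamP, lamQ, fM, fG, fG'] <;> group

theorem lam3_flat : Flat tinc (lam3 l) := by
  constructor
  · rintro (_|_) h a b
    · exact lamP_symm l h a b
    · exact lamQ_symm l h a b
  · rintro (_|_) h (_|_) k ((_|_)|e) hvw hv hw hev hew <;> first | exact absurd rfl hvw | exact absurd rfl hev | exact absurd rfl hew | skip
    · exact sq1 l h k hv hw e
    · exact (sq1 l k h hw hv e).symm

theorem lam3_map {F' : Type} [Group F'] (θ : F →* F') (v h a b) :
    θ (lam3 l v h a b) = lam3 (fun v h s => θ (l v h s)) v h a b := by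
  have hA : ∀ h, θ (fA l h) = fA (fun v h s => θ (l v h s)) h := fun _ => rfl
  have hB : ∀ h, θ (fB l h) = fB (fun v h s => θ (l v h s)) h := fun _ => rfl
  have hZ : ∀ h a, θ (fZ l h a) = fZ (fun v h s => θ (l v h s)) h a := fun _ _ => rfl
  have h1 : θ (y1 l) = y1 (fun v h s => θ (l v h s)) := rfl
  have h2 : θ (y2 l) = y2 (fun v h s => θ (l v h s)) := by simp only [y2, map_mul, map_inv, hA, hB, h1]
  have h3 : θ (y3 l) = y3 (fun v h s => θ (l v h s)) := by simp only [y3, map_mul, map_inv, hA, hB, h1]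
  have hY : ∀ e, θ (fY l e) = fY (fun v h s => θ (l v h s)) e := by
    rintro ((_|_|_)|_|_) <;> simp only [fY, h1, h2, h3]
  have hC : ∀ e, θ (fC l e) = fC (fun v h s => θ (l v h s)) e := by
    rintro ((_|_|_)|_|_) <;> simp only [fC, h1, h2, h3, map_mul, map_inv, hA, hB]
  have hG : ∀ h e, θ (fG l h e) = fG (fun v h s => θ (l v h s)) h e := by
    rintro h ((_|_|_)|_|_) <;> simp only [fG, hA, hB, hZ]
  have hW : ∀ h e, θ (fW l h e) = fW (fun v h s => θ (l v h s)) h e := by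
    rintro ((_|_|_)|_|_) a <;> simp only [fW, hA, hB, hZ, hC, hY, h1, h2, h3, map_mul, map_inv]
    split_ifs <;> simp only [hA, hB, hZ, hC, hY, h1, h2, h3, map_mul, map_inv]
  have hG' : ∀ h e, θ (fG' l h e) = fG' (fun v h s => θ (l v h s)) h e := by
    rintro h ((_|_|_)|_|_) <;> simp only [fG', hB, hC, hW]
  have hP : ∀ h a b, θ (lamP l h a b) = lamP (fun v h s => θ (l v h s)) h a b := by
    rintro h ((_|_)|((_|_|_)|_|_)) ((_|_)|((_|_|_)|_|_)) <;> simp only [lamP, hG', hA, hB, hZ]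
  cases v with
  | p => exact hP h a b
  | q =>
    change θ (lamQ l h a b) = lamQ (fun v h s => θ (l v h s)) h a b
    rcases a with _|((_|_|_)|_|_) <;> rcases b with _|((_|_|_)|_|_) <;> simp only [lamQ, hP, map_mul, map_inv, map_one]
    all_goals rcases h with (_|_|_)|_|_ <;> simp only [hY, fM, hG, hG', map_mul, map_inv, map_one]

/-- The flow at `q` towards `t1`, trivializing the moves at `q` along edges other than `t3` while no
other particle is on a pendant edge at `q`. -/
def d3FW : FWData (tinc (τ := Three) (α := α) (β := β)) where
  Pt v := v = .q
  dn _ := t1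
  ht x := match x with
    | inl _ => 1
    | inr (.T .x) => 0
    | inr _ => 2
  tr _ k a b := k ≠ t3 ∧ (∀ i, a ≠ inr (.B i)) ∧ (∀ i, b ≠ inr (.B i))
  dn_inc w hw := by subst hw; exact .qT _
  ht_dn w hw := by simp
  ht_up w k hw h hk := by rcases k with (_|_|_)|_|_ <;> simp_all
  uu u w k hu hw huw := by subst hu hw; exact absurd rfl huw
  tr_symm _ _ _ _ h := ⟨h.1, h.2.2, h.2.1⟩
  tr_inv _ _ _ _ _ h1 h2 h3 := by subst h1 h2; exact absurd rfl h3
  td w k₁ k₂ e hw h1 h2 h3 h4 h5 h6 h7 _ := by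
    subst hw
    cases h1 with
    | qB i => exact h7.2.1 i rfl
    | qT i =>
      cases h2 with
      | qB j => exact h6.2.1 j rfl
      | qT j => rcases i with _|_|_ <;> rcases j with _|_|_ <;> simp_all

/-- After gauge fixing, every flat labelling has the form `lam3 l`, where `l` is read off from its
own values. -/
theorem lam3_universal : Universal tinc (lam3 (fun v h s => FreeGroup.of (v, h, s)) :
    TV → E3 α β → C3 α β → C3 α β → FreeGroup (TV × E3 α β × Sym2 (C3 α β))) := by
  intro P _ g0 hg0
  obtain ⟨q, hq⟩ := fw d3FW hg0
  have hg := gaugeBy_flat hg0 q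
  set g := gaugeBy g0 q
  let l : Lett α β P := fun v h s => Sym2.lift ⟨fun a b => g v h a b, fun a b => hg.symm _ _ _ _⟩ s
  have hl : ∀ v h a b, l v h s(a, b) = g v h a b := fun _ _ _ _ => rfl
  refine ⟨FreeGroup.lift (fun x => l x.1 x.2.1 x.2.2), q, ?_⟩
  have hG := gaugeBy_gauge tinc g0 q
  intro v h a b H
  rw [hG v h a b H]
  congr 2
  change g v h a b = FreeGroup.lift (fun x => l x.1 x.2.1 x.2.2) (lam3 (fun v h s => FreeGroup.of (v, h, s)) v h a b)
  rw [lam3_map]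
  simp only [FreeGroup.lift_apply_of]
  change g v h a b = lam3 l v h a b
  clear hG
  have sy := hg.symm
  -- the moves at `q` killed by the gauge
  have tq : ∀ k a b, Valid tinc .q k a b → k ≠ t3 → (∀ i, a ≠ inr (.B i)) → (∀ i, b ≠ inr (.B i)) →
      g .q k a b = 1 := fun k a b hv h1 h2 h3 => hq .q k a b rfl hv ⟨h1, h2, h3⟩
  have nB : ∀ e : E3 α β, notB e → ∀ i, (inr e : C3 α β) ≠ inr (.B i) := by
    intro e he i h; cases h; exact he
  have pB : ∀ h : E3 α β, tinc .p h → notB h := by intro h hh; cases hh <;> trivial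
  have sq : ∀ h k e, tinc .p h → tinc .q k → g .p h (inr e) (inr k) * g .q k (inr e) cp =
      g .q k (inr e) (inr h) * g .p h (inr e) cq := fun h k e h1 h2 =>
    hg.sq .p h .q k (inr e) (by simp) h1 h2 (by simp) (by simp)
  have E1 : ∀ h k e, tinc .p h → tinc .q k → k ≠ t3 → notB e →
      g .p h (inr e) (inr k) = g .p h (inr e) cq := by
    intro h k e hh hk h3 he
    have := sq h k e hh hk
    rw [tq k (inr e) cp ⟨hk, by simp, by simp, by simp⟩ h3 (nB e he) (by simp),
      tq k (inr e) (inr h) ⟨hk, by simp, by simp, by simp⟩ h3 (nB e he) (nB h (pB h hh))] at this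
    simpa using this
  have q1 : tinc .q (t1 : E3 α β) := .qT _
  have q2 : tinc .q (t2 : E3 α β) := .qT _
  have q3 : tinc .q (t3 : E3 α β) := .qT _
  have n1 : (t1 : E3 α β) ≠ t3 := by simp
  have n2 : (t2 : E3 α β) ≠ t3 := by simp
  have hG : ∀ h e, tinc .p h → fG l h e = g .p h (inr e) cq := by
    rintro h ((_|_|_)|_|_) hh
    · rfl
    · change g .p h (inr t1) cq = _
      exact ((E1 h t2 t1 hh q2 n2 trivial).symm.trans (sy _ _ _ _)).trans (E1 h t1 t2 hh q1 n1 trivial)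
    · rfl
    · rfl
    · rfl
  have eq3 : ∀ h e, tinc .p h → notB e → g .q t3 (inr e) (inr h) =
      g .p h (inr e) (inr t3) * g .q t3 (inr e) cp * (fG l h e)⁻¹ := by
    intro h e hh he
    rw [hG h e hh, sq h t3 e hh q3]; simp
  have hB1 : ∀ h, tinc .p h → g .p h (inr t1) (inr t3) = fB l h := fun h hh => by
    rw [sy, E1 h t1 t3 hh q1 n1 trivial]; rfl
  have hB2 : ∀ h, tinc .p h → g .p h (inr t2) (inr t3) = fB l h := fun h hh => by
    rw [sy, E1 h t2 t3 hh q2 n2 trivial]; rfl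
  have p1 : tinc .p (t1 : E3 α β) := .pT _
  have p2 : tinc .p (t2 : E3 α β) := .pT _
  have p3 : tinc .p (t3 : E3 α β) := .pT _
  have e12 := eq3 t2 t1 p2 trivial
  have e21 := eq3 t1 t2 p1 trivial
  have e13 := eq3 t3 t1 p3 trivial
  have e31 := eq3 t1 t3 p1 trivial
  have e23 := eq3 t3 t2 p3 trivial
  have e32 := eq3 t2 t3 p2 trivial
  rw [hB1 _ p2] at e12
  rw [hB2 _ p1, sy, e12] at e21
  rw [hB1 _ p3] at e13
  rw [sy, e13] at e31
  have hY2 : g .q t3 (inr t2) cp = y2 l := by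
    simp only [fG] at e21
    unfold y2
    have := congrArg (fun x => (fB l t1)⁻¹ * x * fA l t1) e21
    rw [show y1 l = g .q t3 (inr t1) cp from rfl]
    simpa [mul_assoc] using this.symm
  have hY3 : g .q t3 (inr t3) cp = y3 l := by
    simp only [fG] at e31
    unfold y3
    have := congrArg (fun x => (g .p t1 (inr t3) (inr t3))⁻¹ * x * fB l t1) e31
    rw [show y1 l = g .q t3 (inr t1) cp from rfl, hl]
    simpa [mul_assoc] using this.symm
  have hY : ∀ e, fY l e = g .q t3 (inr e) cp := by
    rintro ((_|_|_)|_|_)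
    · rfl
    · exact hY2.symm
    · exact hY3.symm
    · rfl
    · rfl
  have hC : ∀ h, fC l h = g .p h (inr t3) (inr t3) := by
    rintro ((_|_|_)|_|_)
    · rfl
    · rw [hB2 _ p3] at e23
      rw [sy, e23, hY2, hY3] at e32
      simp only [fG] at e32
      simp only [fC]
      have := congrArg (fun x => x * fB l t2 * (y3 l)⁻¹) e32
      simpa [mul_assoc] using this
    · rfl
    · rfl
    · rfl
  have hG0 : ∀ h i, tinc .p h → g .p h (inr (.T i)) (inr t3) = fG' l h (.T i) := by
    rintro h (_|_|_) hh
    · exact hB1 h hh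
    · exact hB2 h hh
    · exact (hC h).symm
  have hW : ∀ h a, tinc .p h → fW l h a = g .p h (inr (.A a)) (inr t3) := by
    intro h a hh
    have e2 := eq3 h (.A a) hh trivial
    rw [← hY] at e2
    have pa : tinc .p (.A a : E3 α β) := .pA a
    have e1 := eq3 (.A a) h pa (pB h hh)
    rw [sy, e2, ← hY] at e1
    have e3 := congrArg (fun x => x * fG l h (.A a) * (fY l (.A a))⁻¹) e1
    simp only [inv_mul_cancel_right, mul_inv_cancel_right] at e3
    rw [e3]
    rcases hh with i|_|i|_
    · rw [hG0 _ _ pa]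
      rcases i with _|_|_ <;> rfl
    · simp only [fW]
      split_ifs with hc
      · rfl
      · rw [← e3]; rfl
  have hG' : ∀ h e, tinc .p h → fG' l h e = g .p h (inr e) (inr t3) := by
    rintro h (i|a|b) hh
    · exact (hG0 h i hh).symm
    · exact hW h a hh
    · rw [sy, E1 h (.B b) t3 hh (.qB b) (by simp) trivial]; rfl
  have hM : ∀ e h, tinc .p h → notB e → fM l e h = g .q t3 (inr e) (inr h) := by
    intro e h hh he
    rw [eq3 h e hh he, fM, hG' h e hh, hY]
  have hAx : ∀ h (k : E3 α β), tinc .p h → tinc .q k → k ≠ t3 → g .p h (inr t1) (inr k) = fA l h :=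
    fun h k hh hk h3 => E1 h k t1 hh hk h3 trivial
  have hAy : ∀ h (k : E3 α β), tinc .p h → tinc .q k → k ≠ t3 → g .p h (inr t2) (inr k) = fA l h :=
    fun h k hh hk h3 => (E1 h k t2 hh hk h3 trivial).trans (hG h t2 hh).symm
  have hP : ∀ h a b, Valid tinc .p h a b → g .p h a b = lamP l h a b := by
    intro h a b H
    have hh := H.inc
    have W : ∀ a b, g .p h a b = lamP l h a b → g .p h b a = lamP l h b a := by
      intro a b h; rw [sy, h, lamP_symm]
    have T3 : ∀ e, g .p h (inr t3) (inr e) = lamP l h (inr t3) (inr e) := by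
      intro e; rw [sy, ← hG' h e hh]; rcases e with (_|_|_)|_|_ <;> rfl
    have Q : ∀ e, g .p h (inr e) cq = lamP l h (inr e) cq := by
      intro e; rw [← hG h e hh]; rcases e with (_|_|_)|_|_ <;> rfl
    have AA : ∀ (a : α) k, tinc .q k → k ≠ t3 → g .p h (inr (.A a)) (inr k) = fZ l h a := fun a k hk h3 =>
      E1 h k (.A a) hh hk h3 trivial
    rcases a with (_|_)|((_|_|_)|a|a)
    · exact absurd rfl H.ha
    · rcases b with (_|_)|b
      · exact absurd rfl H.hb
      · exact absurd rfl (H.hab .q rfl)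
      · exact W _ _ (Q b)
    · rcases b with (_|_)|((_|_|_)|b|b)
      · exact absurd rfl H.hb
      · exact Q _
      · exact hAx h t1 hh q1 n1
      · exact hAx h t2 hh q2 n2
      · exact W _ _ (T3 _)
      · exact (sy _ _ _ _).trans (AA b t1 q1 n1)
      · exact hAx h (.B b) hh (.qB b) (by simp)
    · rcases b with (_|_)|((_|_|_)|b|b)
      · exact absurd rfl H.hb
      · exact Q _
      · exact hAy h t1 hh q1 n1
      · exact hAy h t2 hh q2 n2
      · exact W _ _ (T3 _)
      · exact (sy _ _ _ _).trans (AA b t2 q2 n2)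
      · exact hAy h (.B b) hh (.qB b) (by simp)
    · rcases b with (_|_)|b
      · exact absurd rfl H.hb
      · exact Q _
      · exact T3 _
    · rcases b with (_|_)|((_|_|_)|b|b)
      · exact absurd rfl H.hb
      · exact Q _
      · exact AA a t1 q1 n1
      · exact AA a t2 q2 n2
      · exact W _ _ (T3 _)
      · rfl
      · exact AA a (.B b) (.qB b) (by simp)
    · rcases b with (_|_)|((_|_|_)|b|b)
      · exact absurd rfl H.hb
      · exact Q _
      · exact (sy _ _ _ _).trans (hAx h (.B a) hh (.qB a) (by simp))
      · exact (sy _ _ _ _).trans (hAy h (.B a) hh (.qB a) (by simp))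
      · exact W _ _ (T3 _)
      · exact (sy _ _ _ _).trans (AA b (.B a) (.qB a) (by simp))
      · rfl
  cases v with
  | p => exact hP h a b H
  | q =>
    change g .q h a b = lamQ l h a b
    have hh := H.inc
    have BB : ∀ i k, notB k → g .q h (inr (.B i)) (inr k) = lamQ l h (inr (.B i)) (inr k) := by
      intro i k hk
      have pk : tinc .p k := by rcases k with _|_|_ <;> first | constructor | exact hk.elim
      have := sq k h (.B i) pk hh
      rw [hP k (inr (.B i)) (inr h) ⟨pk, by simp, by simp, by simp⟩] at this
      have : g .q h (inr (.B i)) (inr k) = lamP l k (inr (.B i)) (inr h) * l .q h s(inr (.B i), cp) * (l .p k s(inr (.B i), cq))⁻¹ := by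
        rw [hl, hl, this]; simp
      rw [this]
      rcases k with _|_|_ <;> first | rfl | exact hk.elim
    have EE : ∀ e k, notB e → notB k → g .q h (inr e) (inr k) = lamQ l h (inr e) (inr k) := by
      intro e k he hk
      have pk : tinc .p k := by rcases k with _|_|_ <;> first | constructor | exact hk.elim
      by_cases h3 : h = t3
      · subst h3
        rw [← hM e k pk he]
        rcases k with _|_|_ <;> rcases e with _|_|_ <;> first | rfl | exact hk.elim | exact he.elim
      · rw [tq h _ _ ⟨hh, by simp, by simp, by simp⟩ h3 (nB e he) (nB k hk)]
        rcases k with _|_|_ <;> rcases e with _|_|_ <;> first | exact hk.elim | exact he.elim | (rcases h with (_|_|_)|_|_ <;> first | rfl | exact absurd rfl h3)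
    have EP : ∀ e, g .q h (inr e) cp = lamQ l h (inr e) cp := by
      intro e
      by_cases he : notB e
      · by_cases h3 : h = t3
        · subst h3
          rw [← hY e]
          rcases e with _|_|_ <;> first | rfl | exact he.elim
        · rw [tq h _ _ ⟨hh, by simp, by simp, by simp⟩ h3 (nB e he) (by simp)]
          rcases e with _|_|_ <;> first | exact he.elim | (rcases h with (_|_|_)|_|_ <;> first | rfl | exact absurd rfl h3)
      · rcases e with _|_|_ <;> first | rfl | exact absurd trivial he
    rcases a with (_|_)|a
    · rcases b with (_|_)|b
      · exact absurd rfl (H.hab .p rfl)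
      · exact absurd rfl H.hb
      · rw [sy, lamQ_symm]; exact EP b
    · exact absurd rfl H.ha
    · rcases b with (_|_)|b
      · exact EP a
      · exact absurd rfl H.hb
      · rcases a with a|a|a <;> rcases b with b|b|b
        · exact EE _ _ trivial trivial
        · exact EE _ _ trivial trivial
        · rw [sy, lamQ_symm]; exact BB _ _ trivial
        · exact EE _ _ trivial trivial
        · exact EE _ _ trivial trivial
        · rw [sy, lamQ_symm]; exact BB _ _ trivial
        · exact BB _ _ trivial
        · exact BB _ _ trivial
        · rfl
end Theta

/-- With three strands the presented group is free; the order on `α` only serves to choose one of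
the two labels related by each symmetry condition on pendant edges at `p`. -/
theorem theta3_free {α β : Type} [LinearOrder α] {P : Type} [Group P]
    (hP : Presents (tinc (τ := Three) (α := α) (β := β)) P) : IsFreeGroupType P :=
  free_of_universal hP _ (Theta.lam3_flat _) Theta.lam3_universal

end

/-! ### Freeness from a star structure -/

section
open Sum

/-- Adjacency of cells away from the vertex `w`. -/
inductive CRel {V E : Type} (inc : V → E → Prop) (w : V) : V ⊕ E → V ⊕ E → Prop
  | mk {u j} : inc u j → u ≠ w → CRel inc w (inr j) (inl u)

/-- The directions at `w`: the components of the graph cut at `w` (the cell `w` itself being a class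
of its own). -/
abbrev Dir {V E : Type} (inc : V → E → Prop) (w : V) : Type := Quot (CRel inc w)

/-- The direction at `w` in which the cell `a` lies. -/
def dir {V E : Type} (inc : V → E → Prop) (w : V) (a : V ⊕ E) : Dir inc w := Quot.mk _ a

theorem dir_eq {V E : Type} {inc : V → E → Prop} {w u : V} {j : E} (h : inc u j) (hu : u ≠ w) :
    dir inc w (inr j) = dir inc w (inl u) := Quot.sound ⟨h, hu⟩

/-- A connected graph that is a tree away from the root `vs`. Each vertex `w ≠ vs` has one edge `dn
w` below it with respect to the height `ht`. Vertices satisfying `B` are the branching ones: their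
edges other than `dn w` lie in distinct directions, while the others have at most one such edge. For
a branching `w`, the edge `hh w a` at `vs` depends only on the component of `a` in the complement of
`w` and `vs`, and is `h` on each edge `h` at `vs`. -/
structure StarData {V E : Type} (inc : V → E → Prop) where
  vs : V
  B : V → Prop
  dn : V → E
  ht : V ⊕ E → ℕ
  hh : V → V ⊕ E → E
  dn_inc : ∀ w, w ≠ vs → inc w (dn w)
  ht_dn : ∀ w, w ≠ vs → ht (inr (dn w)) < ht (inl w)
  ht_up : ∀ w k, w ≠ vs → inc w k → k ≠ dn w → ht (inl w) < ht (inr k)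
  uu : ∀ u w k, u ≠ vs → w ≠ vs → u ≠ w → inc u k → inc w k → k = dn u ∨ k = dn w
  conn : ∀ a b : V ⊕ E, Relation.EqvGen (fun a b => ∃ u j, inc u j ∧ a = inr j ∧ b = inl u) a b
  notB : ∀ w k₁ k₂, w ≠ vs → ¬ B w → inc w k₁ → inc w k₂ → k₁ ≠ dn w → k₂ ≠ dn w → k₁ = k₂
  isB : ∀ w k₁ k₂, w ≠ vs → B w → inc w k₁ → inc w k₂ → k₁ ≠ dn w → k₂ ≠ dn w →
    dir inc w (inr k₁) = dir inc w (inr k₂) → k₁ = k₂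
  hh_vs : ∀ w h, w ≠ vs → B w → inc vs h → hh w (inr h) = h
  hh_inv : ∀ w u k, w ≠ vs → B w → u ≠ vs → u ≠ w → inc u k → hh w (inr k) = hh w (inl u)

namespace StarData
variable {V E : Type} {inc : V → E → Prop} (D : StarData inc)

/-- Moves at `w` with the others in `a`, `b` are trivialized if `w` is not branching or `a`, `b` lie
in the same direction at `w`. -/
def tr (w : V) (a b : V ⊕ E) : Prop := ¬ D.B w ∨ dir inc w a = dir inc w b

theorem tr_symm {w a b} (h : D.tr w a b) : D.tr w b a := h.imp id Eq.symm

theorem tr_inv {w u : V} {j : E} (h : inc u j) (hu : u ≠ w) (e) :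
    D.tr w (inr j) e ↔ D.tr w (inl u) e := by
  simp [tr, dir_eq h hu]

/-- A cell `e` lies in the direction of `w` seen from `v`, or in the direction of `v` seen from `w`.
-/
theorem three (D : StarData inc) {v w : V} (hvw : v ≠ w) (e : V ⊕ E) :
    (e ≠ inl v ∧ dir inc v e = dir inc v (inl w)) ∨ (e ≠ inl w ∧ dir inc w e = dir inc w (inl v)) := by
  let Q : V ⊕ E → Prop := fun e =>
    (e ≠ inl v ∧ dir inc v e = dir inc v (inl w)) ∨ (e ≠ inl w ∧ dir inc w e = dir inc w (inl v))
  have Qw : Q (inl w) := Or.inl ⟨by simpa using hvw.symm, rfl⟩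
  have Qv : Q (inl v) := Or.inr ⟨by simpa using hvw, rfl⟩
  have step : ∀ u j, inc u j → (Q (inr j) ↔ Q (inl u)) := by
    intro u j h
    constructor
    · rintro (⟨_, h2⟩ | ⟨_, h2⟩)
      · by_cases hu : u = v
        · rw [hu]; exact Qv
        · left; exact ⟨by simpa using hu, by rw [← dir_eq h hu, h2]⟩
      · by_cases hu : u = w
        · rw [hu]; exact Qw
        · right; exact ⟨by simpa using hu, by rw [← dir_eq h hu, h2]⟩
    · rintro (⟨h1, h2⟩ | ⟨h1, h2⟩)
      · left; exact ⟨by simp, by rw [dir_eq h (by simpa using h1), h2]⟩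
      · right; exact ⟨by simp, by rw [dir_eq h (by simpa using h1), h2]⟩
  have : ∀ a b, Relation.EqvGen (fun a b => ∃ u j, inc u j ∧ a = inr j ∧ b = inl u) a b →
      (Q a ↔ Q b) := by
    intro a b h
    induction h with
    | rel _ _ h => obtain ⟨u, j, h, rfl, rfl⟩ := h; exact step u j h
    | refl => rfl
    | symm _ _ _ ih => exact ih.symm
    | trans _ _ _ _ _ ih ih' => exact ih.trans ih'
  exact (this _ _ (D.conn e (inl w))).2 Qw

/-- Pairs of cells related by swapping or by a trivialized move at a vertex other than `vs`; the
labels at `vs` of a gauge-fixed labelling cannot distinguish them. -/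
inductive QRel : (V ⊕ E) × (V ⊕ E) → (V ⊕ E) × (V ⊕ E) → Prop
  | swap (a b) : QRel (a, b) (b, a)
  | move {w k b} : w ≠ D.vs → inc w k → b ≠ inl w → b ≠ inl D.vs → D.tr w b (inl D.vs) →
      QRel (inr k, b) (inl w, b)

/-- Classes of pairs of cells under `QRel`. -/
abbrev Q2 : Type := Quot D.QRel

/-- The class of a pair of cells. -/
def pr2 (a b : V ⊕ E) : D.Q2 := Quot.mk _ (a, b)
theorem pr2_symm (a b) : D.pr2 a b = D.pr2 b a := Quot.sound (.swap a b)
theorem pr2_move {w k b} (h1 : w ≠ D.vs) (h2 : inc w k) (h3 : b ≠ inl w) (h4 : b ≠ inl D.vs)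
    (h5 : D.tr w b (inl D.vs)) : D.pr2 (inr k) b = D.pr2 (inl w) b :=
  Quot.sound (.move h1 h2 h3 h4 h5)

variable {F F' : Type} [Group F] [Group F'] (z : E → D.Q2 → F)
  (Y : ∀ w : V, E → Sym2 (Dir inc w) → F)

/-- The correction of a label at `w` for a particle at `b` in the direction of `vs`: the label of
moving it to `vs`, the other two particles forming the class `κ`. -/
def tw (w : V) (b : V ⊕ E) (κ : D.Q2) : F :=
  if b = inl D.vs ∨ dir inc w b ≠ dir inc w (inl D.vs) then 1 else z (D.hh w b) κ

/-- The correction of a label at `w` for both `a` and `b`, the moving particle being at `x`. -/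
def T (w : V) (a b x : V ⊕ E) : F := D.tw z w b (D.pr2 a x) * D.tw z w a (D.pr2 b x)

/-- The general solution of the flatness equations after gauge fixing: labels `z` at `vs`, and at a
branching vertex a label `Y` depending only on the directions of the other particles, conjugated by
the corrections `T`. -/
def lam (v : V) (h : E) (a b : V ⊕ E) : F :=
  if v = D.vs then z h (D.pr2 a b) else if D.tr v a b then 1 else
    D.T z v a b (inr h) * Y v h s(dir inc v a, dir inc v b) * (D.T z v a b (inl v))⁻¹

theorem T_symm {w a b} (h : ¬ D.tr w a b) (x) : D.T z w a b x = D.T z w b a x := by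
  have h' : dir inc w a ≠ dir inc w b := fun h' => h (Or.inr h')
  unfold T
  by_cases hb : dir inc w b = dir inc w (inl D.vs)
  · have : D.tw z w a (D.pr2 b x) = 1 := by
      rw [tw, if_pos (Or.inr (by rw [← hb]; exact h'))]
    rw [this]; simp
  · have : D.tw z w b (D.pr2 a x) = 1 := by
      rw [tw, if_pos (Or.inr hb)]
    rw [this]; simp

theorem T_vs {w e} (h : ¬ D.tr w e (inl D.vs)) (x) : D.T z w e (inl D.vs) x = 1 := by
  have h' : dir inc w e ≠ dir inc w (inl D.vs) := fun h' => h (Or.inr h')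
  simp [T, tw, h']

theorem T_h {w e h} (hw : w ≠ D.vs) (hh : inc D.vs h) (H : ¬ D.tr w e (inl D.vs)) (x) :
    D.T z w e (inr h) x = z h (D.pr2 e x) := by
  have h' : dir inc w e ≠ dir inc w (inl D.vs) := fun h' => H (Or.inr h')
  have hB : D.B w := by by_contra hB; exact H (Or.inl hB)
  simp [T, tw, h', dir_eq hh (Ne.symm hw), D.hh_vs w h hw hB hh]

theorem T_move {v w : V} {h : E} {e : V ⊕ E} (hv : v ≠ D.vs) (hw : w ≠ D.vs) (hvw : v ≠ w)
    (hh : inc v h) (H : ¬ D.tr w e (inl v))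
    (x) (hx : x ≠ inl v) (hxv : x ≠ inl D.vs) (hx' : dir inc v x = dir inc v (inl w)) :
    D.T z w e (inl v) x = D.T z w e (inr h) x := by
  have h' : dir inc w e ≠ dir inc w (inl v) := fun h' => H (Or.inr h')
  have hB : D.B w := by by_contra hB; exact H (Or.inl hB)
  unfold T
  congr 1
  · simp [tw, dir_eq hh hvw, D.hh_inv w v h hw hB hv hvw hh, hv]
  · unfold tw
    split_ifs with hc
    · rfl
    · push Not at hc
      rw [D.pr2_move hv hh hx hxv]
      right
      rw [hx']
      rcases D.three hvw (inl D.vs) with ⟨_, h2⟩ | ⟨_, h2⟩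
      · rw [h2]
      · exact absurd (hc.2.trans h2) h'

theorem lam_symm (v h a b) : D.lam z Y v h a b = D.lam z Y v h b a := by
  unfold lam
  rw [D.pr2_symm]
  by_cases h1 : D.tr v a b
  · rw [if_pos h1, if_pos (D.tr_symm h1)]
  · rw [if_neg h1, if_neg (fun h => h1 (D.tr_symm h)), D.T_symm z h1, D.T_symm z h1, Sym2.eq_swap]

theorem lam_sq_vs (h w k e) (hw : w ≠ D.vs) (hh : inc D.vs h) (hk : inc w k)
    (he : e ≠ inl D.vs) (hew : e ≠ inl w) :
    D.lam z Y D.vs h e (inr k) * D.lam z Y w k e (inl D.vs) =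
      D.lam z Y w k e (inr h) * D.lam z Y D.vs h e (inl w) := by
  have i1 : D.tr w e (inr h) ↔ D.tr w e (inl D.vs) := by
    simp [tr, dir_eq hh (Ne.symm hw)]
  unfold lam
  simp only [if_true, if_neg hw, i1]
  by_cases H : D.tr w e (inl D.vs)
  · simp only [if_pos H, mul_one, one_mul]
    rw [D.pr2_symm e, D.pr2_symm e, D.pr2_move hw hk hew he H]
  · simp only [if_neg H, D.T_vs z H, D.T_h z hw hh H, dir_eq hh (Ne.symm hw)]
    group

theorem lam_sq_half (v h w k e) (hvw : v ≠ w) (hv : v ≠ D.vs) (hw : w ≠ D.vs) (hh : inc v h)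
    (hk : inc w k) (H : dir inc v e = dir inc v (inl w)) :
    D.lam z Y v h e (inr k) = 1 ∧ D.lam z Y v h e (inl w) = 1 ∧
    D.lam z Y w k e (inl v) = D.lam z Y w k e (inr h) := by
  refine ⟨?_, ?_, ?_⟩
  · rw [lam, if_neg hv, if_pos]; right; rw [H, dir_eq hk (Ne.symm hvw)]
  · rw [lam, if_neg hv, if_pos]; right; rw [H]
  · have i1 : D.tr w e (inr h) ↔ D.tr w e (inl v) := by
      simp [tr, dir_eq hh hvw]
    unfold lam
    simp only [if_neg hw, i1]
    by_cases H' : D.tr w e (inl v)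
    · simp [H']
    · rw [if_neg H', if_neg H', D.T_move z hv hw hvw hh H' _ (by simp) (by simp)
        (dir_eq hk (Ne.symm hvw)), D.T_move z hv hw hvw hh H' (inl w) (by simpa using hvw.symm)
        (by simpa using hw) rfl, dir_eq hh hvw]

theorem lam_flat : Flat inc (D.lam z Y) := by
  refine ⟨D.lam_symm z Y, fun v h w k e hvw hv hw hev hew => ?_⟩
  by_cases h1 : v = D.vs
  · subst h1
    exact D.lam_sq_vs z Y h w k e (Ne.symm hvw) hv hw hev hew
  by_cases h2 : w = D.vs
  · subst h2
    exact (D.lam_sq_vs z Y k v h e hvw hw hv hew hev).symm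
  rcases D.three hvw e with ⟨_, h3⟩ | ⟨_, h3⟩
  · obtain ⟨e1, e2, e3⟩ := D.lam_sq_half z Y v h w k e hvw h1 h2 hv hw h3
    rw [e1, e2, e3]; simp
  · obtain ⟨e1, e2, e3⟩ := D.lam_sq_half z Y w k v h e (Ne.symm hvw) h2 h1 hw hv h3
    rw [e1, e2, e3]; simp

theorem lam_map (θ : F →* F') (v h a b) : θ (D.lam z Y v h a b) =
    D.lam (fun h κ => θ (z h κ)) (fun w k s => θ (Y w k s)) v h a b := by
  unfold lam T tw
  split_ifs <;> simp

/-- The flow towards `vs` on a star structure. -/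
def fwd : FWData inc where
  Pt w := w ≠ D.vs
  dn := D.dn
  ht := D.ht
  tr w _ a b := D.tr w a b
  dn_inc := D.dn_inc
  ht_dn := D.ht_dn
  ht_up := D.ht_up
  uu := D.uu
  tr_symm _ _ _ _ := D.tr_symm
  tr_inv w _ u j e _ _ hu hj := D.tr_inv hj hu e
  td w k₁ k₂ e hw h1 h2 n1 n2 hn t1 t2 _ := by
    rcases t1 with t1 | t1
    · exact hn (D.notB w k₁ k₂ hw t1 h1 h2 n1 n2)
    · rcases t2 with t2 | t2
      · exact hn (D.notB w k₁ k₂ hw t2 h1 h2 n1 n2)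
      · by_cases hB : D.B w
        · exact hn (D.isB w k₁ k₂ hw hB h1 h2 n1 n2 (t2.trans t1.symm))
        · exact hn (D.notB w k₁ k₂ hw hB h1 h2 n1 n2)

/-- Free generators for the parameters `z` and `Y` of `lam`. -/
abbrev Let : Type := (E × D.Q2) ⊕ (Σ w : V, E × Sym2 (Dir inc w))

/-- The solution `lam` with free parameters. -/
def flam : V → E → V ⊕ E → V ⊕ E → FreeGroup D.Let :=
  D.lam (fun h κ => FreeGroup.of (inl (h, κ))) (fun w k s => FreeGroup.of (inr ⟨w, k, s⟩))

/-- A gauge-fixed flat labelling has the form `lam z Y`. -/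
theorem normal {P : Type} [Group P] (g : V → E → V ⊕ E → V ⊕ E → P) (hg : Flat inc g)
    (hone : ∀ w k a b, w ≠ D.vs → Valid inc w k a b → D.tr w a b → g w k a b = 1) :
    ∃ (z : E → D.Q2 → P) (Y : ∀ w : V, E → Sym2 (Dir inc w) → P),
      ∀ v h a b, Valid inc v h a b → g v h a b = D.lam z Y v h a b := by
  let z : E → D.Q2 → P := fun h => Quot.lift (fun p => if inc D.vs h then g D.vs h p.1 p.2 else 1) (by
    intro p p' hp
    by_cases hh : inc D.vs h
    · simp only [if_pos hh]
      cases hp with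
      | swap a b => exact hg.symm _ _ _ _
      | @move w k b h1 h2 h3 h4 h5 =>
        have := hg.sq D.vs h w k b (Ne.symm h1) hh h2 h4 h3
        have i : D.tr w b (inr h) := D.tr_symm ((D.tr_inv hh (Ne.symm h1) b).2 (D.tr_symm h5))
        rw [hone w k b (inl D.vs) h1 ⟨h2, h3, by simpa using h1.symm, by rintro u rfl; rintro ⟨⟩; exact h4 rfl⟩ h5,
          hone w k b (inr h) h1 ⟨h2, h3, by simp, by simp⟩ i, mul_one, one_mul] at this
        change g D.vs h (inr k) b = g D.vs h (inl w) b
        rw [hg.symm, this, hg.symm]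
    · simp only [if_neg hh])
  have hz : ∀ h a b, inc D.vs h → z h (D.pr2 a b) = g D.vs h a b := by
    intro h a b hh
    change (if inc D.vs h then g D.vs h a b else 1) = _
    rw [if_pos hh]
  let f : V → E → V ⊕ E → V ⊕ E → P := fun w k a b =>
    (D.T z w a b (inr k))⁻¹ * g w k a b * D.T z w a b (inl w)
  have fsymm : ∀ w k a b, ¬ D.tr w a b → f w k a b = f w k b a := by
    intro w k a b h
    simp only [f]
    rw [D.T_symm z h, D.T_symm z h, hg.symm]
  have step : ∀ w k b u j, w ≠ D.vs → inc w k → b ≠ inl w → inc u j → u ≠ w →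
      ¬ D.tr w b (inl u) → f w k b (inr j) = f w k b (inl u) := by
    intro w k b u j hw hk hb hj hu H
    have hB : D.B w := by by_contra hB; exact H (Or.inl hB)
    have hbu : b ≠ inl u := by rintro rfl; exact H (Or.inr rfl)
    have sq := hg.sq u j w k b hu hj hk hbu hb
    by_cases hus : u = D.vs
    · subst hus
      simp only [f]
      rw [D.T_vs z H, D.T_vs z H, D.T_h z hw hj H, D.T_h z hw hj H, hz _ _ _ hj, hz _ _ _ hj]
      have := congrArg (fun x => (g D.vs j b (inr k))⁻¹ * x) sq
      simpa [mul_assoc] using this.symm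
    · have h3 : dir inc u b = dir inc u (inl w) := by
        rcases D.three hu b with ⟨_, h⟩ | ⟨_, h⟩
        · exact h
        · exact absurd (Or.inr h) H
      rw [hone u j b (inr k) hus ⟨hj, hbu, by simp, by simp⟩ (Or.inr (by rw [h3, dir_eq hk (Ne.symm hu)])),
        hone u j b (inl w) hus ⟨hj, hbu, by simpa using hu.symm, by rintro u rfl; rintro ⟨⟩; exact hb rfl⟩
          (Or.inr h3), one_mul, mul_one] at sq
      simp only [f]
      rw [D.T_move z hus hw hu hj H _ (by simp) (by simp) (dir_eq hk (Ne.symm hu)),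
        D.T_move z hus hw hu hj H (inl w) (by simpa using hu.symm) (by simpa using hw) rfl, sq]
  have eqv : ∀ w k a a', w ≠ D.vs → inc w k → Relation.EqvGen (CRel inc w) a a' →
      (a = inl w ↔ a' = inl w) ∧ dir inc w a = dir inc w a' ∧
      ∀ b, b ≠ inl w → ¬ D.tr w b a → f w k b a = f w k b a' := by
    intro w k a a' hw hk h
    induction h with
    | rel _ _ h =>
      obtain ⟨hj, hu⟩ := h
      refine ⟨by simpa using hu, dir_eq hj hu, fun b hb H => step w k b _ _ hw hk hb hj hu ?_⟩
      simpa [tr, dir_eq hj hu] using H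
    | refl => exact ⟨Iff.rfl, rfl, fun _ _ _ => rfl⟩
    | symm a a' _ ih =>
      refine ⟨ih.1.symm, ih.2.1.symm, fun b hb H => (ih.2.2 b hb ?_).symm⟩
      simpa [tr, ih.2.1] using H
    | trans a a' a'' _ _ ih ih' =>
      refine ⟨ih.1.trans ih'.1, ih.2.1.trans ih'.2.1, fun b hb H => (ih.2.2 b hb H).trans (ih'.2.2 b hb ?_)⟩
      simpa [tr, ih.2.1] using H
  let Y : ∀ w : V, E → Sym2 (Dir inc w) → P := fun w k s =>
    f w k (Quot.out (Quot.out s).1) (Quot.out (Quot.out s).2)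
  refine ⟨z, Y, fun v h a b hv => ?_⟩
  unfold lam
  by_cases h1 : v = D.vs
  · subst h1
    rw [if_pos rfl, hz _ _ _ hv.inc]
  rw [if_neg h1]
  by_cases H : D.tr v a b
  · rw [if_pos H, hone _ _ _ _ h1 hv H]
  rw [if_neg H]
  have key : ∀ a b a' b', dir inc v a = dir inc v a' → dir inc v b = dir inc v b' →
      a ≠ inl v → b ≠ inl v → ¬ D.tr v a b → f v h a' b' = f v h a b := by
    intro a b a' b' e1 e2 ha hb H
    have i1 := eqv v h a a' h1 hv.inc (Quot.eqvGen_exact e1)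
    have i2 := eqv v h b b' h1 hv.inc (Quot.eqvGen_exact e2)
    have H1 : ¬ D.tr v b a := fun h => H (D.tr_symm h)
    have H2 : ¬ D.tr v a' b := by simpa [tr, e1] using H
    rw [fsymm v h a b H, i1.2.2 b hb H1, fsymm v h b a' (fun h => H2 (D.tr_symm h)),
      i2.2.2 a' (fun h => ha (i1.1.2 h)) H2]
  have hY : Y v h s(dir inc v a, dir inc v b) = f v h a b := by
    change f v h _ _ = _
    have hs : (Quot.out s(dir inc v a, dir inc v b)).1 = dir inc v a ∧
        (Quot.out s(dir inc v a, dir inc v b)).2 = dir inc v b ∨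
        (Quot.out s(dir inc v a, dir inc v b)).1 = dir inc v b ∧
        (Quot.out s(dir inc v a, dir inc v b)).2 = dir inc v a := by
      have : s((Quot.out s(dir inc v a, dir inc v b)).1, (Quot.out s(dir inc v a, dir inc v b)).2) =
        s(dir inc v a, dir inc v b) := Quot.out_eq _
      simpa [Prod.ext_iff] using this
    have ho : ∀ q : Dir inc v, dir inc v (Quot.out q) = q := fun q => Quot.out_eq q
    rcases hs with ⟨e1, e2⟩ | ⟨e1, e2⟩
    · rw [e1, e2]
      exact key _ _ _ _ (ho _).symm (ho _).symm hv.ha hv.hb H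
    · rw [e1, e2, fsymm _ _ _ _ H]
      exact key _ _ _ _ (ho _).symm (ho _).symm hv.hb hv.ha (fun h => H (D.tr_symm h))
  rw [hY]
  simp [f, mul_assoc]

theorem flam_universal : Universal inc D.flam := by
  intro P _ g hg
  obtain ⟨q, hq⟩ := fw D.fwd hg
  obtain ⟨z, Y, hN⟩ := D.normal (gaugeBy g q) (gaugeBy_flat hg q) (fun w k a b hw hv ht => hq w k a b hw hv ht)
  refine ⟨FreeGroup.lift (Sum.elim (fun p => z p.1 p.2) (fun p => Y p.1 p.2.1 p.2.2)), q, ?_⟩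
  intro v h a b hv
  rw [gaugeBy_gauge inc g q v h a b hv, hN v h a b hv]
  beta_reduce
  rw [flam, lam_map]
  simp

/-- The group presented by a graph with a star structure is free. -/
theorem free (D : StarData inc) {P : Type} [Group P] (hP : Presents inc P) : IsFreeGroupType P :=
  free_of_universal hP D.flam (D.lam_flat _ _) D.flam_universal
end StarData

end

/-! ### Deleting vertices from a graph -/

section
open Sum SimpleGraph

/-- Incidence of vertices and edges of a simple graph. -/
def einc {V : Type} (Γ : SimpleGraph V) (v : V) (e : Γ.edgeSet) : Prop := v ∈ e.1

/-- The graph `Γ` with the vertices in `A` isolated. -/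
def del {V : Type} (Γ : SimpleGraph V) (A : Set V) : SimpleGraph V where
  Adj x y := Γ.Adj x y ∧ x ∉ A ∧ y ∉ A
  symm := ⟨fun _ _ h => ⟨h.1.symm, h.2.2, h.2.1⟩⟩
  loopless := ⟨fun _ h => h.1.ne rfl⟩

section
variable {V : Type} {Γ : SimpleGraph V}

theorem del_le (A : Set V) : del Γ A ≤ Γ := fun _ _ h => h.1

theorem cycleSubgraph_of_walk {u : V} {c : Γ.Walk u u} (hc : c.IsCycle) :
    IsCycleSubgraph c.toSubgraph := by
  refine ⟨?_, c.toSubgraph_connected, fun v hv => ?_⟩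
  · cases c with
    | nil => exact absurd hc (by simp)
    | @cons _ w _ h p => exact ⟨s(u, w), by simp⟩
  · exact hc.ncard_neighborSet_toSubgraph_eq_two (by simpa using hv)

theorem del_support {A : Set V} {u v : V} (p : (del Γ A).Walk u v) (hu : u ∉ A) :
    ∀ x ∈ p.support, x ∉ A := by
  induction p with
  | nil => simpa using hu
  | cons h p ih =>
    intro x hx
    simp only [Walk.support_cons, List.mem_cons] at hx
    rcases hx with rfl | hx
    · exact hu
    · exact ih h.2.2 x hx

theorem del_reach_notMem {A : Set V} {u v : V} (h : (del Γ A).Reachable u v) (hu : u ∉ A) : v ∉ A := by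
  obtain ⟨p⟩ := h
  exact del_support p hu v (by simp)

theorem cyc {A : Set V} {v u u' : V} (hv : v ∈ A) (hu : Γ.Adj v u) (hu' : Γ.Adj v u') (hne : u ≠ u')
    (huA : u ∉ A) (hr : (del Γ A).Reachable u u') :
    ∃ H : Γ.Subgraph, IsCycleSubgraph H ∧ H.Adj v u ∧ H.Adj v u' ∧
      ∀ y ∈ H.verts, y ≠ v → y ∉ A ∧ (del Γ A).Reachable u y := by
  obtain ⟨p, hp⟩ := hr.exists_isPath
  have hs := del_support p huA
  have hsr : ∀ x ∈ p.support, (del Γ A).Reachable u x := fun x hx => ⟨p.takeUntil x hx⟩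
  let p1 : Γ.Walk u u' := p.mapLe (del_le A)
  have hp1 : p1.IsPath := by simpa [p1] using hp
  have hsup : p1.support = p.support := by simp [p1]
  have hv1 : v ∉ p1.support := by rw [hsup]; exact fun h => hs v h hv
  let p2 : Γ.Walk u v := p1.concat hu'.symm
  have hp2 : p2.IsPath := hp1.concat hv1 _
  have he : s(v, u) ∉ p2.edges := by
    simp only [p2, Walk.edges_concat, List.concat_eq_append, List.mem_append, List.mem_singleton]
    rintro (h | h)
    · exact hv1 (Walk.fst_mem_support_of_mem_edges _ h)
    · rw [Sym2.eq_swap, Sym2.congr_left] at h; exact hne h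
  have hc := (Walk.cons_isCycle_iff p2 hu).2 ⟨hp2, he⟩
  refine ⟨_, cycleSubgraph_of_walk hc, ?_, ?_, ?_⟩
  · rw [← Subgraph.mem_edgeSet, Walk.mem_edges_toSubgraph]; simp
  · rw [← Subgraph.mem_edgeSet, Walk.mem_edges_toSubgraph]; simp [p2, Sym2.eq_swap]
  · intro y hy hyv
    simp only [Walk.mem_verts_toSubgraph, Walk.support_cons, List.mem_cons, p2, Walk.support_concat,
      List.concat_eq_append, List.mem_append, List.mem_singleton, hsup] at hy
    rcases hy with h | h | h
    · exact absurd h hyv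
    · exact ⟨hs y h, hsr y h⟩
    · simp at h; exact absurd h hyv

theorem acyclic_del {A : Set V} (hA : ∀ H : Γ.Subgraph, IsCycleSubgraph H → ∃ v ∈ H.verts, v ∈ A) :
    (del Γ A).IsAcyclic := by
  intro u c hc
  have hc' : (c.mapLe (del_le A)).IsCycle := by simpa using hc
  obtain ⟨v, hv, hvA⟩ := hA _ (cycleSubgraph_of_walk hc')
  have hu : u ∉ A := by
    cases c with
    | nil => exact absurd hc (by simp)
    | cons h p => exact h.2.1
  exact del_support c hu v (by simpa using hv) hvA

theorem exists_root (hconn : Γ.Connected) {vs w : V} (hw : w ≠ vs) :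
    ∃ r, (del Γ {vs}).Reachable w r ∧ Γ.Adj r vs := by
  obtain ⟨p⟩ := hconn.preconnected w vs
  induction p with
  | nil => exact absurd rfl hw
  | @cons a b c h p ih =>
    by_cases hb : b = c
    · subst hb; exact ⟨a, .refl _, h⟩
    · obtain ⟨r, hr, hrv⟩ := ih hb
      exact ⟨r, (Adj.reachable (show (del Γ {c}).Adj a b from ⟨h, hw, hb⟩)).trans hr, hrv⟩

/-- Adjacency of cells away from the vertices in `A`. -/
inductive CR (Γ : SimpleGraph V) (A : Set V) : V ⊕ Γ.edgeSet → V ⊕ Γ.edgeSet → Prop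
  | mk {u j} : einc Γ u j → u ∉ A → CR Γ A (inr j) (inl u)

theorem adj_of_mem {e : Γ.edgeSet} {x y : V} (hx : x ∈ e.1) (hy : y ∈ e.1) (h : x ≠ y) : Γ.Adj x y := by
  have : e.1 = s(x, y) := ((Sym2.mem_and_mem_iff h).1 ⟨hx, hy⟩)
  have h2 := e.2
  rw [this] at h2
  exact h2

theorem eq_of_mem {e e' : Γ.edgeSet} {x y : V} (h : x ≠ y) (hx : x ∈ e.1) (hy : y ∈ e.1)
    (hx' : x ∈ e'.1) (hy' : y ∈ e'.1) : e = e' := by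
  apply Subtype.ext
  rw [((Sym2.mem_and_mem_iff h).1 ⟨hx, hy⟩), ((Sym2.mem_and_mem_iff h).1 ⟨hx', hy'⟩)]

theorem exists_other (e : Γ.edgeSet) {x : V} (hx : x ∈ e.1) : ∃ y ∈ e.1, y ≠ x ∧ Γ.Adj x y := by
  obtain ⟨y, hy⟩ := hx
  have h2 := e.2
  rw [hy] at h2
  exact ⟨y, by rw [hy]; simp, Ne.symm (Adj.ne h2), h2⟩

theorem CR_iso {A : Set V} {h h' : Γ.edgeSet} (hA : ∀ x ∈ h.1, x ∈ A)
    (e : Relation.EqvGen (CR Γ A) (inr h) (inr h')) : h = h' := by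
  have : ∀ a b, Relation.EqvGen (CR Γ A) a b → (a = inr h ↔ b = inr h) := by
    intro a b H
    induction H with
    | rel _ _ H => obtain ⟨h1, h2⟩ := H; simp; rintro rfl; exact h2 (hA _ h1)
    | refl => rfl
    | symm _ _ _ ih => exact ih.symm
    | trans _ _ _ _ _ ih ih' => exact ih.trans ih'
  simpa using ((this _ _ e).1 rfl).symm

theorem CR_reach {A : Set V} {h h' : Γ.edgeSet} {v u u' : V} (hv : v ∈ A) (huv : u ≠ v) (huv' : u' ≠ v)
    (h1 : v ∈ h.1) (h2 : u ∈ h.1) (h1' : v ∈ h'.1) (h2' : u' ∈ h'.1)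
    (e : Relation.EqvGen (CR Γ A) (inr h) (inr h')) (hne : h ≠ h') :
    u ∉ A ∧ u ≠ u' ∧ (del Γ A).Reachable u u' := by
  have mem : ∀ {h : Γ.edgeSet} {v u x : V}, u ≠ v → v ∈ h.1 → u ∈ h.1 → x ∈ h.1 → x = v ∨ x = u := by
    intro h v u x huv h1 h2 h3
    have := (Sym2.mem_and_mem_iff huv).1 ⟨h2, h1⟩
    rw [this] at h3
    simpa [or_comm] using h3
  have huA : u ∉ A := by
    intro hu
    refine hne (CR_iso ?_ e)
    intro x hx
    rcases mem huv h1 h2 hx with rfl | rfl <;> assumption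
  refine ⟨huA, ?_, ?_⟩
  · rintro rfl
    exact hne (eq_of_mem huv h2 h1 h2' h1')
  · let R : V ⊕ Γ.edgeSet → Prop := Sum.elim (fun x => x ∉ A ∧ (del Γ A).Reachable u x)
      (fun j => ∃ x ∈ j.1, x ∉ A ∧ (del Γ A).Reachable u x)
    have : ∀ a b, Relation.EqvGen (CR Γ A) a b → (R a ↔ R b) := by
      intro a b H
      induction H with
      | rel _ _ H =>
        rename_i x y
        obtain ⟨h1, h2⟩ := H
        rename_i w j
        constructor
        · rintro ⟨y, hy, hyA, hr⟩
          refine ⟨h2, ?_⟩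
          by_cases hyw : y = w
          · rw [← hyw]; exact hr
          · exact hr.trans (Adj.reachable (show (del Γ A).Adj y w from ⟨adj_of_mem hy h1 hyw, hyA, h2⟩))
        · rintro ⟨hyA, hr⟩
          exact ⟨w, h1, hyA, hr⟩
      | refl => rfl
      | symm _ _ _ ih => exact ih.symm
      | trans _ _ _ _ _ ih ih' => exact ih.trans ih'
    obtain ⟨x, hx, hxA, hr⟩ := (this _ _ e).1 (show R (inr h) from ⟨u, h2, huA, .refl _⟩)
    rcases mem huv' h1' h2' hx with rfl | rfl
    · exact absurd hv hxA
    · exact hr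

/-- In an acyclic graph, of two adjacent vertices one lies next on the path of the other. -/
theorem acyclic_step {G : SimpleGraph V} (hG : G.IsAcyclic) {u w r : V} (h : G.Adj u w)
    (p : G.Walk u r) (hp : p.IsPath) (q : G.Walk w r) (hq : q.IsPath) :
    p = Walk.cons h q ∨ q = Walk.cons h.symm p := by
  by_cases hu : u ∈ q.support
  · right
    have h1 : (q.takeUntil u hu) = Walk.cons h.symm .nil :=
      congrArg Subtype.val ((hG.subsingleton_path _ _).elim ⟨_, hq.takeUntil hu⟩ ⟨Walk.cons h.symm .nil, by simp [h.ne']⟩)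
    have h2 : q.dropUntil u hu = p :=
      congrArg Subtype.val ((hG.subsingleton_path _ _).elim ⟨_, hq.dropUntil hu⟩ ⟨p, hp⟩)
    rw [← q.take_spec hu, h1, h2]; rfl
  · left
    exact congrArg Subtype.val ((hG.subsingleton_path _ _).elim ⟨p, hp⟩ ⟨Walk.cons h q, by simp [hq, hu]⟩)
end

end

/-! ### Existence of star structures -/

section
open Sum SimpleGraph
section
variable {V : Type} {Γ : SimpleGraph V}

theorem del_reach_of_walk {G : SimpleGraph V} (hG : G ≤ Γ) {A : Set V} {a b : V} (p : G.Walk a b)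
    (hp : ∀ x ∈ p.support, x ∉ A) : (del Γ A).Reachable a b := by
  induction p with
  | nil => exact .refl _
  | @cons a b c h p ih =>
    refine (Adj.reachable (show (del Γ A).Adj a b from ⟨hG h, hp _ (by simp), hp _ (by simp)⟩)).trans (ih fun x hx => hp x ?_)
    simp [hx]

/-- Away from `vs` the graph is a forest; rooting each tree at a neighbour of `vs` gives a depth `d`
and a parent `par` (which is `vs` for the roots). -/
theorem tree_data [Fintype V] (hconn : Γ.Connected) (vs : V) (hac : (del Γ {vs}).IsAcyclic) :
    ∃ (d : V → ℕ) (par : V → V), ∀ w, w ≠ vs →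
      Γ.Adj w (par w) ∧ (par w ≠ vs → d w = d (par w) + 1) ∧ d w < Fintype.card V ∧
      (∀ u, u ≠ vs → Γ.Adj u w → par u = w ∨ par w = u) ∧
      (par w = vs ∨ (del Γ {w}).Reachable (par w) vs) := by
  let G := del Γ {vs}
  have hrt : ∃ rt : V → V, (∀ w, w ≠ vs → G.Reachable w (rt w) ∧ Γ.Adj (rt w) vs) ∧
      ∀ u w, G.Reachable u w → rt u = rt w := by
    let rtC : G.ConnectedComponent → V := fun c =>
      if h : ∃ r, G.connectedComponentMk r = c ∧ Γ.Adj r vs then h.choose else vs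
    refine ⟨fun w => rtC (G.connectedComponentMk w), fun w hw => ?_, fun u w h => ?_⟩
    · obtain ⟨r, hr, hr'⟩ := exists_root hconn hw
      have hex : ∃ r, G.connectedComponentMk r = G.connectedComponentMk w ∧ Γ.Adj r vs :=
        ⟨r, ConnectedComponent.eq.2 hr.symm, hr'⟩
      have := hex.choose_spec
      simp only [rtC, dif_pos hex]
      exact ⟨(ConnectedComponent.eq.1 this.1).symm, this.2⟩
    · simp only [ConnectedComponent.eq.2 h]
  obtain ⟨rt, h1, h2⟩ := hrt
  have hP : ∀ w, ∃ p : G.Walk w (if w = vs then w else rt w), p.IsPath := by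
    intro w
    by_cases hw : w = vs
    · rw [if_pos hw]; exact ⟨.nil, by simp⟩
    · rw [if_neg hw]; exact (h1 w hw).1.exists_isPath
  choose P hP using hP
  let par : V → V := fun w => if (P w).Nil then vs else (P w).snd
  have rtne : ∀ w, w ≠ vs → rt w ≠ vs := fun w hw => (h1 w hw).2.ne
  -- the path of a non-root vertex begins with its parent, whose own path is the tail
  have step : ∀ u w, u ≠ vs → w ≠ vs → ∀ h : G.Adj u w,
      (par u = w ∧ (P u).length = (P w).length + 1) ∨ (par w = u ∧ (P w).length = (P u).length + 1) := by
    intro u w hu hw h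
    have e : rt u = rt w := h2 u w h.reachable
    have key : ∀ r r', r = r' → ∀ (p : G.Walk u r) (q : G.Walk w r'), p.IsPath → q.IsPath →
        (¬ p.Nil ∧ p.snd = w ∧ p.length = q.length + 1) ∨
        (¬ q.Nil ∧ q.snd = u ∧ q.length = p.length + 1) := by
      rintro r _ rfl p q hp hq
      rcases acyclic_step hac h p hp q hq with h | h
      · left; rw [h]; simp
      · right; rw [h]; simp
    have := key _ _ (by rw [if_neg hu, if_neg hw, e]) (P u) (P w) (hP u) (hP w)
    rcases this with ⟨h1, h2, h3⟩ | ⟨h1, h2, h3⟩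
    · left; exact ⟨by simp only [par, if_neg h1, h2], h3⟩
    · right; exact ⟨by simp only [par, if_neg h1, h2], h3⟩
  refine ⟨fun w => (P w).length, par, fun w hw => ⟨?_, ?_, (hP w).length_lt, ?_, ?_⟩⟩
  · by_cases hn : (P w).Nil
    · have := hn.eq
      rw [if_neg hw] at this
      simp only [par, if_pos hn]
      rw [this]; exact (h1 w hw).2
    · simp only [par, if_neg hn]
      exact ((P w).adj_snd hn).1
  · intro hpar
    have hn : ¬ (P w).Nil := by intro hn; simp [par, hn] at hpar
    have ha : G.Adj w (par w) := by simp only [par, if_neg hn]; exact (P w).adj_snd hn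
    rcases step w (par w) hw hpar ha with h | h
    · exact h.2
    · exfalso
      have hl := (P w).length_tail_add_one hn
      have hst : (P w).tail.IsPath := (hP w).tail
      -- uniqueness of the path from the parent
      have e : rt w = rt (par w) := h2 _ _ ha.reachable
      have key : ∀ (a b r r' : V), a = b → r = r' → ∀ (p : G.Walk a r) (q : G.Walk b r'),
          p.IsPath → q.IsPath → p.length = q.length := by
        rintro a _ r _ rfl rfl p q hp hq
        have := congrArg Subtype.val ((hac.subsingleton_path _ _).elim ⟨p, hp⟩ ⟨q, hq⟩)
        simp only at this
        rw [this]
      have := key _ (par w) _ _ (by simp only [par, if_neg hn]) (by rw [if_neg hw, if_neg hpar, e])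
        (P w).tail (P (par w)) hst (hP _)
      omega
  · intro u hu hadj
    rcases step u w hu hw ⟨hadj, hu, hw⟩ with h | h
    · exact Or.inl h.1
    · exact Or.inr h.1
  · by_cases hn : (P w).Nil
    · left; simp only [par, if_pos hn]
    · right
      simp only [par, if_neg hn]
      have hw2 : w ∉ (P w).tail.support := by
        have h3 := hP w
        rw [← (P w).cons_tail_eq hn] at h3
        exact ((Walk.cons_isPath_iff _ _).1 h3).2
      have := del_reach_of_walk (del_le (Γ := Γ) {vs}) (A := {w}) (P w).tail
        (by rintro x hx rfl; exact hw2 hx)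
      refine this.trans (Adj.reachable ?_)
      have hnr : (if w = vs then w else rt w) ≠ w := by
        intro h
        have h3 := (P w).tail.end_mem_support
        exact (ne_of_mem_of_not_mem h3 hw2) h
      refine ⟨?_, hnr, fun h => hw h.symm⟩
      rw [if_neg hw]; exact (h1 w hw).2

/-- A star structure exists if all cycles pass through `vs` and, as soon as there is another
essential vertex, there is at most one cycle and it contains that vertex. -/
theorem star_exists [Fintype V] (hconn : Γ.Connected) (hne : Γ.edgeSet.Nonempty) (vs : V)
    (h1 : ∀ H : Γ.Subgraph, IsCycleSubgraph H → vs ∈ H.verts)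
    (h2 : ∀ w, w ≠ vs → 3 ≤ (Γ.neighborSet w).ncard → ∀ H : Γ.Subgraph, IsCycleSubgraph H →
      w ∈ H.verts ∧ ∀ H', IsCycleSubgraph H' → H' = H) : Nonempty (StarData (einc Γ)) := by
  have hac : (del Γ {vs}).IsAcyclic := acyclic_del fun H hH => ⟨vs, h1 H hH, rfl⟩
  obtain ⟨d, par, hd⟩ := tree_data hconn vs hac
  let e0 : Γ.edgeSet := ⟨hne.choose, hne.choose_spec⟩
  let dn : V → Γ.edgeSet := fun w => if h : Γ.Adj w (par w) then ⟨s(w, par w), h⟩ else e0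
  have hdn : ∀ w, w ≠ vs → (dn w).1 = s(w, par w) := by
    intro w hw; simp only [dn, dif_pos (hd w hw).1]
  have dn_inj : ∀ w w', w ≠ vs → w' ≠ vs → dn w = dn w' → w = w' := by
    intro w w' hw hw' h
    have := congrArg Subtype.val h
    rw [hdn w hw, hdn w' hw', Sym2.eq_iff] at this
    rcases this with h | ⟨h3, h4⟩
    · exact h.1
    · have e1 := (hd w hw).2.1 (by rw [h4]; exact hw')
      have e2 := (hd w' hw').2.1 (by rw [← h3]; exact hw)
      rw [h4] at e1; rw [← h3] at e2; omega
  let ht : V ⊕ Γ.edgeSet → ℕ := Sum.elim (fun w => 2 * d w + 1)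
    (fun k => if h : ∃ w, w ≠ vs ∧ k = dn w then 2 * d h.choose else 2 * Fintype.card V + 2)
  have ht_dn : ∀ w, w ≠ vs → ht (inr (dn w)) = 2 * d w := by
    intro w hw
    have h : ∃ w', w' ≠ vs ∧ dn w = dn w' := ⟨w, hw, rfl⟩
    simp only [ht, Sum.elim_inr, dif_pos h]
    rw [← dn_inj _ _ hw h.choose_spec.1 h.choose_spec.2]
  let hh : V → V ⊕ Γ.edgeSet → Γ.edgeSet := fun w a =>
    if h : ∃ j : Γ.edgeSet, vs ∈ j.1 ∧ Relation.EqvGen (CR Γ {w, vs}) (inr j) a then h.choose else e0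
  refine ⟨{ vs := vs, B := fun w => 3 ≤ (Γ.neighborSet w).ncard, dn := dn, ht := ht, hh := hh,
            dn_inc := ?_, ht_dn := ?_, ht_up := ?_, uu := ?_, conn := ?_, notB := ?_, isB := ?_,
            hh_vs := ?_, hh_inv := ?_ }⟩
  · intro w hw; rw [einc, hdn w hw]; simp
  · intro w hw; rw [ht_dn w hw]; simp [ht]
  · intro w k hw hk hkn
    by_cases h : ∃ w', w' ≠ vs ∧ k = dn w'
    · obtain ⟨w', hw', rfl⟩ := h
      rw [ht_dn w' hw']
      rw [einc, hdn w' hw'] at hk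
      simp only [Sym2.mem_iff] at hk
      rcases hk with rfl | hk
      · exact absurd rfl hkn
      · have := (hd w' hw').2.1 (by rw [← hk]; exact hw)
        rw [← hk] at this
        simp only [ht, Sum.elim_inl]; omega
    · have := (hd w hw).2.2.1
      simp only [ht, Sum.elim_inr, dif_neg h, Sum.elim_inl]; omega
  · intro u w k hu hw huw hk hk'
    rcases (hd w hw).2.2.2.1 u hu (adj_of_mem hk hk' huw) with h | h
    · left
      exact eq_of_mem huw hk hk' (by rw [hdn u hu]; simp) (by rw [hdn u hu]; simp [h])
    · right
      exact eq_of_mem huw hk hk' (by rw [hdn w hw]; simp [h]) (by rw [hdn w hw]; simp)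
  · have key : ∀ u v, Γ.Reachable u v → Relation.EqvGen (fun a b => ∃ u j, einc Γ u j ∧ a = inr j ∧ b = inl u)
        (inl u) (inl v) := by
      rintro u v ⟨p⟩
      induction p with
      | nil => exact .refl _
      | @cons a b c h p ih =>
        refine .trans _ (inl b) _ (.trans _ (inr ⟨s(a, b), h⟩) _ ?_ ?_) ih
        · exact .symm _ _ (.rel _ _ ⟨a, _, by simp [einc], rfl, rfl⟩)
        · exact .rel _ _ ⟨b, _, by simp [einc], rfl, rfl⟩
    have key2 : ∀ a : V ⊕ Γ.edgeSet, ∃ u, Relation.EqvGen (fun a b => ∃ u j, einc Γ u j ∧ a = inr j ∧ b = inl u)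
        a (inl u) := by
      rintro (u | ⟨e, he⟩)
      · exact ⟨u, .refl _⟩
      · induction e with
        | h x y => exact ⟨x, .rel _ _ ⟨x, _, by simp [einc], rfl, rfl⟩⟩
    intro a b
    obtain ⟨u, hu⟩ := key2 a
    obtain ⟨v, hv⟩ := key2 b
    exact .trans _ _ _ hu (.trans _ _ _ (key u v (hconn.preconnected u v)) (.symm _ _ hv))
  · intro w k₁ k₂ hw hB i1 i2 n1 n2
    by_contra hne
    apply hB
    obtain ⟨u1, m1, ne1, a1⟩ := exists_other k₁ i1
    obtain ⟨u2, m2, ne2, a2⟩ := exists_other k₂ i2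
    have hp1 : u1 ≠ par w := by
      rintro rfl; exact n1 (eq_of_mem ne1.symm i1 m1 (by rw [hdn w hw]; simp) (by rw [hdn w hw]; simp))
    have hp2 : u2 ≠ par w := by
      rintro rfl; exact n2 (eq_of_mem ne2.symm i2 m2 (by rw [hdn w hw]; simp) (by rw [hdn w hw]; simp))
    have h12 : u1 ≠ u2 := by rintro rfl; exact hne (eq_of_mem ne1.symm i1 m1 i2 m2)
    have : ({u1, u2, par w} : Set V).ncard = 3 := by
      rw [Set.ncard_eq_three]; exact ⟨_, _, _, h12, hp1, hp2, rfl⟩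
    rw [← this]
    apply Set.ncard_le_ncard _ (Set.toFinite _)
    rintro x (rfl | rfl | rfl)
    · exact a1
    · exact a2
    · exact (hd w hw).1
  · intro w k₁ k₂ hw hB i1 i2 n1 n2 hdir
    by_contra hne
    obtain ⟨u1, m1, ne1, a1⟩ := exists_other k₁ i1
    obtain ⟨u2, m2, ne2, a2⟩ := exists_other k₂ i2
    have hp1 : u1 ≠ par w := by
      rintro rfl; exact n1 (eq_of_mem ne1.symm i1 m1 (by rw [hdn w hw]; simp) (by rw [hdn w hw]; simp))
    have hp2 : u2 ≠ par w := by
      rintro rfl; exact n2 (eq_of_mem ne2.symm i2 m2 (by rw [hdn w hw]; simp) (by rw [hdn w hw]; simp))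
    have heq : Relation.EqvGen (CR Γ {w}) (inr k₁) (inr k₂) := by
      refine (Quot.eqvGen_exact hdir).mono ?_
      rintro _ _ ⟨hj, hu⟩
      exact ⟨hj, hu⟩
    obtain ⟨hA, h12, hr⟩ := CR_reach (Set.mem_singleton w) ne1 ne2 i1 m1 i2 m2 heq hne
    obtain ⟨H, hH, b1, b2, hv⟩ := cyc (Set.mem_singleton w) a1 a2 h12 hA hr
    have hvs := (hv vs (h1 H hH) hw.symm).2
    have hpr : (del Γ {w}).Reachable u1 (par w) := by
      rcases (hd w hw).2.2.2.2 with h | h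
      · rw [h]; exact hvs
      · exact hvs.trans h.symm
    obtain ⟨H', hH', c1, c2, -⟩ := cyc (Set.mem_singleton w) a1 (hd w hw).1 hp1 hA hpr
    obtain ⟨hwH, hun⟩ := h2 w hw hB H hH
    rw [hun H' hH'] at c2
    have h3 := hH.2.2 w hwH
    have : ({u1, u2, par w} : Set V).ncard = 3 := by
      rw [Set.ncard_eq_three]; exact ⟨_, _, _, h12, hp1, hp2, rfl⟩
    have : ({u1, u2, par w} : Set V).ncard ≤ (H.neighborSet w).ncard := by
      apply Set.ncard_le_ncard _ (Set.toFinite _)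
      rintro x (rfl | rfl | rfl)
      · exact b1
      · exact b2
      · exact c2
    omega
  · intro w h hw hB hvs
    have hex : ∃ j : Γ.edgeSet, vs ∈ j.1 ∧ Relation.EqvGen (CR Γ {w, vs}) (inr j) (inr h) :=
      ⟨h, hvs, .refl _⟩
    simp only [hh, dif_pos hex]
    obtain ⟨hc1, hc2⟩ := hex.choose_spec
    by_contra hne
    obtain ⟨u1, m1, ne1, a1⟩ := exists_other _ hc1
    obtain ⟨u2, m2, ne2, a2⟩ := exists_other _ hvs
    obtain ⟨hA, h12, hr⟩ := CR_reach (A := {w, vs}) (by simp) ne1 ne2 hc1 m1 hvs m2 hc2 hne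
    obtain ⟨H, hH, b1, b2, hv⟩ := cyc (A := {w, vs}) (by simp) a1 a2 h12 hA hr
    exact (hv w (h2 w hw hB H hH).1 hw).1 (by simp)
  · intro w u k hw hB hu huw hk
    have : ∀ j : Γ.edgeSet, Relation.EqvGen (CR Γ {w, vs}) (inr j) (inr k) ↔
        Relation.EqvGen (CR Γ {w, vs}) (inr j) (inl u) := by
      have hs : Relation.EqvGen (CR Γ {w, vs}) (inr k) (inl u) := .rel _ _ ⟨hk, by simp [hu, huw]⟩
      exact fun j => ⟨fun h => .trans _ _ _ h hs, fun h => .trans _ _ _ h (.symm _ _ hs)⟩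
    simp only [hh, this]
end

end

/-! ### Cases (a), (b), (c) and cycles missing an essential vertex -/

section
open Sum SimpleGraph
section
variable {V : Type} {Γ : SimpleGraph V}

/-- A cycle in a connected graph that misses a vertex contains an essential vertex. -/
theorem cycle_essential [Fintype V] (hconn : Γ.Connected) {H : Γ.Subgraph} (hH : IsCycleSubgraph H) {v : V}
    (hv : v ∉ H.verts) : ∃ x ∈ H.verts, 3 ≤ (Γ.neighborSet x).ncard := by
  obtain ⟨a, ha⟩ := hH.2.1.nonempty
  obtain ⟨p⟩ := hconn.preconnected a v
  obtain ⟨d, -, h1, h2⟩ := p.exists_boundary_dart H.verts ha hv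
  refine ⟨d.fst, h1, ?_⟩
  have h3 := hH.2.2 _ h1
  have h4 : d.snd ∉ H.neighborSet d.fst := fun h => h2 (H.edge_vert (Subgraph.Adj.symm h))
  have := Set.ncard_insert_of_notMem h4 (Set.toFinite _)
  rw [h3] at this
  refine this.symm.le.trans ?_
  apply Set.ncard_le_ncard _ (Set.toFinite _)
  rintro x (rfl | hx)
  · exact d.adj
  · exact H.adj_sub hx

/-- Each of the conditions (a), (b), (c) gives a star structure, rooted at any vertex in
case (a), at the essential vertex (if there is one) in case (b), and on the cycle in case (c). -/
theorem abc_star [Fintype V] (hconn : Γ.Connected) (hne : Γ.edgeSet.Nonempty)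
    (h : (¬ ∃ H : Γ.Subgraph, IsCycleSubgraph H) ∨
        ({v : V | 3 ≤ (Γ.neighborSet v).ncard}.Subsingleton) ∨
        ((∃! H : Γ.Subgraph, IsCycleSubgraph H) ∧
          ∀ H : Γ.Subgraph, IsCycleSubgraph H →
            ∀ v : V, 3 ≤ (Γ.neighborSet v).ncard → v ∈ H.verts)) : Nonempty (StarData (einc Γ)) := by
  rcases h with h | h | ⟨⟨H, hH, hu⟩, h⟩
  · obtain ⟨v⟩ := hconn.nonempty
    exact star_exists hconn hne v (fun H hH => absurd ⟨H, hH⟩ h)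
      (fun _ _ _ H hH => absurd ⟨H, hH⟩ h)
  · by_cases hex : ∃ v, 3 ≤ (Γ.neighborSet v).ncard
    · obtain ⟨v, hv⟩ := hex
      refine star_exists hconn hne v (fun H hH => ?_) (fun w hw hw3 => absurd (h hw3 hv) hw)
      by_contra hvH
      obtain ⟨x, hx, hx3⟩ := cycle_essential hconn hH hvH
      exact hvH (h hx3 hv ▸ hx)
    · obtain ⟨v⟩ := hconn.nonempty
      refine star_exists hconn hne v (fun H hH => ?_) (fun w hw hw3 => absurd ⟨w, hw3⟩ hex)
      by_contra hvH
      obtain ⟨x, hx, hx3⟩ := cycle_essential hconn hH hvH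
      exact hex ⟨x, hx3⟩
  · obtain ⟨a, ha⟩ := hH.2.1.nonempty
    refine star_exists hconn hne a (fun H' hH' => hu H' hH' ▸ ha) (fun w _ hw3 H' hH' => ⟨h H' hH' w hw3, ?_⟩)
    intro K hK
    rw [hu H' hH', hu K hK]

/-- A cycle missing an essential vertex obstructs freeness. -/
theorem case1_graph [Fintype V] {P : Type} [Group P] (hP : Presents (einc Γ) P)
    {H : Γ.Subgraph} (hH : IsCycleSubgraph H) {v : V} (hv : v ∉ H.verts)
    (hv3 : 3 ≤ (Γ.neighborSet v).ncard) : ¬ IsFreeGroupType P := by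
  let C : Finset (V × Γ.edgeSet) := Finset.univ.filter fun x => x.1 ∈ x.2.1 ∧ x.2.1 ∈ H.edgeSet
  have memC : ∀ x, x ∈ C ↔ x.1 ∈ x.2.1 ∧ x.2.1 ∈ H.edgeSet := by simp [C]
  obtain ⟨t, ht, ht3⟩ := Set.exists_subset_card_eq hv3
  obtain ⟨x, y, z, hxy, hxz, hyz, rfl⟩ := Set.ncard_eq_three.1 ht3
  have hx : Γ.Adj v x := ht (by simp)
  have hy : Γ.Adj v y := ht (by simp)
  have hz : Γ.Adj v z := ht (by simp)
  refine case1 hP (fun e => (Quot.out e.1).1) ?_ C (fun x hx => ((memC x).1 hx).1) ?_ ?_ ?_ v ?_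
    ![⟨s(v, x), hx⟩, ⟨s(v, y), hy⟩, ⟨s(v, z), hz⟩] ?_ ?_
  · rintro a b e ha hb hab
    have h1 := (Sym2.mem_and_mem_iff hab).1 ⟨ha, hb⟩
    have h2 : (Quot.out e.1).1 ∈ e.1 := Sym2.out_fst_mem e.1
    simp only [h1, Sym2.mem_iff] at h2
    rcases h2 with h | h
    · exact Or.inl (by rw [h1, h])
    · exact Or.inr (by rw [h1, h])
  · intro a
    by_cases ha : a ∈ H.verts
    · have : (C.filter (·.1 = a)).card = (H.neighborSet a).ncard := by
        rw [← Set.ncard_coe_finset]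
        symm
        refine Set.ncard_congr (fun b hb => (a, ⟨s(a, b), H.adj_sub hb⟩)) ?_ ?_ ?_
        · intro b hb
          simp only [Finset.coe_filter, Set.mem_ofPred_eq, memC, and_true]
          exact ⟨by simp, hb⟩
        · intro b c _ _ h
          have h := congrArg (fun p => p.2.1) h
          exact Sym2.congr_right.1 h
        · rintro ⟨a', e, he⟩ h
          simp only [Finset.coe_filter, Set.mem_ofPred_eq, memC] at h
          obtain ⟨⟨h1, h2⟩, rfl⟩ := h
          obtain ⟨b, rfl⟩ := h1
          exact ⟨b, h2, rfl⟩
      rw [this, hH.2.2 a ha]; exact even_two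
    · have : C.filter (·.1 = a) = ∅ := by
        ext ⟨a', e⟩
        simp only [Finset.mem_filter, memC, Finset.notMem_empty, iff_false]
        rintro ⟨⟨h1, h2⟩, rfl⟩
        obtain ⟨b, hb⟩ := h1
        rw [hb] at h2
        exact ha (H.edge_vert h2)
      rw [this]; simp
  · intro e
    by_cases he : e.1 ∈ H.edgeSet
    · obtain ⟨e, he'⟩ := e
      induction e with
      | h p q =>
        have : C.filter (·.2 = ⟨s(p, q), he'⟩) = {(p, ⟨s(p, q), he'⟩), (q, ⟨s(p, q), he'⟩)} := by
          ext ⟨a, e⟩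
          simp only [Finset.mem_filter, memC, Finset.mem_insert, Finset.mem_singleton, Prod.mk.injEq]
          constructor
          · rintro ⟨⟨h1, _⟩, rfl⟩
            simp at h1
            simpa using h1
          · rintro (⟨rfl, rfl⟩ | ⟨rfl, rfl⟩)
            · exact ⟨⟨by simp, he⟩, rfl⟩
            · exact ⟨⟨by simp, he⟩, rfl⟩
        have key : Even (C.filter (·.2 = ⟨s(p, q), he'⟩)).card := by
          rw [this, Finset.card_pair]
          · exact even_two
          · simpa using Adj.ne he'
        convert key
    · have : C.filter (·.2 = e) = ∅ := by
        ext ⟨a, e'⟩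
        simp only [Finset.mem_filter, memC, Finset.notMem_empty, iff_false]
        rintro ⟨⟨h1, h2⟩, rfl⟩
        exact he h2
      have key : Even (C.filter (·.2 = e)).card := by rw [this]; simp
      convert key
  · obtain ⟨e, he⟩ := hH.1
    induction e with
    | h p q => exact ⟨(p, ⟨s(p, q), H.adj_sub he⟩), (memC _).2 ⟨by simp, he⟩⟩
  · rintro ⟨a, e⟩ hxC rfl
    obtain ⟨h1, h2⟩ := (memC _).1 hxC
    obtain ⟨b, hb⟩ := h1
    rw [hb] at h2
    exact hv (H.edge_vert h2)
  · intro i j hij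
    have hf : ∀ i : Fin 3, ((![⟨s(v, x), hx⟩, ⟨s(v, y), hy⟩, ⟨s(v, z), hz⟩] : Fin 3 → Γ.edgeSet) i).1 =
        s(v, (![x, y, z] : Fin 3 → V) i) := by intro i; fin_cases i <;> rfl
    have hij := congrArg Subtype.val hij
    rw [hf, hf, Sym2.congr_right] at hij
    clear hf memC
    fin_cases i <;> fin_cases j <;> simp_all [hxy.symm, hxz.symm, hyz.symm]
  · intro i; fin_cases i <;> simp [einc]
end

end

/-! ### Transition elements of a degeneration system -/

section
section Paths
variable {Y : Type} [TopologicalSpace Y] {x : Y}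

theorem sc_homotopic {s : Set Y} (hs : IsSimplyConnected s) {a b : Y} (γ δ : Path a b)
    (hγ : ∀ t, γ t ∈ s) (hδ : ∀ t, δ t ∈ s) : γ.Homotopic δ := by
  have := hs.simplyConnectedSpace
  have ha : a ∈ s := by simpa using hγ 0
  have hb : b ∈ s := by simpa using hγ 1
  let γ' : Path (⟨a, ha⟩ : s) ⟨b, hb⟩ :=
    { toFun := fun t => ⟨γ t, hγ t⟩, source' := by simp, target' := by simp }
  let δ' : Path (⟨a, ha⟩ : s) ⟨b, hb⟩ :=
    { toFun := fun t => ⟨δ t, hδ t⟩, source' := by simp, target' := by simp }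
  have h : γ'.Homotopic δ' := SimplyConnectedSpace.paths_homotopic γ' δ'
  exact h.map ⟨Subtype.val, continuous_subtype_val⟩

/-- The element of the fundamental group at `x` obtained from a path `γ` by joining its ends to
`x` along the chosen paths `p`. -/
def W (p : ∀ y, Path x y) {a b : Y} (γ : Path a b) : FundamentalGroup Y x :=
  FundamentalGroup.fromPath (Path.Homotopic.Quotient.mk (((p a).trans γ).trans (p b).symm))

variable (p : ∀ y, Path x y)

theorem W_homotopic {a b : Y} {γ δ : Path a b} (h : γ.Homotopic δ) : W p γ = W p δ := by
  unfold W
  congr 1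
  exact Path.Homotopic.Quotient.eq.mpr (((Path.Homotopic.refl _).hcomp h).hcomp
    (Path.Homotopic.refl _))

theorem W_congr {a b a' b' : Y} (γ : Path a b) (δ : Path a' b') (h : ∀ t, γ t = δ t) :
    W p γ = W p δ := by
  obtain rfl : a = a' := by simpa using h 0
  obtain rfl : b = b' := by simpa using h 1
  have : γ = δ := by ext t; exact h t
  rw [this]

theorem W_trans {a b c : Y} (γ : Path a b) (δ : Path b c) :
    W p (γ.trans δ) = W p δ * W p γ := by
  unfold W
  rw [FundamentalGroup.mul_def]
  show _ = Path.Homotopic.Quotient.trans _ _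
  simp only [Path.Homotopic.Quotient.mk_trans, Path.Homotopic.Quotient.mk_symm]
  set A := Path.Homotopic.Quotient.mk (p a)
  set B := Path.Homotopic.Quotient.mk (p b)
  simp [Path.Homotopic.Quotient.trans_assoc]
  rw [← Path.Homotopic.Quotient.trans_assoc B.symm B]
  simp

theorem W_refl (a : Y) : W p (Path.refl a) = 1 := by
  have := W_trans p (Path.refl a) (Path.refl a)
  rw [W_homotopic p (γ := (Path.refl a).trans (Path.refl a)) (δ := Path.refl a)
    ⟨Path.Homotopy.transRefl _⟩] at this
  exact left_eq_mul.mp this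

theorem W_symm {a b : Y} (γ : Path a b) : W p γ.symm = (W p γ)⁻¹ := by
  have := W_trans p γ γ.symm
  rw [W_homotopic p (γ := γ.trans γ.symm) (δ := Path.refl a)
    ⟨(Path.Homotopy.reflTransSymm _).symm⟩, W_refl] at this
  exact eq_inv_of_mul_eq_one_left this.symm

theorem W_surj (g : FundamentalGroup Y x) : ∃ γ : Path x x, W p γ = g := by
  obtain ⟨δ, hδ⟩ := Path.Homotopic.Quotient.mk_surjective (FundamentalGroup.toPath g)
  refine ⟨((p x).symm.trans δ).trans (p x), ?_⟩
  unfold W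
  simp only [Path.Homotopic.Quotient.mk_trans, Path.Homotopic.Quotient.mk_symm, hδ]
  show _ = FundamentalGroup.toPath g
  set A := Path.Homotopic.Quotient.mk (p x)
  simp [Path.Homotopic.Quotient.trans_assoc]
  rw [← Path.Homotopic.Quotient.trans_assoc A A.symm]
  simp

end Paths

/-- A space `C` with a group action whose quotient map `π : C → Y` is nice, together with a
preorder `R` (`R c z`: `c` is a degeneration of `z`) whose intervals are simply connected and
small neighbourhoods `N c` lying above `c`. -/
structure CSys (C Y S : Type) [TopologicalSpace C] [TopologicalSpace Y] [Group S]
    [MulAction S C] where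
  π : C → Y
  cont : Continuous π
  opn : IsOpenMap π
  surj : Function.Surjective π
  orb : ∀ c d, π c = π d ↔ ∃ σ : S, σ • c = d
  act : ∀ σ : S, Continuous (fun c : C => σ • c)
  R : C → C → Prop
  refl : ∀ c, R c c
  trans : ∀ {c d z}, R c d → R d z → R c z
  equi : ∀ (σ : S) {c z}, R c z → R (σ • c) (σ • z)
  Isc : ∀ {c z}, R c z → IsSimplyConnected {w | R c w ∧ R w z}
  N : C → Set C
  Nopen : ∀ c, IsOpen (N c)
  Nmem : ∀ c, c ∈ N c
  Nsc : ∀ c, IsSimplyConnected (N c)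
  Ninj : ∀ c, Set.InjOn π (N c)
  NR : ∀ {c z}, z ∈ N c → R c z
  Njoin : ∀ {c z}, z ∈ N c → JoinedIn (N c ∩ {w | R c w ∧ R w z}) c z

namespace CSys
variable {C Y S : Type} [TopologicalSpace C] [TopologicalSpace Y] [Group S] [MulAction S C]
  (D : CSys C Y S)

theorem π_smul (σ : S) (c : C) : D.π (σ • c) = D.π c := ((D.orb _ _).2 ⟨σ, rfl⟩).symm

theorem img_sc (c : C) : IsSimplyConnected (D.π '' D.N c) := by
  have he : Topology.IsOpenEmbedding ((D.N c).domRestrict D.π) := by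
    refine .of_continuous_injective_isOpenMap (D.cont.comp continuous_subtype_val)
      (Set.injOn_iff_injective.1 (D.Ninj c)) ?_
    exact D.opn.comp ((D.Nopen c).isOpenMap_subtype_val)
  have h1 : IsSimplyConnected (Set.univ : Set (D.N c)) := by
    have := (D.Nsc c).simplyConnectedSpace
    exact (Homeomorph.Set.univ (D.N c)).toHomotopyEquiv.simplyConnectedSpace
  have := (he.isEmbedding.isSimplyConnected_image).2 h1
  rwa [Set.image_univ, Set.range_domRestrict] at this

/-- A path inside the interval between `c` and `z`. -/
def ipath {c z : C} (h : D.R c z) : Path c z :=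
  ((D.Isc h).isPathConnected.joinedIn c ⟨D.refl c, h⟩ z ⟨h, D.refl z⟩).somePath

theorem ipath_mem {c z : C} (h : D.R c z) (t) : D.R c (D.ipath h t) ∧ D.R (D.ipath h t) z :=
  ((D.Isc h).isPathConnected.joinedIn c ⟨D.refl c, h⟩ z ⟨h, D.refl z⟩).somePath_mem t

variable {x : Y} (p : ∀ y, Path x y)

/-- The transition elements: `G z c` is the class of a path from `c` to `z` in the interval. -/
def G (z c : C) : FundamentalGroup Y x :=
  if h : D.R c z then W p ((D.ipath h).map D.cont) else 1

theorem G_eq {c z : C} (h : D.R c z) (γ : Path c z) (hγ : ∀ t, D.R c (γ t) ∧ D.R (γ t) z) :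
    D.G p z c = W p (γ.map D.cont) := by
  rw [G, dif_pos h]
  exact W_homotopic p
    ((sc_homotopic (D.Isc h) _ γ (D.ipath_mem h) hγ).map ⟨D.π, D.cont⟩)

theorem G_comp {c d z : C} (h : D.R c d) (h' : D.R d z) :
    D.G p z d * D.G p d c = D.G p z c := by
  rw [D.G_eq p h _ (D.ipath_mem h), D.G_eq p h' _ (D.ipath_mem h'), ← W_trans,
    ← Path.map_trans]
  refine (D.G_eq p (D.trans h h') _ ?_).symm
  intro t
  rw [Path.trans_apply]
  split_ifs
  · exact ⟨(D.ipath_mem h _).1, D.trans (D.ipath_mem h _).2 h'⟩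
  · exact ⟨D.trans h (D.ipath_mem h' _).1, (D.ipath_mem h' _).2⟩

theorem G_smul (σ : S) {c z : C} (h : D.R c z) : D.G p (σ • z) (σ • c) = D.G p z c := by
  rw [D.G_eq p h _ (D.ipath_mem h), D.G_eq p (D.equi σ h) ((D.ipath h).map (D.act σ))
    (fun t => ⟨D.equi σ (D.ipath_mem h t).1, D.equi σ (D.ipath_mem h t).2⟩)]
  exact W_congr p _ _ fun t => by simp [D.π_smul]

/-- Zigzag products of transition elements starting at `c0`. -/
inductive Zig {P : Type} [Group P] (D : CSys C Y S) (G : C → C → P) (c0 : C) : C → P → Prop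
  | refl : Zig D G c0 c0 1
  | up {c z x} : D.R c z → Zig D G c0 c x → Zig D G c0 z (x * (G z c)⁻¹)
  | down {c z x} : D.R c z → Zig D G c0 z x → Zig D G c0 c (x * G z c)
  | perm {c x} (σ : S) : Zig D G c0 c x → Zig D G c0 (σ • c) x

theorem Zig.of_eq {P : Type} [Group P] {G : C → C → P} {c0 c d : C} {g : P}
    (h : D.π c = D.π d) (hz : Zig D G c0 c g) : Zig D G c0 d g := by
  obtain ⟨σ, rfl⟩ := (D.orb _ _).1 h
  exact hz.perm σ

theorem zig_piece {c0 : C} {a b : Y} (δ : Path a b) {c : C} (hδ : ∀ t, δ t ∈ D.π '' D.N c)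
    {z : C} {g : FundamentalGroup Y x} (hz : D.π z = a) (h : Zig D (D.G p) c0 z g) {z' : C}
    (hz' : D.π z' = b) : Zig D (D.G p) c0 z' (g * (W p δ)⁻¹) := by
  obtain ⟨u, hu, hua⟩ : a ∈ D.π '' D.N c := by simpa using hδ 0
  obtain ⟨v, hv, hvb⟩ : b ∈ D.π '' D.N c := by simpa using hδ 1
  subst hz hz'
  have h1 : Zig D (D.G p) c0 u g := h.of_eq D hua.symm
  have h2 := (h1.down (D.NR hu)).up (D.NR hv)
  refine (Zig.of_eq D hvb h2 : _) |> fun h => ?_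
  have hγu := (D.Njoin hu).somePath_mem
  have hγv := (D.Njoin hv).somePath_mem
  set γu := (D.Njoin hu).somePath
  set γv := (D.Njoin hv).somePath
  have key : W p δ = D.G p v c * (D.G p u c)⁻¹ := by
    rw [D.G_eq p (D.NR hu) γu fun t => (hγu t).2, D.G_eq p (D.NR hv) γv fun t => (hγv t).2,
      ← W_symm, ← W_trans]
    rw [W_congr p δ (δ.cast hua hvb) (fun t => rfl)]
    apply W_homotopic
    refine sc_homotopic (D.img_sc c) _ _ (fun t => hδ t) fun t => ?_
    rw [Path.trans_apply]
    split_ifs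
    · simp only [Path.symm_apply, Path.map_coe, Function.comp]
      exact ⟨_, (hγu _).1, rfl⟩
    · exact ⟨_, (hγv _).1, rfl⟩
  rw [key]
  rwa [mul_inv_rev, inv_inv, ← mul_assoc]

/-- Every path is homotopic to a zigzag of interval paths, by subdividing it into pieces contained
in the neighbourhoods `N c`. -/
theorem zig_path {c0 : C} {b : Y} (γ : Path (D.π c0) b) (z' : C) (hz' : D.π z' = b) :
    Zig D (D.G p) c0 z' (W p γ)⁻¹ := by
  obtain ⟨t, ht0, hmono, ⟨n, hn⟩, hcov⟩ := exists_monotone_Icc_subset_open_cover_unitInterval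
    (c := fun c : C => γ ⁻¹' (D.π '' D.N c))
    (fun c => (D.opn _ (D.Nopen c)).preimage γ.continuous)
    (fun s _ => by
      obtain ⟨c, hc⟩ := D.surj (γ s)
      exact Set.mem_iUnion.2 ⟨c, ⟨c, D.Nmem c, hc⟩⟩)
  have key : ∀ k, ∀ z, D.π z = γ (t k) → Zig D (D.G p) c0 z (W p (γ.subpath 0 (t k)))⁻¹ := by
    intro k
    induction k with
    | zero =>
      intro z hz
      rw [ht0, Path.subpath_self, W_refl, inv_one]
      rw [ht0] at hz
      exact Zig.refl.of_eq D (by rw [hz]; simp)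
    | succ k ih =>
      intro z hz
      obtain ⟨w, hw⟩ := D.surj (γ (t k))
      obtain ⟨c, hc⟩ := hcov k
      have := D.zig_piece p (γ.subpath (t k) (t (k+1))) (c := c) (fun s => by
        have h1 : γ.subpath (t k) (t (k+1)) s ∈ Set.range (γ.subpath (t k) (t (k+1))) := ⟨s, rfl⟩
        rw [Path.range_subpath_of_le _ _ _ (hmono (Nat.le_succ k))] at h1
        obtain ⟨r, hr, hr'⟩ := h1
        rw [← hr']
        exact hc hr) hw (ih w hw) hz
      rw [← mul_inv_rev, ← W_trans, W_homotopic p ⟨Path.Homotopy.subpathTransSubpath γ _ _ _⟩]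
        at this
      exact this
  have h := key n z' (by rw [hn n le_rfl, hz']; simp)
  rw [hn n le_rfl] at h
  rwa [W_congr p (γ.subpath 0 1) γ fun t => by simp] at h

end CSys

end

/-! ### Local systems and monodromy -/

section
open Filter Topology
namespace CSys
variable {C Y S : Type} [TopologicalSpace C] [TopologicalSpace Y] [Group S] [MulAction S C]
  (D : CSys C Y S)

/-- A local system: transition elements that compose along `R` and are invariant under `S`. -/
structure Local {F : Type} [Group F] (L : C → C → F) : Prop where
  comp : ∀ {c d z}, D.R c d → D.R d z → L z d * L d c = L z c
  inv : ∀ (σ : S) {c z}, D.R c z → L (σ • z) (σ • c) = L z c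

theorem G_local {x : Y} (p : ∀ y, Path x y) : D.Local (D.G p) :=
  ⟨fun h h' => D.G_comp p h h', fun σ _ _ h => D.G_smul p σ h⟩

variable {D}
theorem Local.self {F : Type} [Group F] {L : C → C → F} (h : D.Local L) (c : C) : L c c = 1 :=
  mul_eq_left.mp (h.comp (D.refl c) (D.refl c))

variable (D)
/-- The unique lift of `y` to `N c`. -/
def lift (c : C) (y : Y) : C := if h : y ∈ D.π '' D.N c then h.choose else c

theorem lift_eq {c z : C} {y : Y} (hz : z ∈ D.N c) (hy : D.π z = y) : D.lift c y = z := by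
  have h : y ∈ D.π '' D.N c := ⟨z, hz, hy⟩
  rw [lift, dif_pos h]
  exact D.Ninj c h.choose_spec.1 hz (h.choose_spec.2.trans hy.symm)

/-- A chosen preimage of a point of the quotient. -/
def sec (y : Y) : C := (D.surj y).choose
theorem π_sec (y : Y) : D.π (D.sec y) = y := (D.surj y).choose_spec

variable {F : Type} [Group F] {L : C → C → F} (hL : D.Local L)

theorem trans_const (hL : D.Local L) {c d z0 : C} {σ : S} (hz : z0 ∈ D.N c) (hd : σ • z0 ∈ D.N d) :
    ∀ᶠ y in 𝓝 (D.π z0), (L (D.lift d y) d)⁻¹ * L (D.lift c y) c =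
      (L (σ • z0) d)⁻¹ * L z0 c := by
  have hU : IsOpen (D.N z0 ∩ (D.N c ∩ (fun c => σ • c) ⁻¹' D.N d)) :=
    (D.Nopen z0).inter ((D.Nopen c).inter ((D.Nopen d).preimage (D.act σ)))
  filter_upwards [(D.opn _ hU).mem_nhds ⟨z0, ⟨D.Nmem z0, hz, hd⟩, rfl⟩]
  rintro y ⟨w, ⟨hw0, hwc, hwd⟩, rfl⟩
  rw [D.lift_eq hwc rfl, D.lift_eq hwd (D.π_smul σ w), ← hL.comp (D.NR hz) (D.NR hw0),
    ← hL.comp (D.NR hd) (D.equi σ (D.NR hw0)), hL.inv σ (D.NR hw0)]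
  group

variable [TopologicalSpace F] [DiscreteTopology F]

/-- The principal bundle with discrete fibre `F` determined by a local system. -/
def core : FiberBundleCore C Y F where
  baseSet c := D.π '' D.N c
  isOpen_baseSet c := D.opn _ (D.Nopen c)
  indexAt := D.sec
  mem_baseSet_at y := ⟨D.sec y, D.Nmem _, D.π_sec y⟩
  coordChange c d y v := ((L (D.lift d y) d)⁻¹ * L (D.lift c y) c) * v
  coordChange_self := by intros; simp
  continuousOn_coordChange := by
    rintro c d ⟨y, v⟩ ⟨⟨⟨z, hz, hzy⟩, ⟨z', hz', hzy'⟩⟩, -⟩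
    dsimp only at hzy hzy'
    subst hzy
    obtain ⟨σ, rfl⟩ := (D.orb z z').1 hzy'.symm
    apply ContinuousAt.continuousWithinAt
    have h1 := D.trans_const hL hz hz'
    have h2 : ContinuousAt (fun p : Y × F => ((L (σ • z) d)⁻¹ * L z c) * p.2) (D.π z, v) :=
      (continuous_of_discreteTopology (f := fun v : F => ((L (σ • z) d)⁻¹ * L z c) * v)).continuousAt.comp
        continuousAt_snd
    refine h2.congr ?_
    filter_upwards [continuousAt_fst.eventually h1] with p hp
    rw [hp]
  coordChange_comp := by intros; group

theorem core_cov : IsCoveringMap (Bundle.TotalSpace.proj : Bundle.TotalSpace F (D.core hL).Fiber → Y) :=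
  FiberBundle.isCoveringMap

theorem core_cont {T : Type} [TopologicalSpace T] (f : T → Bundle.TotalSpace F (D.core hL).Fiber)
    (h1 : Continuous fun t => (f t).proj)
    (h2 : ∀ t0, ContinuousAt (fun t => (L (D.lift (D.sec (f t0).proj) (f t).proj) (D.sec (f t0).proj))⁻¹
      * (show F from (f t).snd)) t0) : Continuous f := by
  rw [continuous_iff_continuousAt]
  intro t0
  rw [FiberBundle.continuousAt_totalSpace]
  refine ⟨h1.continuousAt, ?_⟩
  refine (h2 t0).congr ?_
  filter_upwards with t
  change _ = ((D.core hL).localTrivAt (f t0).proj (f t)).2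
  rw [FiberBundleCore.localTrivAt_snd]
  change _ = _ * L (D.lift (D.sec (f t).proj) (f t).proj) (D.sec (f t).proj) * _
  rw [D.lift_eq (D.Nmem _) (D.π_sec _), hL.self, mul_one]
  rfl

/-- The point with fibre coordinate `u` over `y` in the bundle. -/
abbrev pt (y : Y) (u : F) : Bundle.TotalSpace F (D.core hL).Fiber := ⟨y, u⟩

/-- Monodromy along a path class, in the fibre coordinate. -/
def mono {a b : Y} (γ : Path.Homotopic.Quotient a b) (u : F) : F :=
  ((D.core_cov hL).monodromy γ ⟨D.pt hL a u, rfl⟩).1.snd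

theorem monodromy_eq {a b : Y} (γ : Path.Homotopic.Quotient a b) (u : F) :
    (D.core_cov hL).monodromy γ ⟨D.pt hL a u, rfl⟩ = ⟨D.pt hL b (D.mono hL γ u), rfl⟩ := by
  rcases h : (D.core_cov hL).monodromy γ ⟨D.pt hL a u, rfl⟩ with ⟨⟨y, v⟩, hy⟩
  have hy' : y = b := hy
  subst hy'
  have h2 : D.mono hL γ u = v := by rw [mono, h]
  rw [h2]

theorem mono_lift {a b : Y} (γ : Path a b) (f : C(unitInterval, Bundle.TotalSpace F (D.core hL).Fiber))
    (h : ∀ t, (f t).proj = γ t) (u v : F) (h0 : f 0 = D.pt hL a u) (h1 : f 1 = D.pt hL b v) :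
    D.mono hL (.mk γ) u = v := by
  let Γ : Path (D.pt hL a u) (D.pt hL b v) := ⟨f, h0, h1⟩
  have := (D.core_cov hL).monodromy_eq_of_map_eq (γ := .mk γ) (ex := ⟨D.pt hL a u, rfl⟩)
    (ey := ⟨D.pt hL b v, rfl⟩) (.mk Γ) (by
      refine congrArg Path.Homotopic.Quotient.mk ?_
      ext t
      exact h t)
  rw [mono, this]

theorem mono_trans {a b c : Y} (γ : Path.Homotopic.Quotient a b) (δ : Path.Homotopic.Quotient b c)
    (u : F) : D.mono hL (γ.trans δ) u = D.mono hL δ (D.mono hL γ u) := by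
  conv_lhs => rw [mono, IsCoveringMap.monodromy_trans_apply, monodromy_eq, monodromy_eq]

theorem mono_refl (a : Y) (u : F) : D.mono hL (.refl a) u = u := by
  rw [mono, IsCoveringMap.monodromy_refl]; rfl

/-- Right multiplication in the fibres, a deck transformation of the bundle. -/
def rmul (k : F) (e : Bundle.TotalSpace F (D.core hL).Fiber) :
    Bundle.TotalSpace F (D.core hL).Fiber := D.pt hL e.proj ((show F from e.snd) * k)

theorem mono_mul {a b : Y} (γ : Path.Homotopic.Quotient a b) (u k : F) :
    D.mono hL γ (u * k) = D.mono hL γ u * k := by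
  obtain ⟨γ, rfl⟩ := Path.Homotopic.Quotient.mk_surjective γ
  have e := D.monodromy_eq hL (.mk γ) u
  set v := D.mono hL (.mk γ) u
  -- the lifted path, translated on the right by `k`, is again a lift
  let f := (D.core_cov hL).liftPath γ (D.pt hL a u) γ.source
  have hf0 : f 0 = D.pt hL a u := (D.core_cov hL).liftPath_zero ..
  have hf1 : f 1 = D.pt hL b v := congrArg Subtype.val e
  have hf : ∀ t, (f t).proj = γ t := fun t => congrFun ((D.core_cov hL).liftPath_lifts ..) t
  have hc : Continuous (fun t => D.rmul hL k (f t)) := by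
    have hfc := f.continuous
    refine D.core_cont hL _ ?_ ?_
    · exact ((D.core_cov hL).continuous.comp hfc :)
    · intro t0
      have h3 := ((FiberBundle.continuousAt_totalSpace F f (x₀ := t0)).1 hfc.continuousAt).2
      have h4 := (continuous_of_discreteTopology (f := fun v : F => v * k)).continuousAt.comp h3
      refine h4.congr ?_
      filter_upwards with t
      change ((D.core hL).localTrivAt (f t0).proj (f t)).2 * k = _
      rw [FiberBundleCore.localTrivAt_snd]
      change _ * L (D.lift (D.sec (f t).proj) (f t).proj) (D.sec (f t).proj) * _ * k = _
      rw [D.lift_eq (D.Nmem _) (D.π_sec _), hL.self, mul_one]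
      exact mul_assoc (G := F) _ _ _
  refine D.mono_lift hL γ ⟨_, hc⟩ (fun t => hf t) _ _ ?_ ?_
  · change D.rmul hL k (f 0) = _
    rw [hf0]; rfl
  · change D.rmul hL k (f 1) = _
    rw [hf1]; rfl

theorem mono_R {c z : C} (γ : Path c z) (hγ : ∀ t, D.R c (γ t)) (u : F) :
    D.mono hL (.mk (γ.map D.cont)) u = L z c * u := by
  have hc : Continuous (fun t => D.pt hL (D.π (γ t)) (L (γ t) c * u)) := by
    refine D.core_cont hL _ (D.cont.comp γ.continuous) fun t0 => ?_
    obtain ⟨σ, hσ⟩ := (D.orb (γ t0) (D.sec (D.π (γ t0)))).1 (D.π_sec _).symm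
    have hev : ∀ᶠ t in 𝓝 t0, σ • γ t ∈ D.N (D.sec (D.π (γ t0))) := by
      refine ((D.act σ).comp γ.continuous).continuousAt.eventually
        ((D.Nopen _).mem_nhds ?_)
      change σ • γ t0 ∈ _
      rw [hσ]; exact D.Nmem _
    refine (continuousAt_const (y := L (γ t0) c * u)).congr ?_
    filter_upwards [hev] with t ht
    change _ = _ * (L (γ t) c * u)
    rw [D.lift_eq ht (D.π_smul _ _)]
    have hR := D.NR ht
    have hR' : D.R (γ t0) (γ t) := by
      have := D.equi σ⁻¹ hR
      rwa [← hσ, inv_smul_smul, inv_smul_smul] at this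
    rw [← hσ, hL.inv σ hR', ← hL.comp (hγ t0) hR']
    group
  refine D.mono_lift hL _ ⟨_, hc⟩ (fun t => rfl) _ _ ?_ ?_
  · simp [hL.self]
  · simp

end CSys

namespace CSys
variable {C Y S : Type} [TopologicalSpace C] [TopologicalSpace Y] [Group S] [MulAction S C]
  (D : CSys C Y S) {F : Type} [Group F] {L : C → C → F}

/-- Universality: monodromy of the bundle of a local system `L` is a homomorphism carrying the
transition elements `G` to `L` up to gauge. -/
theorem univ {x : Y} (p : ∀ y, Path x y) (hL : D.Local L) :
    ∃ (Φ : FundamentalGroup Y x →* F) (q : Y → F), ∀ c z, D.R c z →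
      Φ (D.G p z c) = q (D.π z) * L z c * (q (D.π c))⁻¹ := by
  let _ : TopologicalSpace F := ⊥
  have : DiscreteTopology F := ⟨rfl⟩
  have hm : ∀ {a b c : Y} (γ : Path.Homotopic.Quotient a b) (δ : Path.Homotopic.Quotient b c),
      D.mono hL (γ.trans δ) 1 = D.mono hL δ 1 * D.mono hL γ 1 := by
    intro a b c γ δ
    rw [mono_trans, ← mono_mul, one_mul]
  have hs : ∀ {a b : Y} (γ : Path.Homotopic.Quotient a b),
      D.mono hL γ.symm 1 = (D.mono hL γ 1)⁻¹ := by
    intro a b γ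
    apply eq_inv_of_mul_eq_one_left
    rw [← hm, Path.Homotopic.Quotient.trans_symm, mono_refl]
  refine ⟨⟨⟨fun g => D.mono hL (FundamentalGroup.toPath g) 1, mono_refl D hL x 1⟩,
    fun g h => hm (FundamentalGroup.toPath h) (FundamentalGroup.toPath g)⟩,
    fun y => (D.mono hL (.mk (p y)) 1)⁻¹, ?_⟩
  intro c z h
  rw [D.G_eq p h _ (D.ipath_mem h)]
  change D.mono hL (.mk (((p _).trans _).trans (p _).symm)) 1 = _
  rw [Path.Homotopic.Quotient.mk_trans, Path.Homotopic.Quotient.mk_trans, hm, hm,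
    Path.Homotopic.Quotient.mk_symm, hs, D.mono_R hL _ (fun t => (D.ipath_mem h t).1)]
  simp [mul_assoc]

end CSys

end

/-! ### Points of the realization and degenerations -/

section
section Real
variable {V : Type} [Fintype V] [DecidableEq V] {Γ : SimpleGraph V}

theorem real_nonneg (x : realization Γ) (v : V) : 0 ≤ x.1 v := by
  obtain ⟨x, hx⟩ := x
  simp only [realization, Set.mem_iUnion] at hx
  obtain ⟨a, b, hab, s, t, hs, ht, hst, rfl⟩ := hx
  simp only [Pi.add_apply, Pi.smul_apply, basisVec, smul_eq_mul]
  split_ifs <;> linarith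

theorem real_sum (x : realization Γ) : ∑ v, x.1 v = 1 := by
  obtain ⟨x, hx⟩ := x
  simp only [realization, Set.mem_iUnion] at hx
  obtain ⟨a, b, hab, s, t, hs, ht, hst, rfl⟩ := hx
  simp only [Pi.add_apply, Pi.smul_apply, basisVec, smul_eq_mul]
  simp [Finset.sum_add_distrib, hst]

/-- Every point lies on an edge. -/
theorem real_edge (x : realization Γ) : ∃ a b, Γ.Adj a b ∧ ∀ v, x.1 v ≠ 0 → v = a ∨ v = b := by
  obtain ⟨x, hx⟩ := x
  simp only [realization, Set.mem_iUnion] at hx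
  obtain ⟨a, b, hab, s, t, hs, ht, hst, rfl⟩ := hx
  refine ⟨a, b, hab, fun v hv => ?_⟩
  by_contra h
  push Not at h
  exact hv (by simp [basisVec, h.1, h.2])

theorem real_mk {f : V → ℝ} (h0 : ∀ v, 0 ≤ f v) (h1 : ∑ v, f v = 1) {a b : V} (hab : Γ.Adj a b)
    (hs : ∀ v, f v ≠ 0 → v = a ∨ v = b) : f ∈ realization Γ := by
  simp only [realization, Set.mem_iUnion]
  refine ⟨a, b, hab, f a, f b, h0 a, h0 b, ?_, ?_⟩
  · rw [← h1]
    have : ∑ v, f v = ∑ v ∈ {a, b}, f v := by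
      symm
      apply Finset.sum_subset (Finset.subset_univ _)
      intro v _ hv
      by_contra h
      exact hv (by simpa using hs v h)
    rw [this, Finset.sum_pair hab.ne]
  · funext v
    simp only [Pi.add_apply, Pi.smul_apply, basisVec, smul_eq_mul]
    by_cases hva : v = a
    · subst hva; simp [hab.ne]
    · by_cases hvb : v = b
      · subst hvb; simp [hva]
      · simp only [hva, hvb, if_false]
        by_contra h
        rcases hs v (fun h' => h (by simp [h'])) with h | h <;> contradiction

theorem real_pair (x : realization Γ) {a b : V} (hab : a ≠ b)
    (hs : ∀ v, x.1 v ≠ 0 → v = a ∨ v = b) : x.1 a + x.1 b = 1 := by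
  rw [← real_sum x]
  have : ∑ v, x.1 v = ∑ v ∈ {a, b}, x.1 v := by
    symm
    apply Finset.sum_subset (Finset.subset_univ _)
    intro v _ hv
    by_contra h
    exact hv (by simpa using hs v h)
  rw [this, Finset.sum_pair hab]

theorem real_ne (x : realization Γ) : ∃ v, x.1 v ≠ 0 := by
  by_contra h
  push Not at h
  have := real_sum x
  simp [h] at this

/-- A point is determined by one positive coordinate and a pair of vertices carrying it. -/
theorem real_eq {x y : realization Γ} {a b : V} (hab : a ≠ b)
    (hx : ∀ v, x.1 v ≠ 0 → v = a ∨ v = b) (hy : ∀ v, y.1 v ≠ 0 → v = a ∨ v = b)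
    (h : x.1 a = y.1 a) : x = y := by
  have h1 := real_pair x hab hx
  have h2 := real_pair y hab hy
  apply Subtype.ext
  funext v
  by_cases hva : v = a
  · rw [hva, h]
  · by_cases hvb : v = b
    · rw [hvb]; linarith
    · rw [not_ne_iff.1 fun h => (hx v h).elim hva hvb, not_ne_iff.1 fun h => (hy v h).elim hva hvb]

theorem real_eq' {x y : realization Γ} (hs : ∀ v, x.1 v = 0 ↔ y.1 v = 0) {u : V}
    (hu : x.1 u ≠ 0) (h : x.1 u = y.1 u) : x = y := by
  obtain ⟨a, b, hab, hx⟩ := real_edge x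
  have hy : ∀ v, y.1 v ≠ 0 → v = a ∨ v = b := fun v hv => hx v fun h' => hv ((hs v).1 h')
  rcases hx u hu with rfl | rfl
  · exact real_eq hab.ne hx hy h
  · exact real_eq hab.ne.symm (fun v hv => (hx v hv).symm) (fun v hv => (hy v hv).symm) h

/-- Two points supported in a common set with at most one element coincide. -/
theorem real_sub {x y : realization Γ} {s : Set V} (hs : s.Subsingleton)
    (hx : ∀ v, x.1 v ≠ 0 → v ∈ s) (hy : ∀ v, y.1 v ≠ 0 → v ∈ s) : x = y := by
  obtain ⟨u, hu⟩ := real_ne x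
  have h1 : ∀ z : realization Γ, (∀ v, z.1 v ≠ 0 → v ∈ s) → ∀ v, z.1 v = if v = u then 1 else 0 := by
    intro z hz v
    have h0 : ∀ v, v ≠ u → z.1 v = 0 := fun v hv => by
      by_contra h
      exact hv (hs (hz v h) (hx u hu))
    split_ifs with h
    · rw [h, ← real_sum z, Finset.sum_eq_single u (fun v _ hv => h0 v hv) (by simp)]
    · exact h0 v h
  apply Subtype.ext
  funext v
  rw [h1 x hx, h1 y hy]

theorem real_supp {x y : realization Γ} (h : ¬ ∀ v, x.1 v = 0 ↔ y.1 v = 0) :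
    {v | x.1 v ≠ 0 ∧ y.1 v ≠ 0}.Subsingleton := by
  obtain ⟨a, b, hab, hx⟩ := real_edge x
  obtain ⟨a', b', hab', hy⟩ := real_edge y
  rintro u ⟨hu, hu'⟩ v ⟨hv, hv'⟩
  by_contra huv
  apply h
  intro w
  have hwx : x.1 w ≠ 0 → w = u ∨ w = v := fun hw => by
    rcases hx w hw with rfl | rfl <;> rcases hx u hu with rfl | rfl <;>
      rcases hx v hv with rfl | rfl <;> simp_all
  have hwy : y.1 w ≠ 0 → w = u ∨ w = v := fun hw => by
    rcases hy w hw with rfl | rfl <;> rcases hy u hu' with rfl | rfl <;>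
      rcases hy v hv' with rfl | rfl <;> simp_all
  constructor
  · intro h0
    by_contra h1
    rcases hwy h1 with rfl | rfl <;> contradiction
  · intro h0
    by_contra h1
    rcases hwx h1 with rfl | rfl <;> contradiction

end Real

/-- Ordered configurations of three points on the realization of `Γ`. -/
abbrev CC {V : Type} [DecidableEq V] (Γ : SimpleGraph V) : Type := Conf 3 (realization Γ)

section CC
variable {V : Type} [Fintype V] [DecidableEq V] {Γ : SimpleGraph V}

/-- `Deg c z`: each point of `c` lies in the closed cell of the corresponding point of `z`, and
points of `z` in a common cell keep their (weak) order. -/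
structure Deg (c z : CC Γ) : Prop where
  supp : ∀ i v, (z.1 i).1 v = 0 → (c.1 i).1 v = 0
  ord : ∀ i j v, (∀ u, (z.1 i).1 u = 0 ↔ (z.1 j).1 u = 0) → (z.1 i).1 v ≤ (z.1 j).1 v →
    (c.1 i).1 v ≤ (c.1 j).1 v

theorem Deg.refl (c : CC Γ) : Deg c c := ⟨fun _ _ h => h, fun _ _ _ _ h => h⟩

theorem Deg.trans {c d z : CC Γ} (h : Deg c d) (h' : Deg d z) : Deg c z := by
  refine ⟨fun i v hv => h.supp i v (h'.supp i v hv), fun i j v hs hv => ?_⟩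
  by_cases hd : ∀ u, (d.1 i).1 u = 0 ↔ (d.1 j).1 u = 0
  · exact h.ord i j v hd (h'.ord i j v hs hv)
  have hdv := h'.ord i j v hs hv
  by_cases hi : (d.1 i).1 v = 0
  · rw [h.supp i v hi]; exact real_nonneg _ _
  have hj : (d.1 j).1 v ≠ 0 := by
    have := (real_nonneg (d.1 i) v).lt_of_ne' hi
    linarith
  have hz : (z.1 i).1 v ≠ 0 := fun h0 => hi (h'.supp i v h0)
  -- `v` is one end of the common edge; the other end is missing from the support of `d j`
  obtain ⟨a, b, hab, hx⟩ := real_edge (z.1 i)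
  obtain ⟨w, hvw, hzw⟩ : ∃ w, v ≠ w ∧ ∀ u, (z.1 i).1 u ≠ 0 → u = v ∨ u = w := by
    rcases hx v hz with rfl | rfl
    · exact ⟨b, hab.ne, hx⟩
    · exact ⟨a, hab.ne.symm, fun u hu => (hx u hu).symm⟩
  have hdi : ∀ u, (d.1 i).1 u ≠ 0 → u = v ∨ u = w := fun u hu =>
    hzw u fun h0 => hu (h'.supp i u h0)
  have hdj : ∀ u, (d.1 j).1 u ≠ 0 → u = v ∨ u = w := fun u hu =>
    hzw u fun h0 => hu (h'.supp j u ((hs u).1 h0))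
  have hci : ∀ u, (c.1 i).1 u ≠ 0 → u = v ∨ u = w := fun u hu =>
    hdi u fun h0 => hu (h.supp i u h0)
  have hcj : ∀ u, (c.1 j).1 u ≠ 0 → u = v ∨ u = w := fun u hu =>
    hdj u fun h0 => hu (h.supp j u h0)
  have h1 := real_pair _ hvw hci
  have h2 := real_pair _ hvw hcj
  have h3 := real_pair _ hvw hdi
  have h4 := real_pair _ hvw hdj
  have hw : (d.1 j).1 w = 0 := by
    by_contra hw
    apply hd
    intro u
    have hiw : (d.1 i).1 w ≠ 0 := by
      have := (real_nonneg (d.1 j) w).lt_of_ne' hw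
      linarith
    by_cases hu : u = v
    · subst hu; simp [hi, hj]
    by_cases hu' : u = w
    · subst hu'; simp [hw, hiw]
    · rw [not_ne_iff.1 fun h => (hdi u h).elim hu hu', not_ne_iff.1 fun h => (hdj u h).elim hu hu']
  have := h.supp j w hw
  have := real_nonneg (c.1 i) w
  linarith

/-- The underlying point of `ℝ^(3 × V)`. -/
def amb (c : CC Γ) : Fin 3 → V → ℝ := fun i => (c.1 i).1

theorem amb_emb : Topology.IsEmbedding (amb : CC Γ → Fin 3 → V → ℝ) := by
  have h1 : Topology.IsEmbedding (fun f : Fin 3 → realization Γ => fun i => (f i).1) :=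
    Topology.IsEmbedding.piMap fun _ => Topology.IsEmbedding.subtypeVal
  exact h1.comp Topology.IsEmbedding.subtypeVal

theorem real_mix (z : realization Γ) {x y : V → ℝ} (hx : x ∈ realization Γ) (hy : y ∈ realization Γ)
    (hx' : ∀ v, z.1 v = 0 → x v = 0) (hy' : ∀ v, z.1 v = 0 → y v = 0) {s t : ℝ} (hs : 0 ≤ s)
    (ht : 0 ≤ t) (hst : s + t = 1) : s • x + t • y ∈ realization Γ := by
  obtain ⟨a, b, hab, hz⟩ := real_edge z
  refine real_mk (a := a) (b := b) (fun v => ?_) ?_ hab ?_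
  · have := real_nonneg ⟨x, hx⟩ v
    have := real_nonneg ⟨y, hy⟩ v
    simp only [Pi.add_apply, Pi.smul_apply, smul_eq_mul]
    positivity
  · have h1 := real_sum ⟨x, hx⟩
    have h2 := real_sum ⟨y, hy⟩
    simp only at h1 h2
    simp [Finset.sum_add_distrib, ← Finset.mul_sum, h1, h2, hst]
  · intro v hv
    apply hz
    intro h0
    exact hv (by simp [hx' v h0, hy' v h0])

theorem interval_convex {c z : CC Γ} (hcz : Deg c z) :
    Convex ℝ (amb '' {w | Deg c w ∧ Deg w z}) := by
  rintro _ ⟨w, ⟨hcw, hwz⟩, rfl⟩ _ ⟨w', ⟨hcw', hwz'⟩, rfl⟩ s t hs ht hst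
  rcases hs.eq_or_lt with rfl | hs0
  · obtain rfl : t = 1 := by linarith
    exact ⟨w', ⟨hcw', hwz'⟩, by simp⟩
  have hreal : ∀ i, s • amb w i + t • amb w' i ∈ realization Γ := fun i =>
    real_mix (z.1 i) (w.1 i).2 (w'.1 i).2 (hwz.supp i) (hwz'.supp i) hs ht hst
  let m : Fin 3 → realization Γ := fun i => ⟨s • amb w i + t • amb w' i, hreal i⟩
  have hm : ∀ i v, (m i).1 v = s * (w.1 i).1 v + t * (w'.1 i).1 v := fun i v => rfl
  have hz0 : ∀ i v, (m i).1 v = 0 → (w.1 i).1 v = 0 := by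
    intro i v h
    rw [hm] at h
    have h1 := real_nonneg (w.1 i) v
    have h2 := mul_nonneg ht (real_nonneg (w'.1 i) v)
    have h3 := mul_nonneg hs h1
    have : s * (w.1 i).1 v = 0 := by linarith
    rcases mul_eq_zero.1 this with h | h
    · linarith
    · exact h
  have hmz : ∀ i v, (z.1 i).1 v = 0 → (m i).1 v = 0 := by
    intro i v h
    rw [hm, hwz.supp i v h, hwz'.supp i v h]; ring
  have hmo : ∀ i j v, (∀ u, (z.1 i).1 u = 0 ↔ (z.1 j).1 u = 0) → (z.1 i).1 v ≤ (z.1 j).1 v →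
      (m i).1 v ≤ (m j).1 v := by
    intro i j v h h'
    rw [hm, hm]
    have := mul_le_mul_of_nonneg_left (hwz.ord i j v h h') hs
    have := mul_le_mul_of_nonneg_left (hwz'.ord i j v h h') ht
    linarith
  have hinj : Function.Injective m := by
    intro i j hij
    apply w.2
    by_cases h : ∀ u, (z.1 i).1 u = 0 ↔ (z.1 j).1 u = 0
    · apply Subtype.ext
      funext v
      have e : (m i).1 v = (m j).1 v := by rw [hij]
      rw [hm, hm] at e
      have key : s * ((w.1 i).1 v - (w.1 j).1 v) = 0 := by
        rcases le_total ((z.1 i).1 v) ((z.1 j).1 v) with h' | h'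
        · have := mul_le_mul_of_nonneg_left (hwz.ord i j v h h') hs
          have := mul_le_mul_of_nonneg_left (hwz'.ord i j v h h') ht
          linarith
        · have := mul_le_mul_of_nonneg_left (hwz.ord j i v (fun u => (h u).symm) h') hs
          have := mul_le_mul_of_nonneg_left (hwz'.ord j i v (fun u => (h u).symm) h') ht
          linarith
      rcases mul_eq_zero.1 key with h | h <;> linarith
    · refine real_sub (real_supp h) (fun v hv => ?_) (fun v hv => ?_)
      · have h1 : (m i).1 v ≠ 0 := fun h0 => hv (hz0 i v h0)
        exact ⟨fun h0 => h1 (hmz i v h0), fun h0 => h1 (by rw [hij]; exact hmz j v h0)⟩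
      · have h1 : (m j).1 v ≠ 0 := fun h0 => hv (hz0 j v h0)
        exact ⟨fun h0 => h1 (by rw [← hij]; exact hmz i v h0), fun h0 => h1 (hmz j v h0)⟩
  refine ⟨⟨m, hinj⟩, ⟨⟨fun i v h => hcw.supp i v (hz0 i v h), ?_⟩, ⟨hmz, hmo⟩⟩, rfl⟩
  intro i j v hs' hv
  change (m i).1 v ≤ (m j).1 v at hv
  change ∀ u, (m i).1 u = 0 ↔ (m j).1 u = 0 at hs'
  by_cases h : ∀ u, (z.1 i).1 u = 0 ↔ (z.1 j).1 u = 0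
  · rcases le_total ((z.1 i).1 v) ((z.1 j).1 v) with h' | h'
    · exact hcz.ord i j v h h'
    · have e := le_antisymm hv (hmo j i v (fun u => (h u).symm) h')
      by_cases h0 : (m i).1 v = 0
      · have hj0 : (m j).1 v = 0 := by rw [← e, h0]
        rw [hcw.supp i v (hz0 i v h0), hcw.supp j v (hz0 j v hj0)]
      · rw [hinj (real_eq' hs' h0 e)]
  · have : m i = m j := by
      refine real_sub (real_supp h) (fun v hv => ?_) (fun v hv => ?_)
      · exact ⟨fun h0 => hv (hmz i v h0), fun h0 => hv ((hs' v).2 (hmz j v h0))⟩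
      · exact ⟨fun h0 => hv ((hs' v).1 (hmz i v h0)), fun h0 => hv (hmz j v h0)⟩
    rw [hinj this]

theorem interval_sc {c z : CC Γ} (hcz : Deg c z) : IsSimplyConnected {w | Deg c w ∧ Deg w z} := by
  rw [← amb_emb.isSimplyConnected_image]
  have := (interval_convex hcz).contractibleSpace ⟨_, ⟨c, ⟨Deg.refl c, hcz⟩, rfl⟩⟩
  exact SimplyConnectedSpace.ofContractible _

end CC

end

/-! ### The configuration space as a degeneration system -/

section
section CC
variable {V : Type} [Fintype V] [DecidableEq V] {Γ : SimpleGraph V}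

/-- Permutations act on ordered configurations by relabelling the points. -/
instance permAct {X : Type} [TopologicalSpace X] : MulAction (Equiv.Perm (Fin 3)) (Conf 3 X) where
  smul σ f := ⟨f.1 ∘ σ.symm, f.2.comp σ.symm.injective⟩
  one_smul _ := rfl
  mul_smul _ _ _ := rfl

theorem smul_val {X : Type} [TopologicalSpace X] (σ : Equiv.Perm (Fin 3)) (f : Conf 3 X)
    (i : Fin 3) : (σ • f).1 i = f.1 (σ.symm i) := rfl

theorem smul_cont {X : Type} [TopologicalSpace X] (σ : Equiv.Perm (Fin 3)) :
    Continuous (fun f : Conf 3 X => σ • f) := by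
  refine Continuous.subtype_mk ?_ _
  refine continuous_pi fun i => ?_
  exact (continuous_apply (σ.symm i)).comp continuous_subtype_val

theorem mk_eq_iff {X : Type} [TopologicalSpace X] (f g : Conf 3 X) :
    (Quot.mk (permRel 3 X) f = Quot.mk (permRel 3 X) g) ↔ ∃ σ : Equiv.Perm (Fin 3), σ • f = g := by
  have heq : Equivalence (permRel 3 X) := by
    refine ⟨fun f => ⟨1, rfl⟩, ?_, ?_⟩
    · rintro f g ⟨σ, h⟩
      exact ⟨σ.symm, by rw [h]; funext i; simp⟩
    · rintro f g k ⟨σ, h⟩ ⟨τ, h'⟩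
      exact ⟨τ * σ, by rw [h, h']; rfl⟩
  rw [heq.quot_mk_eq_iff]
  constructor
  · rintro ⟨σ, h⟩
    refine ⟨σ, Subtype.ext (funext fun i => ?_)⟩
    rw [smul_val, h]; simp
  · rintro ⟨σ, rfl⟩
    exact ⟨σ, funext fun i => by simp [smul_val]⟩

theorem mk_open {X : Type} [TopologicalSpace X] : IsOpenMap (Quot.mk (permRel 3 X)) := by
  intro U hU
  have : IsOpen (Quot.mk (permRel 3 X) ⁻¹' (Quot.mk (permRel 3 X) '' U)) := by
    have e : Quot.mk (permRel 3 X) ⁻¹' (Quot.mk (permRel 3 X) '' U) =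
        ⋃ σ : Equiv.Perm (Fin 3), (fun f => σ • f) ⁻¹' U := by
      ext f
      simp only [Set.mem_preimage, Set.mem_image, Set.mem_iUnion]
      constructor
      · rintro ⟨g, hg, h⟩
        obtain ⟨σ, rfl⟩ := (mk_eq_iff f g).1 h.symm
        exact ⟨σ, hg⟩
      · rintro ⟨σ, h⟩
        exact ⟨_, h, ((mk_eq_iff _ _).2 ⟨σ, rfl⟩).symm⟩
    rw [e]
    exact isOpen_iUnion fun σ => hU.preimage (smul_cont σ)
  exact this

theorem exists_eps (c : CC Γ) : ∃ ε : ℝ, 0 < ε ∧ (∀ i v, (c.1 i).1 v ≠ 0 → ε ≤ (c.1 i).1 v) ∧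
    ∀ i j v, (c.1 i).1 v ≠ (c.1 j).1 v → 2 * ε ≤ |(c.1 i).1 v - (c.1 j).1 v| := by
  have h1 : ∃ ε : ℝ, 0 < ε ∧ ∀ p : Fin 3 × V, (c.1 p.1).1 p.2 ≠ 0 → ε ≤ (c.1 p.1).1 p.2 := by
    have : ∀ᶠ ε in nhdsWithin (0:ℝ) (Set.Ioi 0), ∀ p : Fin 3 × V, (c.1 p.1).1 p.2 ≠ 0 → ε ≤ (c.1 p.1).1 p.2 := by
      rw [Filter.eventually_all]
      intro p
      by_cases h : (c.1 p.1).1 p.2 = 0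
      · exact Filter.Eventually.of_forall fun _ h' => absurd h h'
      · have := (real_nonneg (c.1 p.1) p.2).lt_of_ne' h
        filter_upwards [nhdsWithin_le_nhds (Iic_mem_nhds this)] with ε hε _ using hε
    obtain ⟨ε, h, h'⟩ := (this.and self_mem_nhdsWithin).exists
    exact ⟨ε, h', h⟩
  have h2 : ∃ ε : ℝ, 0 < ε ∧ ∀ p : Fin 3 × Fin 3 × V, (c.1 p.1).1 p.2.2 ≠ (c.1 p.2.1).1 p.2.2 →
      2 * ε ≤ |(c.1 p.1).1 p.2.2 - (c.1 p.2.1).1 p.2.2| := by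
    have : ∀ᶠ ε in nhdsWithin (0:ℝ) (Set.Ioi 0), ∀ p : Fin 3 × Fin 3 × V,
        (c.1 p.1).1 p.2.2 ≠ (c.1 p.2.1).1 p.2.2 →
      2 * ε ≤ |(c.1 p.1).1 p.2.2 - (c.1 p.2.1).1 p.2.2| := by
      rw [Filter.eventually_all]
      intro p
      by_cases h : (c.1 p.1).1 p.2.2 = (c.1 p.2.1).1 p.2.2
      · exact Filter.Eventually.of_forall fun _ h' => absurd h h'
      · have := abs_pos.2 (sub_ne_zero.2 h)
        filter_upwards [nhdsWithin_le_nhds (Iic_mem_nhds (half_pos this))] with ε hε _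
        have : ε ≤ _ := hε
        linarith
    obtain ⟨ε, h, h'⟩ := (this.and self_mem_nhdsWithin).exists
    exact ⟨ε, h', h⟩
  obtain ⟨ε, h0, h⟩ := h1
  obtain ⟨δ, h0', h'⟩ := h2
  refine ⟨min ε δ, lt_min h0 h0', fun i v hv => (min_le_left _ _).trans (h (i, v) hv),
    fun i j v hv => ?_⟩
  have := h' (i, j, v) hv
  have := min_le_right ε δ
  simp only at *
  linarith

/-- A radius smaller than the nonzero coordinates of `c` and than half the differences of distinct
coordinates. -/
def eps (c : CC Γ) : ℝ := (exists_eps c).choose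
theorem eps_pos (c : CC Γ) : 0 < eps c := (exists_eps c).choose_spec.1
theorem eps_le (c : CC Γ) : ∀ i v, (c.1 i).1 v ≠ 0 → eps c ≤ (c.1 i).1 v :=
  (exists_eps c).choose_spec.2.1
theorem eps_sep (c : CC Γ) :
    ∀ i j v, (c.1 i).1 v ≠ (c.1 j).1 v → 2 * eps c ≤ |(c.1 i).1 v - (c.1 j).1 v| :=
  (exists_eps c).choose_spec.2.2

/-- A small neighbourhood of the configuration `c`. -/
def Nb (c : CC Γ) : Set (CC Γ) := {z | ∀ i v, |(z.1 i).1 v - (c.1 i).1 v| < eps c}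

theorem Nb_open (c : CC Γ) : IsOpen (Nb c) := by
  simp only [Nb, Set.ofPred_forall]
  refine isOpen_iInter_of_finite fun i => isOpen_iInter_of_finite fun v => ?_
  have h : Continuous fun z : CC Γ => (z.1 i).1 v :=
    (continuous_apply v).comp (continuous_subtype_val.comp
      ((continuous_apply i).comp continuous_subtype_val))
  exact isOpen_lt (h.sub continuous_const).abs continuous_const

theorem Nb_mem (c : CC Γ) : c ∈ Nb c := fun i v => by simpa using eps_pos c

theorem Nb_deg {c z : CC Γ} (h : z ∈ Nb c) : Deg c z := by
  refine ⟨fun i v hv => ?_, fun i j v _ hv => ?_⟩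
  · by_contra h0
    have h1 := eps_le c i v h0
    have h2 := h i v
    rw [hv, zero_sub, abs_neg, abs_of_nonneg (real_nonneg _ _)] at h2
    linarith
  · by_contra h0
    push Not at h0
    have h1 := eps_sep c i j v h0.ne'
    rw [abs_of_pos (sub_pos.2 h0)] at h1
    have h2 := abs_lt.1 (h i v)
    have h3 := abs_lt.1 (h j v)
    linarith [h2.1, h3.2]

theorem Nb_star (c : CC Γ) : StarConvex ℝ (amb c) (amb '' Nb c) := by
  rintro _ ⟨z, hz, rfl⟩ s t hs ht hst
  obtain ⟨w, -, hw⟩ := interval_convex (Nb_deg hz) ⟨c, ⟨Deg.refl c, Nb_deg hz⟩, rfl⟩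
    ⟨z, ⟨Nb_deg hz, Deg.refl z⟩, rfl⟩ hs ht hst
  refine ⟨w, fun i v => ?_, hw⟩
  have e : (w.1 i).1 v = s * (c.1 i).1 v + t * (z.1 i).1 v := congrFun (congrFun hw i) v
  have e2 : (w.1 i).1 v - (c.1 i).1 v = t * ((z.1 i).1 v - (c.1 i).1 v) := by
    rw [e]; linear_combination hst * (c.1 i).1 v
  rw [e2, abs_mul, abs_of_nonneg ht]
  have h1 := hz i v
  have h2 := abs_nonneg ((z.1 i).1 v - (c.1 i).1 v)
  nlinarith

theorem Nb_sc (c : CC Γ) : IsSimplyConnected (Nb c) := by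
  rw [← amb_emb.isSimplyConnected_image]
  have := (Nb_star c).contractibleSpace ⟨_, ⟨c, Nb_mem c, rfl⟩⟩
  exact SimplyConnectedSpace.ofContractible _

theorem deg_smul (σ : Equiv.Perm (Fin 3)) {c z : CC Γ} (h : Deg c z) : Deg (σ • c) (σ • z) :=
  ⟨fun i v hv => h.supp _ v hv, fun i j v h1 h2 => h.ord _ _ v h1 h2⟩

theorem Nb_inj (c : CC Γ) : Set.InjOn (Quot.mk (permRel 3 (realization Γ))) (Nb c) := by
  intro z hz z' hz' h
  obtain ⟨σ, rfl⟩ := (mk_eq_iff _ _).1 h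
  have : ∀ i, σ.symm i = i := by
    intro i
    apply c.2
    apply Subtype.ext
    funext v
    by_contra hne
    have h1 := eps_sep c _ _ v hne
    have h2 := abs_lt.1 (hz (σ.symm i) v)
    have h3 := abs_lt.1 (hz' i v)
    rw [smul_val] at h3
    have : |(c.1 (σ.symm i)).1 v - (c.1 i).1 v| < 2 * eps c := by
      rw [abs_lt]; constructor <;> linarith [h2.1, h2.2, h3.1, h3.2]
    linarith
  refine Subtype.ext (funext fun i => ?_)
  rw [smul_val, this]

theorem Nb_join {c z : CC Γ} (h : z ∈ Nb c) :
    JoinedIn (Nb c ∩ {w | Deg c w ∧ Deg w z}) c z := by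
  have h1 : JoinedIn (amb '' (Nb c ∩ {w | Deg c w ∧ Deg w z})) (amb c) (amb z) := by
    apply JoinedIn.of_segment_subset
    intro x hx
    have hs : x ∈ amb '' Nb c := (Nb_star c).segment_subset ⟨z, h, rfl⟩ hx
    have hi : x ∈ amb '' {w | Deg c w ∧ Deg w z} := (interval_convex (Nb_deg h)).segment_subset
      ⟨c, ⟨Deg.refl c, Nb_deg h⟩, rfl⟩ ⟨z, ⟨Nb_deg h, Deg.refl z⟩, rfl⟩ hx
    obtain ⟨a, ha, rfl⟩ := hs
    obtain ⟨b, hb, hab⟩ := hi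
    obtain rfl := amb_emb.injective hab
    exact ⟨b, ⟨ha, hb⟩, rfl⟩
  have hc : c ∈ Nb c ∩ {w | Deg c w ∧ Deg w z} := ⟨Nb_mem c, Deg.refl c, Nb_deg h⟩
  have hz : z ∈ Nb c ∩ {w | Deg c w ∧ Deg w z} := ⟨h, Nb_deg h, Deg.refl z⟩
  exact (amb_emb.isInducing.joinedIn_image hc hz).1 h1

/-- Three-point configurations on a graph, with the degeneration preorder. -/
def csys (Γ : SimpleGraph V) : CSys (CC Γ) (UConf 3 (realization Γ)) (Equiv.Perm (Fin 3)) where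
  π := Quot.mk _
  cont := continuous_quot_mk
  opn := mk_open
  surj := Quot.mk_surjective
  orb := mk_eq_iff
  act := smul_cont
  R := Deg
  refl := Deg.refl
  trans := Deg.trans
  equi := deg_smul
  Isc := interval_sc
  N := Nb
  Nopen := Nb_open
  Nmem := Nb_mem
  Nsc := Nb_sc
  Ninj := Nb_inj
  NR := Nb_deg
  Njoin := Nb_join

end CC

end

/-! ### Labels of degenerations -/

section
open Sum

section Cells
variable {V E F : Type} [Group F] {inc : V → E → Prop} {g : V → E → V ⊕ E → V ⊕ E → F}

/-- `CDeg a a'`: the cell `a'` is `a` or an end vertex of the edge `a`. -/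
def CDeg (inc : V → E → Prop) (a a' : V ⊕ E) : Prop :=
  a = a' ∨ ∃ v h, a = inr h ∧ a' = inl v ∧ inc v h

/-- The label of moving one particle from the cell `a` to `a'` while the others sit at `x, y`. -/
def ell (g : V → E → V ⊕ E → V ⊕ E → F) : V ⊕ E → V ⊕ E → V ⊕ E → V ⊕ E → F
  | inr h, inl v, x, y => g v h x y
  | _, _, _, _ => 1

@[simp] theorem ell_self (a x y : V ⊕ E) : ell g a a x y = 1 := by cases a <;> rfl
@[simp] theorem ell_move (h : E) (v : V) (x y : V ⊕ E) : ell g (inr h) (inl v) x y = g v h x y := rfl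

theorem ell_symm (hg : Flat inc g) (a a' x y : V ⊕ E) : ell g a a' x y = ell g a a' y x := by
  cases a <;> cases a' <;> simp [ell, hg.symm]

/-- The three cells do not contain a repeated vertex. -/
def Apart (a b : V ⊕ E) : Prop := ∀ v, a = inl v → b ≠ inl v

theorem Apart.symm {a b : V ⊕ E} (h : Apart a b) : Apart b a := fun v h1 h2 => h v h2 h1

theorem ell_comm (hg : Flat inc g) {a a' b b' x : V ⊕ E} (ha : CDeg inc a a') (hb : CDeg inc b b')
    (h1 : Apart a' b') (h2 : Apart a' x) (h3 : Apart b' x) :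
    ell g a a' b x * ell g b b' a' x = ell g b b' a x * ell g a a' b' x := by
  rcases ha with rfl | ⟨v, h, rfl, rfl, hv⟩
  · simp
  rcases hb with rfl | ⟨w, k, rfl, rfl, hw⟩
  · simp
  simp only [ell_move]
  have := hg.sq v h w k x (fun e => h1 v rfl (by rw [e])) hv hw (h2 v rfl) (h3 w rfl)
  rw [hg.symm v h (inr k), hg.symm w k (inl v), this, hg.symm w k x, hg.symm v h x]

theorem ell_comp {a b c x y : V ⊕ E} (ha : CDeg inc a b) (hb : CDeg inc b c) :
    ell g a b x y * ell g b c x y = ell g a c x y := by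
  rcases ha with rfl | ⟨v, h, rfl, rfl, hv⟩
  · simp
  rcases hb with rfl | ⟨w, k, e, rfl, hw⟩
  · simp
  · cases e

/-- The label of a degeneration of triples of cells. -/
def Lc (g : V → E → V ⊕ E → V ⊕ E → F) (z c : Fin 3 → V ⊕ E) : F :=
  ell g (z 0) (c 0) (z 1) (z 2) * ell g (z 1) (c 1) (c 0) (z 2) * ell g (z 2) (c 2) (c 0) (c 1)

theorem CDeg.vert {v : V} {a : V ⊕ E} (h : CDeg inc (inl v) a) : a = inl v := by
  rcases h with h | ⟨_, _, h, _⟩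
  · exact h.symm
  · cases h

theorem Apart.mono {a a' b b' : V ⊕ E} (ha : CDeg inc a a') (hb : CDeg inc b b') (h : Apart a' b') :
    Apart a b := by
  rintro v rfl rfl
  exact h v ha.vert hb.vert

theorem CDeg.trans {a b c : V ⊕ E} (ha : CDeg inc a b) (hb : CDeg inc b c) : CDeg inc a c := by
  rcases ha with rfl | ⟨v, h, rfl, rfl, hv⟩
  · exact hb
  · rw [hb.vert]; exact Or.inr ⟨v, h, rfl, rfl, hv⟩

theorem CDeg.rfl {a : V ⊕ E} : CDeg inc a a := Or.inl (Eq.refl _)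

theorem Lc_comp (hg : Flat inc g) {z d c : Fin 3 → V ⊕ E} (hzd : ∀ i, CDeg inc (z i) (d i))
    (hdc : ∀ i, CDeg inc (d i) (c i)) (hc : ∀ i j, i ≠ j → Apart (c i) (c j)) :
    Lc g z d * Lc g d c = Lc g z c := by
  have hd : ∀ i j, i ≠ j → Apart (d i) (d j) := fun i j h => (hc i j h).mono (hdc i) (hdc j)
  have hcd : ∀ i j, i ≠ j → Apart (c i) (d j) := fun i j h => (hc i j h).mono .rfl (hdc j)
  have hcz : ∀ i j, i ≠ j → Apart (c i) (z j) := fun i j h => (hcd i j h).mono .rfl (hzd j)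
  have hdz : ∀ i j, i ≠ j → Apart (d i) (z j) := fun i j h => (hd i j h).mono .rfl (hzd j)
  have e1 := ell_comm hg (hzd 2) (hdc 0) (x := d 1) (hcd 0 2 (by decide)).symm (hd 2 1 (by decide))
    (hcd 0 1 (by decide))
  have e2 := ell_comm hg (hzd 1) (hdc 0) (x := z 2) (hcd 0 1 (by decide)).symm (hdz 1 2 (by decide))
    (hcz 0 2 (by decide))
  have e3 := ell_comm hg (hzd 2) (hdc 1) (x := c 0) (hcd 1 2 (by decide)).symm (hcd 0 2 (by decide)).symm
    (hc 1 0 (by decide))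
  have c0 := ell_comp (g := g) (x := z 1) (y := z 2) (hzd 0) (hdc 0)
  have c1 := ell_comp (g := g) (x := c 0) (y := z 2) (hzd 1) (hdc 1)
  have c2 := ell_comp (g := g) (x := c 0) (y := c 1) (hzd 2) (hdc 2)
  rw [ell_symm hg _ _ (d 2) (d 1), ell_symm hg (d 0) (c 0) (z 2)] at e1
  rw [ell_symm hg _ _ (d 1) (c 0), ell_symm hg _ _ (d 2) (c 0), ell_symm hg _ _ (z 2) (c 0),
    ell_symm hg _ _ (c 1) (c 0)] at e3
  unfold Lc
  calc _ = ell g (z 0) (d 0) (z 1) (z 2) * ell g (z 1) (d 1) (d 0) (z 2) *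
        (ell g (z 2) (d 2) (d 0) (d 1) * ell g (d 0) (c 0) (d 1) (d 2)) *
        ell g (d 1) (c 1) (c 0) (d 2) * ell g (d 2) (c 2) (c 0) (c 1) := by group
    _ = ell g (z 0) (d 0) (z 1) (z 2) * (ell g (z 1) (d 1) (d 0) (z 2) *
        ell g (d 0) (c 0) (d 1) (z 2)) * ell g (z 2) (d 2) (c 0) (d 1) *
        ell g (d 1) (c 1) (c 0) (d 2) * ell g (d 2) (c 2) (c 0) (c 1) := by
          rw [e1]; group
    _ = (ell g (z 0) (d 0) (z 1) (z 2) * ell g (d 0) (c 0) (z 1) (z 2)) *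
        ell g (z 1) (d 1) (c 0) (z 2) * (ell g (z 2) (d 2) (c 0) (d 1) *
        ell g (d 1) (c 1) (c 0) (d 2)) * ell g (d 2) (c 2) (c 0) (c 1) := by rw [e2]; group
    _ = _ := by
      rw [c0, e3, ← c1, ← c2]
      group

theorem Lc_swap01 (hg : Flat inc g) {z c : Fin 3 → V ⊕ E} (hzc : ∀ i, CDeg inc (z i) (c i))
    (hc : ∀ i j, i ≠ j → Apart (c i) (c j)) :
    Lc g (z ∘ Equiv.swap 0 1) (c ∘ Equiv.swap 0 1) = Lc g z c := by
  have e := ell_comm hg (hzc 0) (hzc 1) (x := z 2) (hc 0 1 (by decide))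
    ((hc 0 2 (by decide)).mono .rfl (hzc 2)) ((hc 1 2 (by decide)).mono .rfl (hzc 2))
  have s2 : (Equiv.swap (0 : Fin 3) 1) 2 = 2 := by decide
  simp only [Lc, Function.comp, Equiv.swap_apply_left, Equiv.swap_apply_right, s2]
  rw [e, ell_symm hg (z 2) (c 2) (c 0)]

theorem Lc_swap12 (hg : Flat inc g) {z c : Fin 3 → V ⊕ E} (hzc : ∀ i, CDeg inc (z i) (c i))
    (hc : ∀ i j, i ≠ j → Apart (c i) (c j)) :
    Lc g (z ∘ Equiv.swap 1 2) (c ∘ Equiv.swap 1 2) = Lc g z c := by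
  have e := ell_comm hg (hzc 1) (hzc 2) (x := c 0) (hc 1 2 (by decide))
    (hc 1 0 (by decide)) (hc 2 0 (by decide))
  have s2 : (Equiv.swap (1 : Fin 3) 2) 0 = 0 := by decide
  simp only [Lc, Function.comp, Equiv.swap_apply_left, Equiv.swap_apply_right, s2]
  rw [ell_symm hg (z 0) (c 0) (z 2), mul_assoc, mul_assoc, ell_symm hg (z 2) _ (c 0),
    ell_symm hg (z 1) _ (c 0), ell_symm hg (z 1) _ (c 0), ell_symm hg (z 2) _ (c 0), e]

theorem perm3 (σ : Equiv.Perm (Fin 3)) : σ = 1 ∨ σ = Equiv.swap 0 1 ∨ σ = Equiv.swap 1 2 ∨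
    σ = Equiv.swap 0 1 * Equiv.swap 1 2 ∨ σ = Equiv.swap 1 2 * Equiv.swap 0 1 ∨
    σ = Equiv.swap 0 1 * Equiv.swap 1 2 * Equiv.swap 0 1 := by
  revert σ; decide

theorem Lc_perm (hg : Flat inc g) {z c : Fin 3 → V ⊕ E} (hzc : ∀ i, CDeg inc (z i) (c i))
    (hc : ∀ i j, i ≠ j → Apart (c i) (c j)) (σ : Equiv.Perm (Fin 3)) :
    Lc g (z ∘ σ) (c ∘ σ) = Lc g z c := by
  have A : ∀ (τ : Equiv.Perm (Fin 3)), Lc g ((z ∘ τ) ∘ Equiv.swap 0 1) ((c ∘ τ) ∘ Equiv.swap 0 1) =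
      Lc g (z ∘ τ) (c ∘ τ) := fun τ => Lc_swap01 hg (fun i => hzc _)
        (fun i j h => hc _ _ fun e => h (τ.injective e))
  have B : ∀ (τ : Equiv.Perm (Fin 3)), Lc g ((z ∘ τ) ∘ Equiv.swap 1 2) ((c ∘ τ) ∘ Equiv.swap 1 2) =
      Lc g (z ∘ τ) (c ∘ τ) := fun τ => Lc_swap12 hg (fun i => hzc _)
        (fun i j h => hc _ _ fun e => h (τ.injective e))
  have A1 := Lc_swap01 hg hzc hc
  have B1 := Lc_swap12 hg hzc hc
  rcases perm3 σ with rfl | rfl | rfl | rfl | rfl | rfl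
  · rfl
  · exact A1
  · exact B1
  · rw [Equiv.Perm.coe_mul]; exact (B _).trans A1
  · rw [Equiv.Perm.coe_mul]; exact (A _).trans B1
  · have := A (Equiv.swap 0 1 * Equiv.swap 1 2)
    rw [Equiv.Perm.coe_mul]
    refine this.trans ?_
    rw [Equiv.Perm.coe_mul]; exact (B _).trans A1

end Cells

end

/-! ### Open cells -/

section
open Sum

section CellsOf
variable {V : Type} [Fintype V] [DecidableEq V] {Γ : SimpleGraph V}

/-- The vertices of a cell (a vertex or an edge) of the graph. -/
def csupp (Γ : SimpleGraph V) : V ⊕ Γ.edgeSet → Set V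
  | inl v => {v}
  | inr e => {u | u ∈ e.1}

theorem mem_inl {u v : V} : u ∈ csupp Γ (inl v) ↔ u = v := Iff.rfl
theorem mem_inr {u : V} {e : Γ.edgeSet} : u ∈ csupp Γ (inr e) ↔ u ∈ e.1 := Iff.rfl

theorem edge_ends (e : Γ.edgeSet) : ∃ a b, Γ.Adj a b ∧ e.1 = s(a, b) := by
  obtain ⟨e, he⟩ := e
  induction e with
  | _ a b => exact ⟨a, b, he, rfl⟩

theorem csupp_inj : Function.Injective (csupp Γ) := by
  have key : ∀ (v : V) (e : Γ.edgeSet), csupp Γ (inl v) ≠ csupp Γ (inr e) := by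
    intro v e h
    obtain ⟨a, b, hab, he⟩ := edge_ends e
    have h1 : a ∈ csupp Γ (inl v) := by rw [h, mem_inr, he]; simp
    have h2 : b ∈ csupp Γ (inl v) := by rw [h, mem_inr, he]; simp
    exact hab.ne (h1.trans h2.symm)
  rintro (v | e) (w | f) h
  · have : v ∈ csupp Γ (inl w) := by rw [← h]; rfl
    rw [show v = w from this]
  · exact (key _ _ h).elim
  · exact (key _ _ h.symm).elim
  · congr 1
    apply Subtype.ext
    apply Sym2.ext
    intro u
    have := Set.ext_iff.1 h u
    exact this

theorem cell_exists (x : realization Γ) : ∃ a, ∀ v, x.1 v ≠ 0 ↔ v ∈ csupp Γ a := by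
  obtain ⟨a, b, hab, h⟩ := real_edge x
  have h1 := real_pair x hab.ne h
  by_cases ha : x.1 a = 0
  · refine ⟨inl b, fun v => ⟨fun hv => ?_, ?_⟩⟩
    · rcases h v hv with rfl | rfl
      · exact (hv ha).elim
      · rfl
    · rintro rfl; rw [ha] at h1; intro h0; rw [h0] at h1; norm_num at h1
  by_cases hb : x.1 b = 0
  · refine ⟨inl a, fun v => ⟨fun hv => ?_, ?_⟩⟩
    · rcases h v hv with rfl | rfl
      · rfl
      · exact (hv hb).elim
    · rintro rfl; exact ha
  · refine ⟨inr ⟨s(a, b), hab⟩, fun v => ⟨fun hv => ?_, fun hv => ?_⟩⟩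
    · rw [mem_inr]; simpa using h v hv
    · rw [mem_inr] at hv
      rcases (by simpa using hv : v = a ∨ v = b) with rfl | rfl <;> assumption

/-- The open cell containing a point of the realization. -/
def cell (x : realization Γ) : V ⊕ Γ.edgeSet := (cell_exists x).choose
theorem cell_spec (x : realization Γ) (v : V) : x.1 v ≠ 0 ↔ v ∈ csupp Γ (cell x) :=
  (cell_exists x).choose_spec v

theorem cell_unique {x : realization Γ} {a : V ⊕ Γ.edgeSet} (h : ∀ v, x.1 v ≠ 0 ↔ v ∈ csupp Γ a) :
    cell x = a := csupp_inj (Set.ext fun v => (cell_spec x v).symm.trans (h v))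

theorem cell_eq_iff {x y : realization Γ} : cell x = cell y ↔ ∀ v, x.1 v = 0 ↔ y.1 v = 0 := by
  constructor
  · intro h v
    have h1 := cell_spec x v
    rw [h] at h1
    exact not_iff_not.1 (h1.trans (cell_spec y v).symm)
  · intro h
    exact cell_unique fun v => (not_congr (h v)).trans (cell_spec y v)

theorem cell_vert {x y : realization Γ} {v : V} (hx : cell x = inl v) (hy : cell y = inl v) :
    x = y := by
  refine real_sub (s := {v}) Set.subsingleton_singleton (fun u hu => ?_) (fun u hu => ?_)
  · have := (cell_spec x u).1 hu; rwa [hx] at this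
  · have := (cell_spec y u).1 hu; rwa [hy] at this

theorem cell_vert_val {x : realization Γ} {v : V} (hx : cell x = inl v) (u : V) :
    x.1 u = if u = v then 1 else 0 := by
  have h0 : ∀ u, u ≠ v → x.1 u = 0 := fun u hu => by
    by_contra h
    have := (cell_spec x u).1 h
    rw [hx] at this; exact hu this
  split_ifs with h
  · subst h
    rw [← real_sum x, Finset.sum_eq_single u (fun b _ hb => h0 b hb) (by simp)]
  · exact h0 u h

theorem cdeg_of {x y : realization Γ} (h : ∀ v, x.1 v = 0 → y.1 v = 0) :
    CDeg (einc Γ) (cell x) (cell y) := by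
  have hs : ∀ v, v ∈ csupp Γ (cell y) → v ∈ csupp Γ (cell x) := fun v hv =>
    (cell_spec x v).1 fun h0 => (cell_spec y v).2 hv (h v h0)
  rcases hx : cell x with v | e <;> rcases hy : cell y with w | f <;> rw [hx, hy] at hs
  · have := hs w rfl
    rw [mem_inl] at this; subst this; exact Or.inl rfl
  · obtain ⟨a, b, hab, he⟩ := edge_ends f
    have h1 := hs a (by rw [mem_inr, he]; simp)
    have h2 := hs b (by rw [mem_inr, he]; simp)
    exact (hab.ne (h1.trans h2.symm)).elim
  · exact Or.inr ⟨w, e, rfl, rfl, hs w rfl⟩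
  · left
    obtain ⟨a, b, hab, he⟩ := edge_ends f
    have h1 := hs a (by rw [mem_inr, he]; simp)
    have h2 := hs b (by rw [mem_inr, he]; simp)
    congr 1
    apply Subtype.ext
    rw [he]
    exact (Sym2.mem_and_mem_iff hab.ne).1 ⟨h1, h2⟩

/-- The triple of cells of a configuration. -/
def cells (c : CC Γ) (i : Fin 3) : V ⊕ Γ.edgeSet := cell (c.1 i)

theorem cells_smul (σ : Equiv.Perm (Fin 3)) (c : CC Γ) : cells (σ • c) = cells c ∘ σ.symm := rfl

theorem Deg.cdeg {c z : CC Γ} (h : Deg c z) (i : Fin 3) : CDeg (einc Γ) (cells z i) (cells c i) :=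
  cdeg_of (h.supp i)

theorem cells_apart (c : CC Γ) {i j : Fin 3} (h : i ≠ j) : Apart (cells c i) (cells c j) :=
  fun _ h1 h2 => h (c.2 (cell_vert h1 h2))

theorem lc_local {F : Type} [Group F] {lam : V → Γ.edgeSet → V ⊕ Γ.edgeSet → V ⊕ Γ.edgeSet → F}
    (hl : Flat (einc Γ) lam) : (csys Γ).Local (fun z c => Lc lam (cells z) (cells c)) := by
  refine ⟨fun {c d z} h h' => ?_, fun σ c z h => ?_⟩
  · exact Lc_comp hl (Deg.cdeg h') (Deg.cdeg h) (fun i j hij => cells_apart c hij)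
  · exact Lc_perm hl (Deg.cdeg h) (fun i j hij => cells_apart c hij) _

/-- Two configurations lie in the same open cell of the ordered configuration space. -/
def Sim (c d : CC Γ) : Prop := Deg c d ∧ Deg d c

theorem Sim.symm {c d : CC Γ} (h : Sim c d) : Sim d c := ⟨h.2, h.1⟩
theorem Sim.trans {c d e : CC Γ} (h : Sim c d) (h' : Sim d e) : Sim c e :=
  ⟨h.1.trans h'.1, h'.2.trans h.2⟩
theorem Sim.refl (c : CC Γ) : Sim c c := ⟨.refl c, .refl c⟩
theorem Sim.smul (σ : Equiv.Perm (Fin 3)) {c d : CC Γ} (h : Sim c d) : Sim (σ • c) (σ • d) :=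
  ⟨deg_smul σ h.1, deg_smul σ h.2⟩

theorem Sim.cells {c d : CC Γ} (h : Sim c d) : cells c = cells d := by
  funext i
  exact cell_eq_iff.2 fun v => ⟨h.2.supp i v, h.1.supp i v⟩

theorem Sim.fix {d : CC Γ} {σ : Equiv.Perm (Fin 3)} (h : Sim (σ • d) d) : σ = 1 := by
  have hz : ∀ i u, (d.1 i).1 u = 0 ↔ (d.1 (σ.symm i)).1 u = 0 := fun i u =>
    ⟨h.1.supp i u, h.2.supp i u⟩
  have hle : ∀ i u, (d.1 i).1 u ≤ (d.1 (σ.symm i)).1 u →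
      (d.1 (σ.symm i)).1 u ≤ (d.1 (σ.symm (σ.symm i))).1 u := fun i u hu =>
    h.1.ord i (σ.symm i) u (hz i) hu
  have hge : ∀ i u, (d.1 (σ.symm i)).1 u ≤ (d.1 i).1 u →
      (d.1 (σ.symm (σ.symm i))).1 u ≤ (d.1 (σ.symm i)).1 u := fun i u hu =>
    h.1.ord (σ.symm i) i u (fun v => (hz i v).symm) hu
  have h6 : ∀ (τ : Equiv.Perm (Fin 3)) i, τ (τ (τ (τ (τ (τ i))))) = i := by
    intro τ; rcases perm3 τ with rfl | rfl | rfl | rfl | rfl | rfl <;> decide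
  have hfix : ∀ i, σ.symm i = i := by
    intro i
    apply d.2
    obtain ⟨u, hu⟩ := real_ne (d.1 (σ.symm i))
    refine real_eq' (fun v => (hz i v).symm) hu ?_
    have := h6 σ.symm i
    rcases le_total ((d.1 i).1 u) ((d.1 (σ.symm i)).1 u) with hh | hh
    · have a1 := hle _ _ hh
      have a2 := hle _ _ a1
      have a3 := hle _ _ a2
      have a4 := hle _ _ a3
      have a5 := hle _ _ a4
      rw [this] at a5
      linarith
    · have a1 := hge _ _ hh
      have a2 := hge _ _ a1
      have a3 := hge _ _ a2
      have a4 := hge _ _ a3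
      have a5 := hge _ _ a4
      rw [this] at a5
      linarith
  have : σ.symm = 1 := Equiv.ext hfix
  rw [← σ.symm_symm, this]; rfl

/-- On an open cell, one strict inequality between coordinates determines all of them. -/
theorem ord_of {x y x' y' : realization Γ} (h1 : cell x = cell y) (h2 : cell x' = cell x)
    (h3 : cell y' = cell x) {v : V} (h : x.1 v < y.1 v) (h' : x'.1 v < y'.1 v) (u : V)
    (hu : x.1 u ≤ y.1 u) : x'.1 u ≤ y'.1 u := by
  obtain ⟨a, b, hab, hx⟩ := real_edge x
  rw [cell_eq_iff] at h1 h2 h3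
  have hy : ∀ v, y.1 v ≠ 0 → v = a ∨ v = b := fun v hv => hx v fun h0 => hv ((h1 v).1 h0)
  have hx' : ∀ v, x'.1 v ≠ 0 → v = a ∨ v = b := fun v hv => hx v fun h0 => hv ((h2 v).2 h0)
  have hy' : ∀ v, y'.1 v ≠ 0 → v = a ∨ v = b := fun v hv => hx v fun h0 => hv ((h3 v).2 h0)
  have e1 := real_pair x hab.ne hx
  have e2 := real_pair y hab.ne hy
  have e3 := real_pair x' hab.ne hx'
  have e4 := real_pair y' hab.ne hy'
  have hv : v = a ∨ v = b := by
    apply hy; intro h0; rw [h0] at h; exact absurd h (not_lt.2 (real_nonneg x v))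
  by_cases hu0 : x'.1 u = 0
  · rw [hu0]; exact real_nonneg y' u
  rcases hx' u hu0 with rfl | rfl <;> rcases hv with rfl | rfl <;> linarith

theorem sim_of {c d : CC Γ} (hc : cells c = cells d)
    (ho : ∀ i j, i < j → cells c i = cells c j → ∃ v,
      ((c.1 i).1 v < (c.1 j).1 v ∧ (d.1 i).1 v < (d.1 j).1 v) ∨
      ((c.1 j).1 v < (c.1 i).1 v ∧ (d.1 j).1 v < (d.1 i).1 v)) : Sim c d := by
  have hc' : ∀ i, cell (c.1 i) = cell (d.1 i) := fun i => congrFun hc i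
  have ho' : ∀ i j, i ≠ j → cells c i = cells c j → ∃ v,
      ((c.1 i).1 v < (c.1 j).1 v ∧ (d.1 i).1 v < (d.1 j).1 v) ∨
      ((c.1 j).1 v < (c.1 i).1 v ∧ (d.1 j).1 v < (d.1 i).1 v) := by
    intro i j hij h
    rcases lt_or_gt_of_ne hij with h1 | h1
    · exact ho i j h1 h
    · obtain ⟨v, hv⟩ := ho j i h1 h.symm
      exact ⟨v, hv.symm⟩
  refine ⟨⟨fun i v => ((cell_eq_iff.1 (hc' i)) v).2, fun i j v hz hv => ?_⟩,
    ⟨fun i v => ((cell_eq_iff.1 (hc' i)) v).1, fun i j v hz hv => ?_⟩⟩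
  · rcases eq_or_ne i j with rfl | hij
    · rfl
    have hcc : cell (d.1 i) = cell (d.1 j) := cell_eq_iff.2 hz
    obtain ⟨w, ⟨h1, h2⟩ | ⟨h1, h2⟩⟩ := ho' i j hij (((hc' i).trans hcc).trans (hc' j).symm)
    · exact ord_of hcc (hc' i) ((hc' j).trans hcc.symm) h2 h1 v hv
    · by_contra hlt
      push Not at hlt
      have := ord_of (((hc' j).trans hcc.symm).trans (hc' i).symm) ((hc' j).symm) (((hc' i).symm).trans (((hc' i).trans hcc).trans (hc' j).symm)) h1 h2 v hlt.le
      have heq : (d.1 i).1 v = (d.1 j).1 v := le_antisymm hv this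
      have hz1 : (d.1 j).1 v ≠ 0 := fun h0 => by
        have := (cell_eq_iff.1 (hc' i) v).2 ((hz v).2 h0)
        have h4 := real_nonneg (c.1 j) v
        linarith
      exact hij (d.2 (real_eq' hz (by rw [heq]; exact hz1) heq))
  · rcases eq_or_ne i j with rfl | hij
    · rfl
    have hcc : cell (c.1 i) = cell (c.1 j) := cell_eq_iff.2 hz
    obtain ⟨w, ⟨h1, h2⟩ | ⟨h1, h2⟩⟩ := ho' i j hij hcc
    · exact ord_of hcc (hc' i).symm ((hc' j).symm.trans hcc.symm) h1 h2 v hv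
    · by_contra hlt
      push Not at hlt
      have := ord_of ((hc' j).symm.trans (hcc.symm.trans (hc' i))) (hc' j) ((hcc.trans (hc' j))) h2 h1 v hlt.le
      have heq : (c.1 i).1 v = (c.1 j).1 v := le_antisymm hv this
      have hz1 : (c.1 j).1 v ≠ 0 := fun h0 => by
        have := (cell_eq_iff.1 (hc' i) v).1 ((hz v).2 h0)
        have h4 := real_nonneg (d.1 j) v
        linarith
      exact hij (c.2 (real_eq' hz (by rw [heq]; exact hz1) heq))

end CellsOf

end

/-! ### Sorting and elementary degenerations -/

section
open Sum

section CellsOf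
variable {V : Type} [Fintype V] [DecidableEq V] {Γ : SimpleGraph V}

theorem st_map {A B : Type} (f : Fin 3 → A ⊕ B) : st (f 0) (f 1) (f 2) = Finset.univ.val.map f := by
  rw [Fin.univ_val_map]; simp [st, List.ofFn_succ]; rfl

/-- The multiset of cells of a configuration. -/
def ms (c : CC Γ) : Multiset (V ⊕ Γ.edgeSet) := st (cells c 0) (cells c 1) (cells c 2)

theorem ms_smul (σ : Equiv.Perm (Fin 3)) (c : CC Γ) : ms (σ • c) = ms c := by
  unfold ms
  rw [st_map, st_map, cells_smul]
  rw [← Multiset.map_map]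
  congr 1
  have := Finset.map_univ_equiv σ.symm
  exact congrArg Finset.val this

/-- A numbering of the cells. -/
def code (Γ : SimpleGraph V) : V ⊕ Γ.edgeSet → ℕ := (exists_injective_nat _).choose
theorem code_inj : Function.Injective (code Γ) := (exists_injective_nat _).choose_spec

/-- A vertex of each cell. -/
def lo : V ⊕ Γ.edgeSet → V
  | inl v => v
  | inr e => e.1.out.1
theorem lo_mem (a : V ⊕ Γ.edgeSet) : lo a ∈ csupp Γ a := by
  rcases a with v | e
  · rfl
  · exact Sym2.out_fst_mem e.1

/-- An injective real function on the realization, sorting points first by their cells. -/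
def key (x : realization Γ) : ℝ := (code Γ (cell x) : ℝ) + x.1 (lo (cell x)) / 2

theorem real_le_one (x : realization Γ) (v : V) : x.1 v ≤ 1 := by
  rw [← real_sum x]
  exact Finset.single_le_sum (f := x.1) (fun u _ => real_nonneg x u) (Finset.mem_univ v)

theorem key_code {x y : realization Γ} (h : key x ≤ key y) : code Γ (cell x) ≤ code Γ (cell y) := by
  by_contra hlt
  push Not at hlt
  have h1 : (code Γ (cell y) : ℝ) + 1 ≤ code Γ (cell x) := by exact_mod_cast hlt
  have h2 := real_nonneg x (lo (cell x))
  have h3 := real_le_one y (lo (cell y))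
  unfold key at h
  linarith

theorem key_inj : Function.Injective (key : realization Γ → ℝ) := by
  intro x y h
  have h1 : cell x = cell y := code_inj (le_antisymm (key_code h.le) (key_code h.ge))
  unfold key at h
  rw [h1] at h
  refine real_eq' (cell_eq_iff.1 h1) (u := lo (cell y)) ?_ (by linarith)
  rw [cell_spec, h1]; exact lo_mem _

theorem mono_eq {f g : Fin 3 → ℕ} (hf : Monotone f) (hg : Monotone g)
    (h : Finset.univ.val.map f = Finset.univ.val.map g) : f = g := by
  rw [Fin.univ_val_map, Fin.univ_val_map] at h
  apply List.ofFn_injective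
  refine List.Perm.eq_of_pairwise' (r := (· ≤ ·)) ?_ ?_ (Multiset.coe_eq_coe.1 h)
  · exact hf.sortedLE_ofFn.pairwise
  · exact hg.sortedLE_ofFn.pairwise

theorem exists_sorted (c : CC Γ) : ∃ σ : Equiv.Perm (Fin 3), Monotone fun i => key ((σ • c).1 i) :=
  ⟨(Tuple.sort fun i => key (c.1 i)).symm, Tuple.monotone_sort fun i => key (c.1 i)⟩

theorem perm_sim {c d : CC Γ} (h : ms c = ms d) : ∃ σ : Equiv.Perm (Fin 3), Sim (σ • c) d := by
  obtain ⟨σ, hσ⟩ := exists_sorted c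
  obtain ⟨τ, hτ⟩ := exists_sorted d
  suffices Sim (σ • c) (τ • d) by
    refine ⟨τ⁻¹ * σ, ?_⟩
    have := this.smul τ⁻¹
    rwa [smul_smul, inv_smul_smul] at this
  have hm : ms (σ • c) = ms (τ • d) := by rw [ms_smul, ms_smul, h]
  generalize σ • c = c' at *
  generalize τ • d = d' at *
  have hcode : (fun i => code Γ (cells c' i)) = fun i => code Γ (cells d' i) := by
    refine mono_eq (fun i j hij => key_code (hσ hij)) (fun i j hij => key_code (hτ hij)) ?_
    unfold ms at hm
    rw [st_map, st_map] at hm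
    have := congrArg (Multiset.map (code Γ)) hm
    rwa [Multiset.map_map, Multiset.map_map] at this
  have hcells : cells c' = cells d' := funext fun i => code_inj (congrFun hcode i)
  refine sim_of hcells fun i j hij hc => ⟨lo (cells c' i), Or.inl ?_⟩
  have hd : cells d' i = cells d' j := by rw [← hcells]; exact hc
  have k : ∀ {e : CC Γ}, Monotone (fun i => key (e.1 i)) → cells e i = cells e j →
      (e.1 i).1 (lo (cells e i)) < (e.1 j).1 (lo (cells e i)) := by
    intro e he h
    have h1 : key (e.1 i) < key (e.1 j) := lt_of_le_of_ne (he hij.le)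
      (fun h' => hij.ne (e.2 (key_inj h')))
    unfold key at h1
    change cell (e.1 i) = cell (e.1 j) at h
    rw [← h] at h1
    change (e.1 i).1 (lo (cell (e.1 i))) < (e.1 j).1 (lo (cell (e.1 i)))
    linarith
  refine ⟨k hσ hc, ?_⟩
  have := k hτ hd
  rwa [← hcells] at this

/-- The point of the edge `vw` at distance `t` from `v`. -/
theorem exists_pt {v w : V} (h : Γ.Adj v w) {t : ℝ} (h0 : 0 < t) (h1 : t < 1) :
    ∃ x : realization Γ, x.1 v = 1 - t ∧ x.1 w = t ∧ (∀ u, u ≠ v → u ≠ w → x.1 u = 0) ∧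
      cell x = inr ⟨s(v, w), h⟩ := by
  let f : V → ℝ := fun u => if u = v then 1 - t else if u = w then t else 0
  have hv : f v = 1 - t := by simp [f]
  have hw : f w = t := by simp [f, h.ne']
  have hu : ∀ u, u ≠ v → u ≠ w → f u = 0 := fun u h1 h2 => by simp [f, h1, h2]
  have hmem : f ∈ realization Γ := by
    refine real_mk (a := v) (b := w) (fun u => ?_) ?_ h (fun u hu' => ?_)
    · simp only [f]; split_ifs <;> linarith
    · rw [← Finset.sum_subset (Finset.subset_univ {v, w})]
      · rw [Finset.sum_pair h.ne, hv, hw]; ring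
      · intro u _ h2; simp at h2; exact hu u h2.1 h2.2
    · by_contra hn; push Not at hn; exact hu' (hu u hn.1 hn.2)
  refine ⟨⟨f, hmem⟩, hv, hw, hu, cell_unique fun u => ?_⟩
  rw [mem_inr]
  simp only [Sym2.mem_iff]
  constructor
  · intro h'; by_contra hn; push Not at hn; exact h' (hu u hn.1 hn.2)
  · rintro (rfl | rfl)
    · simp only [hv]; linarith
    · simp only [hw]; linarith

theorem exists_vert {v w : V} (h : Γ.Adj v w) : ∃ x : realization Γ, cell x = inl v := by
  refine ⟨⟨fun u => if u = v then 1 else 0, real_mk (a := v) (b := w) (fun u => ?_) (by simp) h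
    (fun u hu => ?_)⟩, cell_unique fun u => ?_⟩
  · split_ifs <;> norm_num
  · simp at hu; exact Or.inl hu
  · rw [mem_inl]; simp

theorem exists_conf (hadj : ∀ v, ∃ w, Γ.Adj v w) (a : Fin 3 → V ⊕ Γ.edgeSet)
    (h : ∀ i j, i ≠ j → Apart (a i) (a j)) : ∃ c : CC Γ, cells c = a := by
  have : ∀ i : Fin 3, ∃ x : realization Γ, cell x = a i ∧
      ∀ e, a i = inr e → x.1 (lo (a i)) = ((i : ℕ) + 1) / 4 := by
    intro i
    rcases ha : a i with v | e
    · obtain ⟨w, hw⟩ := hadj v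
      obtain ⟨x, hx⟩ := exists_vert hw
      exact ⟨x, hx, fun e he => by cases he⟩
    · have hl : lo (inr e : V ⊕ Γ.edgeSet) ∈ e.1 := lo_mem (inr e : V ⊕ Γ.edgeSet)
      obtain ⟨w, hw⟩ := hl
      have hadj' : Γ.Adj w (lo (inr e : V ⊕ Γ.edgeSet)) := by
        have := e.2; rw [hw] at this; exact this.symm
      have hi : ((i : ℕ) : ℝ) ≤ 2 := by have := i.2; exact_mod_cast (by omega : (i : ℕ) ≤ 2)
      have hi0 : (0 : ℝ) ≤ ((i : ℕ) : ℝ) := by positivity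
      obtain ⟨x, _, h2, _, h4⟩ := exists_pt hadj' (t := ((i : ℕ) + 1) / 4) (by linarith) (by linarith)
      refine ⟨x, h4.trans ?_, fun e' _ => h2⟩
      congr 1
      apply Subtype.ext
      rw [hw]; exact Sym2.eq_swap
  choose x hx hlo using this
  refine ⟨⟨x, fun i j hij => ?_⟩, funext hx⟩
  by_contra hne
  have hc : a i = a j := by rw [← hx, ← hx, hij]
  rcases ha : a i with v | e
  · exact h i j hne v ha (hc ▸ ha)
  · have h1 := hlo i e ha
    have h2 := hlo j e (hc ▸ ha)
    rw [hij, hc, h2] at h1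
    have h3 : ((j : ℕ) : ℝ) = (i : ℕ) := by linarith
    exact hne (Fin.ext (by exact_mod_cast h3.symm))

/-- A particle on a vertex can be pushed into an incident edge. -/
theorem push_up (c : CC Γ) {i : Fin 3} {v : V} {h : Γ.edgeSet} (hi : cells c i = inl v)
    (hv : einc Γ v h) : ∃ z : CC Γ, Deg c z ∧ cells z = Function.update (cells c) i (inr h) := by
  obtain ⟨w, hw⟩ := hv
  have hadj : Γ.Adj v w := by have := h.2; rw [hw] at this; exact this
  have hlt : ∀ j, j ≠ i → (c.1 j).1 v < 1 := by
    intro j hj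
    refine lt_of_le_of_ne (real_le_one _ _) fun h1 => ?_
    have h2 : ∀ u, u ≠ v → (c.1 j).1 u = 0 := fun u hu => by
      obtain ⟨a, b, hab, hx⟩ := real_edge (c.1 j)
      have := real_pair (c.1 j) hab.ne hx
      by_contra hu0
      rcases hx u hu0 with rfl | rfl <;> rcases hx v (by rw [h1]; norm_num) with rfl | rfl
      · exact hu rfl
      · exact hu0 (by linarith)
      · exact hu0 (by linarith)
      · exact hu rfl
    refine cells_apart c hj v (cell_unique fun u => ?_) hi
    rw [mem_inl]
    constructor
    · intro h'; by_contra hn; exact h' (h2 u hn)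
    · rintro rfl; rw [h1]; norm_num
  obtain ⟨t, ht0, hte, ht1, htj⟩ : ∃ t : ℝ, 0 < t ∧ t < eps c ∧ t < 1 ∧
      ∀ j, j ≠ i → t < 1 - (c.1 j).1 v := by
    have h1 : ∀ᶠ t in nhdsWithin (0 : ℝ) (Set.Ioi 0), t < eps c :=
      (eventually_lt_nhds (eps_pos c)).filter_mono nhdsWithin_le_nhds
    have h2 : ∀ᶠ t in nhdsWithin (0 : ℝ) (Set.Ioi 0), t < 1 :=
      (eventually_lt_nhds one_pos).filter_mono nhdsWithin_le_nhds
    have h3 : ∀ᶠ t in nhdsWithin (0 : ℝ) (Set.Ioi 0), ∀ j, j ≠ i → t < 1 - (c.1 j).1 v := by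
      rw [Filter.eventually_all]
      intro j
      by_cases hj : j = i
      · simp [hj]
      · filter_upwards [(eventually_lt_nhds (sub_pos.2 (hlt j hj))).filter_mono nhdsWithin_le_nhds]
          with t ht _ using ht
    obtain ⟨t, ⟨⟨⟨h1, h2⟩, h3⟩, h4⟩⟩ := (((h1.and h2).and h3).and self_mem_nhdsWithin).exists
    exact ⟨t, h4, h1, h2, h3⟩
  obtain ⟨x, hxv, hxw, hx0, hxc⟩ := exists_pt hadj ht0 ht1
  have hinj : Function.Injective (Function.update c.1 i x) := by
    have hne : ∀ j, j ≠ i → c.1 j ≠ x := fun j hj h' => by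
      have := htj j hj; rw [h', hxv] at this; linarith
    intro j k hjk
    by_cases hj : j = i <;> by_cases hk : k = i
    · rw [hj, hk]
    · subst hj; rw [Function.update_self, Function.update_of_ne hk] at hjk
      exact (hne k hk hjk.symm).elim
    · subst hk; rw [Function.update_self, Function.update_of_ne hj] at hjk
      exact (hne j hj hjk).elim
    · rw [Function.update_of_ne hj, Function.update_of_ne hk] at hjk
      exact c.2 hjk
  refine ⟨⟨_, hinj⟩, Nb_deg fun j u => ?_, ?_⟩
  · simp only
    by_cases hj : j = i
    · subst hj
      rw [Function.update_self, cell_vert_val hi u]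
      by_cases hu : u = v
      · subst hu; rw [hxv, if_pos rfl, abs_lt]; constructor <;> linarith
      rw [if_neg hu, sub_zero]
      by_cases hu' : u = w
      · subst hu'; rw [hxw, abs_of_pos ht0]; exact hte
      · rw [hx0 u hu hu', abs_zero]; exact eps_pos c
    · rw [Function.update_of_ne hj]; simpa using eps_pos c
  · funext j
    by_cases hj : j = i
    · subst hj
      simp only [cells, Function.update_self, hxc]
      congr 1
      exact Subtype.ext hw.symm
    · simp only [cells, Function.update_of_ne hj]

theorem Deg.cells_eq {c z : CC Γ} (h : Deg c z) {i : Fin 3} (hi : cells c i ≠ cells z i) :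
    ∃ v h, cells z i = inr h ∧ cells c i = inl v ∧ einc Γ v h := by
  rcases h.cdeg i with h | h
  · exact (hi h.symm).elim
  · exact h

/-- A degeneration can be performed one particle at a time. -/
theorem mix {c z : CC Γ} (h : Deg c z) {i : Fin 3} (hi : cells c i ≠ cells z i) :
    ∃ d : CC Γ, d.1 = Function.update z.1 i (c.1 i) ∧ Deg c d ∧ Deg d z := by
  obtain ⟨v, e, hz, hc, hv⟩ := h.cells_eq hi
  have hval := cell_vert_val hc
  have hcv : (c.1 i).1 v = 1 := by rw [hval, if_pos rfl]
  have hne1 : ∀ j, j ≠ i → (c.1 j).1 v ≠ 1 := by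
    intro j hj h1
    refine hj (c.2 (real_sub (s := {v}) Set.subsingleton_singleton (fun u hu => ?_) (fun u hu => ?_)))
    · obtain ⟨a, b, hab, hx⟩ := real_edge (c.1 j)
      have := real_pair (c.1 j) hab.ne hx
      by_contra hn
      have hn' : u ≠ v := hn
      rcases hx u hu with rfl | rfl <;> rcases hx v (by rw [h1]; norm_num) with rfl | rfl
      · exact hn' rfl
      · exact hu (by linarith)
      · exact hu (by linarith)
      · exact hn' rfl
    · by_contra hn; exact hu (by rw [hval, if_neg (show ¬ u = v from hn)])
  have hne : ∀ j, j ≠ i → z.1 j ≠ c.1 i := by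
    intro j hj h'
    refine hne1 j hj ?_
    rw [← real_sum (c.1 j), eq_comm]
    refine Finset.sum_eq_single v (fun u _ hu => ?_) (by simp)
    apply h.supp j u
    rw [h', hval, if_neg hu]
  have hinj : Function.Injective (Function.update z.1 i (c.1 i)) := by
    intro j k hjk
    by_cases hj : j = i <;> by_cases hk : k = i
    · rw [hj, hk]
    · subst hj; rw [Function.update_self, Function.update_of_ne hk] at hjk
      exact (hne k hk hjk.symm).elim
    · subst hk; rw [Function.update_self, Function.update_of_ne hj] at hjk
      exact (hne j hj hjk).elim
    · rw [Function.update_of_ne hj, Function.update_of_ne hk] at hjk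
      exact z.2 hjk
  -- in `z` the particle `i` is closer to `v` than the other ones on its edge
  have hcl : ∀ j, j ≠ i → (∀ u, (z.1 i).1 u = 0 ↔ (z.1 j).1 u = 0) → (z.1 j).1 v < (z.1 i).1 v := by
    intro j hj hs
    by_contra hle
    push Not at hle
    have := h.ord i j v hs hle
    rw [hcv] at this
    exact hne1 j hj (le_antisymm (real_le_one _ _) this)
  refine ⟨⟨_, hinj⟩, rfl, ⟨fun j u => ?_, fun j k u hs => ?_⟩, ⟨fun j u => ?_, fun j k u hs => ?_⟩⟩
  · by_cases hj : j = i
    · subst hj; simp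
    · simp only [Function.update_of_ne hj]; exact h.supp j u
  · by_cases hj : j = i <;> by_cases hk : k = i
    · rw [hj, hk]; exact fun _ => le_rfl
    · subst hj; simp only [Function.update_self, Function.update_of_ne hk] at hs
      refine (hne k hk ?_).elim
      exact cell_vert (cell_eq_iff.2 (fun u => (hs u).symm) |>.trans hc) hc
    · subst hk; simp only [Function.update_self, Function.update_of_ne hj] at hs
      refine (hne j hj ?_).elim
      exact cell_vert (cell_eq_iff.2 (fun u => (hs u)) |>.trans hc) hc
    · simp only [Function.update_of_ne hj, Function.update_of_ne hk] at hs ⊢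
      exact h.ord j k u hs
  · by_cases hj : j = i
    · subst hj; simp only [Function.update_self]; exact h.supp j u
    · simp [Function.update_of_ne hj]
  · by_cases hj : j = i <;> by_cases hk : k = i
    · rw [hj, hk]; exact fun _ => le_rfl
    · subst hj; simp only [Function.update_self, Function.update_of_ne hk]
      intro hle
      have := hcl k hk hs
      rw [hval]
      split_ifs with hu
      · subst hu; linarith
      · exact real_nonneg _ _
    · subst hk; simp only [Function.update_self, Function.update_of_ne hj]
      intro hle
      have h3 := hcl j hj (fun u => (hs u).symm)
      by_cases hu0 : (z.1 j).1 u = 0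
      · rw [hu0]; exact real_nonneg _ _
      by_cases hu : u = v
      · subst hu; rw [hcv]; exact real_le_one _ _
      exfalso
      obtain ⟨a, b, hab, hx⟩ := real_edge (z.1 j)
      have hx' : ∀ v, (z.1 k).1 v ≠ 0 → v = a ∨ v = b := fun v hv => hx v fun h0 => hv ((hs v).1 h0)
      have e1 := real_pair (z.1 j) hab.ne hx
      have e2 := real_pair (z.1 k) hab.ne hx'
      have hv0 : (z.1 k).1 v ≠ 0 := fun h0 => by
        have := real_nonneg (z.1 j) v; linarith
      rcases hx u hu0 with rfl | rfl <;> rcases hx' v hv0 with rfl | rfl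
      · exact hu rfl
      · linarith
      · linarith
      · exact hu rfl
    · simp only [Function.update_of_ne hj, Function.update_of_ne hk]
      exact id

end CellsOf

end

/-! ### Path connectedness -/

section
open Sum

section Conn
variable {V : Type} [Fintype V] [DecidableEq V] {Γ : SimpleGraph V}

theorem exists_adj (hconn : Γ.Connected) (hedge : Γ.edgeSet.Nonempty) (v : V) : ∃ w, Γ.Adj v w := by
  obtain ⟨e, he⟩ := hedge
  induction e with
  | _ a b =>
    have : Nontrivial V := ⟨a, b, (show Γ.Adj a b from he).ne⟩
    exact hconn.preconnected.exists_adj_of_nontrivial v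

theorem Deg.joined {c z : CC Γ} (h : Deg c z) : Joined ((csys Γ).π c) ((csys Γ).π z) :=
  ⟨((csys Γ).ipath h).map (csys Γ).cont⟩

theorem ms_joined {c z : CC Γ} (h : ms c = ms z) : Joined ((csys Γ).π c) ((csys Γ).π z) := by
  obtain ⟨σ, h⟩ := perm_sim h
  rw [← (csys Γ).π_smul σ c]
  exact h.1.joined

/-- Height of a cell above the edge `e0`, whose one end is `p`: it decreases when a particle
travels towards `e0`. -/
def ht (Γ : SimpleGraph V) (p : V) (e0 : Γ.edgeSet) : V ⊕ Γ.edgeSet → ℕ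
  | inl v => 2 * Γ.dist p v + 1
  | inr h => if h = e0 then 0 else 2 * min (Γ.dist p h.1.out.1) (Γ.dist p h.1.out.2) + 2

theorem sum_update {A : Type} (f : A → ℕ) (a : Fin 3 → A) (i : Fin 3) (b : A) (h : f b < f (a i)) :
    ∑ j, f (Function.update a i b j) < ∑ j, f (a j) := by
  refine Finset.sum_lt_sum (fun j _ => ?_) ⟨i, Finset.mem_univ _, by simpa using h⟩
  by_cases hj : j = i
  · subst hj; simpa using h.le
  · simp [Function.update_of_ne hj]

theorem conf_joined (hconn : Γ.Connected) (hedge : Γ.edgeSet.Nonempty) {p : V} {e0 : Γ.edgeSet}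
    (hp : p ∈ e0.1) (z : CC Γ) (hz : ∀ i, cells z i = inr e0) :
    ∀ (n : ℕ) (c : CC Γ), ∑ i, ht Γ p e0 (cells c i) = n →
      Joined ((csys Γ).π c) ((csys Γ).π z) := by
  intro n
  induction n using Nat.strong_induction_on with
  | _ n ih =>
    intro c hn
    by_cases h0 : ∀ i, ht Γ p e0 (cells c i) = 0
    · have hc : ∀ i, cells c i = inr e0 := by
        intro i
        have := h0 i
        rcases h : cells c i with v | e
        · rw [h] at this; simp [ht] at this
        · rw [h] at this; simp only [ht] at this
          split_ifs at this with h'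
          rw [h']
      refine ms_joined ?_
      unfold ms; simp [hc, hz]
    push Not at h0
    obtain ⟨i, hi, hmin⟩ := Finset.exists_min_image
      (Finset.univ.filter fun i => ht Γ p e0 (cells c i) ≠ 0) (fun i => ht Γ p e0 (cells c i))
      (by obtain ⟨i, hi⟩ := h0; exact ⟨i, by simpa using hi⟩)
    simp only [Finset.mem_filter, Finset.mem_univ, true_and] at hi hmin
    rcases h : cells c i with v | e
    · obtain ⟨h', hv, hlt⟩ : ∃ h' : Γ.edgeSet, einc Γ v h' ∧
          ht Γ p e0 (inr h') < ht Γ p e0 (inl v) := by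
        by_cases hd : Γ.dist p v = 0
        · have : p = v := (hconn.dist_eq_zero_iff).1 hd
          subst this
          exact ⟨e0, hp, by simp [ht]⟩
        · obtain ⟨w, hw⟩ := hconn.exists_walk_length_eq_dist v p
          cases w with
          | nil => simp at hd
          | @cons _ u _ hvu w =>
            refine ⟨⟨s(v, u), hvu⟩, by simp [einc], ?_⟩
            have h1 : Γ.dist p u + 1 ≤ Γ.dist p v := by
              rw [SimpleGraph.Walk.length_cons] at hw
              rw [SimpleGraph.dist_comm, SimpleGraph.dist_comm (u := p)]
              have := SimpleGraph.dist_le w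
              omega
            simp only [ht]
            split_ifs
            · omega
            · have hu : u ∈ (s(v, u) : Sym2 V) := by simp
              have hmem : u = (Quot.out s(v, u)).1 ∨ u = (Quot.out s(v, u)).2 := by
                have h2 : s((Quot.out s(v, u)).1, (Quot.out s(v, u)).2) = s(v, u) :=
                  Quot.out_eq _
                rw [← h2] at hu
                exact Sym2.mem_iff.1 hu
              have : min (Γ.dist p (Quot.out s(v, u)).1) (Γ.dist p (Quot.out s(v, u)).2) ≤ Γ.dist p u := by
                rcases hmem with h3 | h3
                · rw [← h3]; exact min_le_left _ _
                · rw [← h3]; exact min_le_right _ _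
              omega
      obtain ⟨z', hz', hc'⟩ := push_up c h hv
      refine hz'.joined.trans (ih _ ?_ z' rfl)
      rw [← hn, hc']
      exact sum_update _ _ _ _ (by rw [h]; exact hlt)
    · have hne : e ≠ e0 := by rintro rfl; rw [h] at hi; simp [ht] at hi
      obtain ⟨v, hv, hlt⟩ : ∃ v, einc Γ v e ∧ ht Γ p e0 (inl v) < ht Γ p e0 (inr e) := by
        simp only [ht, if_neg hne]
        rcases min_choice (Γ.dist p e.1.out.1) (Γ.dist p e.1.out.2) with hm | hm
        · exact ⟨_, Sym2.out_fst_mem e.1, by rw [hm]; omega⟩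
        · exact ⟨_, Sym2.out_snd_mem e.1, by rw [hm]; omega⟩
      have hfree : ∀ j, j ≠ i → cells c j ≠ inl v := by
        intro j hj hjv
        have := hmin j (by rw [hjv]; simp [ht])
        rw [hjv, h] at this
        omega
      obtain ⟨d, hd⟩ := exists_conf (exists_adj hconn hedge) (Function.update (cells c) i (inl v)) (by
        intro j k hjk
        by_cases hj : j = i <;> by_cases hk : k = i
        · exact (hjk (hj.trans hk.symm)).elim
        · subst hj
          rw [Function.update_self, Function.update_of_ne hk]
          intro u hu; cases hu; exact hfree k hk
        · subst hk
          rw [Function.update_self, Function.update_of_ne hj]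
          intro u hu hu'; cases hu'; exact hfree j hj hu
        · rw [Function.update_of_ne hj, Function.update_of_ne hk]
          exact cells_apart c hjk)
      obtain ⟨z', hz', hc'⟩ := push_up d (i := i) (v := v) (h := e) (by rw [hd]; simp) hv
      have hcz : ms c = ms z' := by
        have : cells z' = cells c := by
          rw [hc', hd, Function.update_idem, ← h, Function.update_eq_self]
        unfold ms; rw [this]
      refine (ms_joined hcz).trans (hz'.joined.symm.trans (ih _ ?_ d rfl))
      rw [← hn, hd]
      exact sum_update _ _ _ _ (by rw [h]; exact hlt)

theorem uconf_joined (hconn : Γ.Connected) (hedge : Γ.edgeSet.Nonempty)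
    (x y : UConf 3 (realization Γ)) : Joined x y := by
  obtain ⟨e0, he0⟩ := hedge
  obtain ⟨z, hz⟩ := exists_conf (exists_adj hconn ⟨e0, he0⟩) (fun _ => inr ⟨e0, he0⟩)
    (fun _ _ _ v hv => by cases hv)
  obtain ⟨c, rfl⟩ := (csys Γ).surj x
  obtain ⟨d, rfl⟩ := (csys Γ).surj y
  have := conf_joined hconn ⟨e0, he0⟩ (p := e0.out.1) (e0 := ⟨e0, he0⟩) (Sym2.out_fst_mem e0) z
    (fun i => congrFun hz i)
  exact (this _ c rfl).trans (this _ d rfl).symm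

end Conn

end

/-! ### The presentation of the braid group -/

section
open Sum

section Pres
variable {V : Type} [Fintype V] [DecidableEq V] {Γ : SimpleGraph V}

/-- A representative of all configurations with the same multiset of cells. -/
def rep (c : CC Γ) : CC Γ := (Quotient.mk (Setoid.ker (ms : CC Γ → _)) c).out

theorem rep_eq {c d : CC Γ} (h : ms c = ms d) : rep c = rep d := by
  unfold rep; rw [Quotient.sound (s := Setoid.ker (ms : CC Γ → _)) h]

theorem ms_rep (c : CC Γ) : ms (rep c) = ms c :=
  Quotient.exact (s := Setoid.ker (ms : CC Γ → _)) (Quotient.out_eq _)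

theorem Sim.ms {c d : CC Γ} (h : Sim c d) : ms c = ms d := by
  unfold GraphBraid.ms; rw [h.cells]

theorem Sim.uniq {c d e : CC Γ} {σ τ : Equiv.Perm (Fin 3)} (h : Sim (σ • c) e) (h' : Sim (τ • d) e)
    (hcd : Sim c d) : σ = τ := by
  have h1 : Sim (σ • c) (τ • c) := h.trans (h'.symm.trans (hcd.symm.smul τ))
  have h2 : Sim ((τ⁻¹ * σ) • c) c := by
    have := h1.smul τ⁻¹
    rwa [smul_smul, inv_smul_smul] at this
  have := h2.fix
  exact (inv_mul_eq_one.1 this).symm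

variable {x : UConf 3 (realization Γ)} (p : ∀ y, Path x y)

/-- The transition from a configuration to its representative. -/
def rr (c : CC Γ) : FundamentalGroup (UConf 3 (realization Γ)) x :=
  (csys Γ).G p ((perm_sim (ms_rep c).symm).choose • c) (rep c)

theorem rr_eq {c : CC Γ} {σ : Equiv.Perm (Fin 3)} (h : Sim (σ • c) (rep c)) :
    rr p c = (csys Γ).G p (σ • c) (rep c) := by
  unfold rr
  rw [Sim.uniq (perm_sim (ms_rep c).symm).choose_spec h (Sim.refl c)]

theorem rr_smul (σ : Equiv.Perm (Fin 3)) (c : CC Γ) : rr p (σ • c) = rr p c := by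
  obtain ⟨τ, hτ⟩ := perm_sim (ms_rep (σ • c)).symm
  have hr : rep (σ • c) = rep c := rep_eq (ms_smul σ c)
  rw [rr_eq p hτ, hr]
  rw [hr, smul_smul] at hτ
  rw [rr_eq p hτ, smul_smul]

theorem rr_sim {c d : CC Γ} (h : Sim c d) : rr p c = (csys Γ).G p c d * rr p d := by
  obtain ⟨τ, hτ⟩ := perm_sim (ms_rep d).symm
  have hr : rep c = rep d := rep_eq h.ms
  have hc : Sim (τ • c) (rep c) := by rw [hr]; exact (h.smul τ).trans hτ
  rw [rr_eq p hτ, rr_eq p hc, hr, ← (csys Γ).G_smul p τ (show (csys Γ).R d c from h.2)]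
  exact ((csys Γ).G_comp p (show (csys Γ).R (rep d) (τ • d) from hτ.2)
    (show (csys Γ).R (τ • d) (τ • c) from deg_smul τ h.2)).symm

/-- Transition elements normalised so as to depend on open cells only. -/
def gp (z c : CC Γ) : FundamentalGroup (UConf 3 (realization Γ)) x :=
  (rr p z)⁻¹ * (csys Γ).G p z c * rr p c

theorem gp_smul (σ : Equiv.Perm (Fin 3)) {z c : CC Γ} (h : Deg c z) :
    gp p (σ • z) (σ • c) = gp p z c := by
  unfold gp
  rw [rr_smul, rr_smul, (csys Γ).G_smul p σ h]

theorem gp_comp {c d z : CC Γ} (h : Deg c d) (h' : Deg d z) : gp p z d * gp p d c = gp p z c := by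
  unfold gp
  rw [← (csys Γ).G_comp p h h']
  group

theorem gp_one {c z : CC Γ} (h : Sim c z) : gp p z c = 1 := by
  unfold gp
  rw [rr_sim p h.symm]; group

theorem gp_sim {c c' z z' : CC Γ} (h : Deg c z) (hc : Sim c c') (hz : Sim z z') :
    gp p z c = gp p z' c' := by
  have h1 := gp_comp p (hc.2.trans h) hz.1
  have h2 := gp_comp p hc.2 h
  rw [gp_one p hz, one_mul] at h1
  rw [gp_one p hc.symm, mul_one] at h2
  rw [h2, h1]

theorem Deg.near {c z : CC Γ} (h : Deg c z) {i j : Fin 3} (hij : j ≠ i) {v : V}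
    (hc : cells c i = inl v) (hz : cells z i = cells z j) : (z.1 j).1 v < (z.1 i).1 v := by
  by_contra hle
  push Not at hle
  have h1 := h.ord i j v (cell_eq_iff.1 hz) hle
  have hcv := cell_vert_val hc v
  rw [if_pos rfl] at hcv
  rw [hcv] at h1
  have h2 : (c.1 j).1 v = 1 := le_antisymm (real_le_one _ _) h1
  refine cells_apart c hij v (cell_unique fun u => ?_) hc
  rw [mem_inl]
  constructor
  · intro hu
    obtain ⟨a, b, hab, hx⟩ := real_edge (c.1 j)
    have := real_pair (c.1 j) hab.ne hx
    by_contra hn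
    rcases hx u hu with rfl | rfl <;> rcases hx v (by rw [h2]; norm_num) with rfl | rfl
    · exact hn rfl
    · exact hu (by linarith)
    · exact hu (by linarith)
    · exact hn rfl
  · rintro rfl; rw [h2]; norm_num

/-- A configuration pair realising the elementary move of the first particle from the edge `h` to
its end `v`, the others being in the cells `a`, `b`. -/
structure Flag (v : V) (h : Γ.edgeSet) (a b : V ⊕ Γ.edgeSet) (c z : CC Γ) : Prop where
  deg : Deg c z
  z0 : cells z 0 = inr h
  z1 : cells z 1 = a
  z2 : cells z 2 = b
  c0 : cells c 0 = inl v
  c1 : cells c 1 = a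
  c2 : cells c 2 = b

variable {v : V} {h : Γ.edgeSet} {a b : V ⊕ Γ.edgeSet} {c z c' z' : CC Γ}

theorem Flag.swap (H : Flag v h a b c z) :
    Flag v h b a (Equiv.swap (1 : Fin 3) 2 • c) (Equiv.swap (1 : Fin 3) 2 • z) := by
  have s0 : (Equiv.swap (1 : Fin 3) 2).symm 0 = 0 := by decide
  have s1 : (Equiv.swap (1 : Fin 3) 2).symm 1 = 2 := by decide
  have s2 : (Equiv.swap (1 : Fin 3) 2).symm 2 = 1 := by decide
  constructor
  · exact deg_smul _ H.deg
  all_goals simp only [cells_smul, Function.comp, s0, s1, s2]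
  exacts [H.z0, H.z2, H.z1, H.c0, H.c2, H.c1]

theorem Flag.eq_aux (H : Flag v h a b c z) (H' : Flag v h a b c' z')
    (ho : a = b → ∃ u, ((c.1 1).1 u < (c.1 2).1 u ∧ (c'.1 1).1 u < (c'.1 2).1 u) ∨
      ((c.1 2).1 u < (c.1 1).1 u ∧ (c'.1 2).1 u < (c'.1 1).1 u)) : gp p z c = gp p z' c' := by
  have hcc : cells c = cells c' := by
    funext i; fin_cases i
    exacts [H.c0.trans H'.c0.symm, H.c1.trans H'.c1.symm, H.c2.trans H'.c2.symm]
  have hzz : cells z = cells z' := by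
    funext i; fin_cases i
    exacts [H.z0.trans H'.z0.symm, H.z1.trans H'.z1.symm, H.z2.trans H'.z2.symm]
  have lift : ∀ {c z : CC Γ}, Deg c z → ∀ i j u, cells z i = cells z j →
      (c.1 i).1 u < (c.1 j).1 u → (z.1 i).1 u < (z.1 j).1 u := by
    intro c z hd i j u hc hlt
    by_contra hle
    push Not at hle
    exact absurd (hd.ord j i u (cell_eq_iff.1 hc.symm) hle) (not_le.2 hlt)
  refine gp_sim p H.deg (sim_of hcc fun i j hij he => ?_) (sim_of hzz fun i j hij he => ?_)
  · have h0 : i ≠ 0 := by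
      rintro rfl
      exact cells_apart c hij.ne v H.c0 (he ▸ H.c0)
    obtain ⟨rfl, rfl⟩ : i = 1 ∧ j = 2 := by omega
    exact ho (by rw [← H.c1, ← H.c2, he])
  · by_cases h0 : i = 0
    · subst h0
      exact ⟨v, Or.inr ⟨H.deg.near hij.ne' H.c0 he, H'.deg.near hij.ne' H'.c0 (by rw [← hzz, he])⟩⟩
    obtain ⟨rfl, rfl⟩ : i = 1 ∧ j = 2 := by omega
    obtain ⟨u, hu | hu⟩ := ho (by rw [← H.z1, ← H.z2, he])
    · exact ⟨u, Or.inl ⟨lift H.deg _ _ _ he hu.1, lift H'.deg _ _ _ (by rw [← hzz, he]) hu.2⟩⟩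
    · exact ⟨u, Or.inr ⟨lift H.deg _ _ _ he.symm hu.1,
        lift H'.deg _ _ _ (by rw [← hzz, he]) hu.2⟩⟩

theorem Flag.eq (H : Flag v h a b c z) (H' : Flag v h a b c' z') : gp p z c = gp p z' c' := by
  by_cases hab : a = b
  swap
  · exact H.eq_aux p H' fun h => (hab h).elim
  have hne : ∀ {c z : CC Γ}, Flag v h a b c z → (c.1 1).1 (lo a) ≠ (c.1 2).1 (lo a) := by
    intro c z H he
    have : c.1 1 = c.1 2 := by
      refine real_eq' (cell_eq_iff.1 (H.c1.trans (hab.trans H.c2.symm))) ?_ he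
      have h1 : cell (c.1 1) = a := H.c1
      rw [cell_spec, h1]
      exact lo_mem _
    exact absurd (c.2 this) (by decide)
  subst hab
  have n1 := hne H
  have n2 := hne H'
  have s1 : (Equiv.swap (1 : Fin 3) 2).symm 1 = 2 := by decide
  have s2 : (Equiv.swap (1 : Fin 3) 2).symm 2 = 1 := by decide
  rcases lt_or_gt_of_ne n1 with h1 | h1 <;> rcases lt_or_gt_of_ne n2 with h2 | h2
  · exact H.eq_aux p H' fun _ => ⟨_, Or.inl ⟨h1, h2⟩⟩
  · rw [← gp_smul p (Equiv.swap 1 2) H'.deg]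
    refine H.eq_aux p H'.swap fun _ => ⟨lo a, Or.inl ⟨h1, ?_⟩⟩
    rw [smul_val, smul_val, s1, s2]; exact h2
  · rw [← gp_smul p (Equiv.swap 1 2) H'.deg]
    refine H.eq_aux p H'.swap fun _ => ⟨lo a, Or.inr ⟨h1, ?_⟩⟩
    rw [smul_val, smul_val, s1, s2]; exact h2
  · exact H.eq_aux p H' fun _ => ⟨_, Or.inr ⟨h1, h2⟩⟩

/-- The element of the braid group attached to an elementary move. -/
def gm (v : V) (h : Γ.edgeSet) (a b : V ⊕ Γ.edgeSet) : FundamentalGroup (UConf 3 (realization Γ)) x :=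
  if H : ∃ cz : CC Γ × CC Γ, Flag v h a b cz.1 cz.2 then gp p H.choose.2 H.choose.1 else 1

theorem Flag.gm (H : Flag v h a b c z) : gp p z c = gm p v h a b := by
  have H' : ∃ cz : CC Γ × CC Γ, Flag v h a b cz.1 cz.2 := ⟨(c, z), H⟩
  unfold GraphBraid.gm
  rw [dif_pos H']
  exact H.eq p H'.choose_spec

theorem gm_symm (v : V) (h : Γ.edgeSet) (a b : V ⊕ Γ.edgeSet) : gm p v h a b = gm p v h b a := by
  by_cases H : ∃ cz : CC Γ × CC Γ, Flag v h a b cz.1 cz.2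
  · obtain ⟨⟨c, z⟩, H⟩ := H
    rw [← H.gm p, ← H.swap.gm p, gp_smul p _ H.deg]
  · have H' : ¬ ∃ cz : CC Γ × CC Γ, Flag v h b a cz.1 cz.2 := by
      rintro ⟨⟨c, z⟩, H'⟩
      exact H ⟨(_, _), H'.swap⟩
    unfold gm
    rw [dif_neg H, dif_neg H']

theorem inj3 : ∀ {i j k : Fin 3}, i ≠ j → i ≠ k → j ≠ k → Function.Injective ![i, j, k] := by
  decide

theorem others3 : ∀ i : Fin 3, ∃ j k : Fin 3, i ≠ j ∧ i ≠ k ∧ j ≠ k := by decide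

theorem gm_move (hd : Deg c z) {i j k : Fin 3} (hij : i ≠ j) (hik : i ≠ k) (hjk : j ≠ k)
    (hzi : cells z i = inr h) (hci : cells c i = inl v) (hj : cells z j = a) (hj' : cells c j = a)
    (hk : cells z k = b) (hk' : cells c k = b) : gp p z c = gm p v h a b := by
  have hinj : Function.Injective ![i, j, k] := inj3 hij hik hjk
  let τ : Equiv.Perm (Fin 3) := Equiv.ofBijective _ (Finite.injective_iff_bijective.1 hinj)
  have t0 : τ 0 = i := rfl
  have t1 : τ 1 = j := rfl
  have t2 : τ 2 = k := rfl
  rw [← gp_smul p τ.symm hd]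
  apply Flag.gm
  constructor
  · exact deg_smul _ hd
  all_goals simpa only [cells_smul, Function.comp, Equiv.symm_symm, t0, t1, t2]

theorem gm_flat (hadj : ∀ v, ∃ w, Γ.Adj v w) : Flat (einc Γ) (gm p) := by
  refine ⟨gm_symm p, fun v h w k e hvw hv hw hev hew => ?_⟩
  obtain ⟨c, hc⟩ := exists_conf hadj ![inl v, inl w, e] (by
    intro i j hij u hi hj
    fin_cases i <;> fin_cases j <;> simp at hi hj hij <;> simp_all)
  have c0 : cells c 0 = inl v := by rw [hc]; rfl
  have c1 : cells c 1 = inl w := by rw [hc]; rfl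
  have c2 : cells c 2 = e := by rw [hc]; rfl
  obtain ⟨d, hcd, hd⟩ := push_up c c0 hv
  have d0 : cells d 0 = inr h := by rw [hd]; rfl
  have d1 : cells d 1 = inl w := by rw [hd]; exact c1
  have d2 : cells d 2 = e := by rw [hd]; exact c2
  obtain ⟨z, hdz, hz⟩ := push_up d d1 hw
  have z0 : cells z 0 = inr h := by rw [hz]; exact d0
  have z1 : cells z 1 = inr k := by rw [hz]; rfl
  have z2 : cells z 2 = e := by rw [hz]; exact d2
  have hcz := hcd.trans hdz
  obtain ⟨d', hd', hcd', hdz'⟩ := mix hcz (i := 0) (by rw [c0, z0]; simp)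
  have d'0 : cells d' 0 = inl v := by unfold cells; rw [hd']; exact c0
  have d'1 : cells d' 1 = inr k := by unfold cells; rw [hd']; exact z1
  have d'2 : cells d' 2 = e := by unfold cells; rw [hd']; exact z2
  have e1 := gp_comp p hcd hdz
  have e2 := gp_comp p hcd' hdz'
  rw [gm_move p hdz (i := 1) (j := 2) (k := 0) (by decide) (by decide) (by decide) z1 d1 z2 d2 z0 d0,
    gm_move p hcd (i := 0) (j := 2) (k := 1) (by decide) (by decide) (by decide) d0 c0 d2 c2 d1 c1] at e1
  rw [gm_move p hdz' (i := 0) (j := 2) (k := 1) (by decide) (by decide) (by decide) z0 d'0 z2 d'2 z1 d'1,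
    gm_move p hcd' (i := 1) (j := 2) (k := 0) (by decide) (by decide) (by decide) d'1 c1 d'2 c2 d'0 c0] at e2
  rw [e1, e2]

theorem exists_flag (hadj : ∀ v, ∃ w, Γ.Adj v w) (H : Valid (einc Γ) v h a b) :
    ∃ c z : CC Γ, Flag v h a b c z := by
  obtain ⟨c, hc⟩ := exists_conf hadj ![inl v, a, b] (by
    have := H.ha
    have := H.hb
    have := H.hab
    intro i j hij u hi hj
    fin_cases i <;> fin_cases j <;> simp at hi hj hij <;> simp_all)
  have c0 : cells c 0 = inl v := by rw [hc]; rfl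
  have c1 : cells c 1 = a := by rw [hc]; rfl
  have c2 : cells c 2 = b := by rw [hc]; rfl
  obtain ⟨z, hd, hz⟩ := push_up c c0 H.inc
  exact ⟨c, z, hd, by rw [hz]; rfl, by rw [hz]; exact c1, by rw [hz]; exact c2, c0, c1, c2⟩

theorem st_perm {A B : Type} (f : Fin 3 → A ⊕ B) {i j k : Fin 3} (hij : i ≠ j) (hik : i ≠ k) (hjk : j ≠ k) :
    st (f i) (f j) (f k) = st (f 0) (f 1) (f 2) := by
  have hinj : Function.Injective ![i, j, k] := inj3 hij hik hjk
  let τ : Equiv.Perm (Fin 3) := Equiv.ofBijective _ (Finite.injective_iff_bijective.1 hinj)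
  have := st_map (f ∘ τ)
  rw [st_map, ← (show st (f i) (f j) (f k) = _ from this).symm, ← Multiset.map_map]
  congr 1
  exact congrArg Finset.val (Finset.map_univ_equiv τ)

/-- A degeneration translates into a sequence of elementary moves. -/
theorem reach_step (s : Multiset (V ⊕ Γ.edgeSet)) : ∀ (n : ℕ) (c z : CC Γ), Deg c z →
    (Finset.univ.filter fun i => cells c i ≠ cells z i).card = n →
    (∀ y, Reach (einc Γ) (gm p) s (ms z) y → Reach (einc Γ) (gm p) s (ms c) (y * gp p z c)) ∧
    (∀ y, Reach (einc Γ) (gm p) s (ms c) y → Reach (einc Γ) (gm p) s (ms z) (y * (gp p z c)⁻¹)) := by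
  intro n
  induction n using Nat.strong_induction_on with
  | _ n ih =>
    intro c z hd hn
    by_cases hall : ∀ i, cells c i = cells z i
    · have hsim : Sim c z := by
        refine ⟨hd, ⟨fun i v hv => ((cell_eq_iff.1 (hall i)) v).1 hv, fun i j v hs hle => ?_⟩⟩
        by_contra hlt
        push Not at hlt
        have hs' : ∀ u, (z.1 i).1 u = 0 ↔ (z.1 j).1 u = 0 :=
          cell_eq_iff.1 ((hall i).symm.trans ((cell_eq_iff.2 hs).trans (hall j)))
        have h1 := hd.ord j i v (fun u => (hs' u).symm) hlt.le
        have h2 : (c.1 i).1 v = (c.1 j).1 v := le_antisymm hle h1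
        by_cases h0 : (c.1 i).1 v = 0
        · have h3 := (cell_eq_iff.1 (hall i) v).1 h0
          have h4 := real_nonneg (z.1 j) v
          linarith
        · have := c.2 (real_eq' hs h0 h2)
          rw [this] at hlt; exact lt_irrefl _ hlt
      rw [gp_one p hsim, hsim.ms]
      exact ⟨fun y hy => by rwa [mul_one], fun y hy => by rwa [inv_one, mul_one]⟩
    push Not at hall
    obtain ⟨i, hi⟩ := hall
    obtain ⟨v, h, hzi, hci, hv⟩ := hd.cells_eq hi
    obtain ⟨d, hd1, hcd, hdz⟩ := mix hd hi
    have hdi : cells d i = inl v := by unfold cells; rw [hd1, Function.update_self]; exact hci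
    have hdj : ∀ j, j ≠ i → cells d j = cells z j := fun j hj => by
      unfold cells; rw [hd1, Function.update_of_ne hj]
    obtain ⟨j, k, hij, hik, hjk⟩ : ∃ j k : Fin 3, i ≠ j ∧ i ≠ k ∧ j ≠ k := others3 i
    have hg := gm_move p hdz hij hik hjk hzi hdi rfl (hdj j hij.symm) rfl (hdj k hik.symm)
    have mz : ms z = st (inr h) (cells z j) (cells z k) := by
      rw [← hzi]; exact (st_perm _ hij hik hjk).symm
    have md : ms d = st (inl v) (cells z j) (cells z k) := by
      rw [← hdi, ← hdj j hij.symm, ← hdj k hik.symm]; exact (st_perm _ hij hik hjk).symm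
    have hval : Valid (einc Γ) v h (cells z j) (cells z k) := by
      refine ⟨hv, fun h' => ?_, fun h' => ?_, cells_apart z hjk⟩
      · exact cells_apart d hij v hdi ((hdj j hij.symm).trans h')
      · exact cells_apart d hik v hdi ((hdj k hik.symm).trans h')
    obtain ⟨i1, i2⟩ := ih _ (by
      rw [← hn]
      apply Finset.card_lt_card
      rw [Finset.ssubset_iff_of_subset]
      · exact ⟨i, by simpa using hi, by simp [hdi, hci]⟩
      · intro l hl
        simp only [Finset.mem_filter, Finset.mem_univ, true_and] at hl ⊢
        by_cases hli : l = i
        · subst hli; exact hi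
        · rwa [hdj l hli] at hl) c d hcd rfl
    rw [← gp_comp p hcd hdz, hg]
    constructor
    · intro y hy
      rw [← mul_assoc]
      apply i1
      rw [md]; rw [mz] at hy
      exact hy.fwd hval
    · intro y hy
      have := i2 y hy
      rw [md] at this
      rw [mz, mul_inv_rev, ← mul_assoc]
      exact this.bwd hval

theorem reach_zig (c0 : CC Γ) {c : CC Γ} {y : FundamentalGroup (UConf 3 (realization Γ)) x}
    (hz : CSys.Zig (csys Γ) ((csys Γ).G p) c0 c y) :
    Reach (einc Γ) (gm p) (ms c0) (ms c) ((rr p c0)⁻¹ * y * rr p c) := by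
  induction hz with
  | refl =>
    rw [mul_one, inv_mul_cancel]
    exact Reach.refl
  | @up c z y h _ ih =>
    have := (reach_step p (ms c0) _ c z h rfl).2 _ ih
    convert this using 1
    unfold gp; group
  | @down c z y h _ ih =>
    have := (reach_step p (ms c0) _ c z h rfl).1 _ ih
    convert this using 1
    unfold gp; group
  | @perm c y σ _ ih => rwa [ms_smul, rr_smul]

end Pres

/-- The 3-braid group of a connected graph is presented by the elementary moves. -/
theorem presents {V : Type} [Fintype V] [DecidableEq V] {Γ : SimpleGraph V} (hconn : Γ.Connected)
    (hedge : Γ.edgeSet.Nonempty) (x : UConf 3 (realization Γ)) :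
    Presents (einc Γ) (FundamentalGroup (UConf 3 (realization Γ)) x) := by
  have hadj := exists_adj hconn hedge
  let p : ∀ y, Path x y := fun y => (uconf_joined hconn hedge x y).somePath
  refine ⟨⟨gm p, gm_flat p hadj, fun F _ lam hl => ?_, ?_⟩⟩
  · obtain ⟨Φ, q, hΦ⟩ := (csys Γ).univ p (lc_local hl)
    let Q : CC Γ → F := fun c => (Φ (rr p c))⁻¹ * q ((csys Γ).π c)
    have Lone : ∀ {c z : CC Γ}, cells z = cells c → Lc lam (cells z) (cells c) = 1 := by
      intro c z h; rw [h]; simp [Lc]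
    have hQ : ∀ c d : CC Γ, ms c = ms d → Q c = Q d := by
      intro c d h
      obtain ⟨σ, hσ⟩ := perm_sim h
      have h1 : Q (σ • c) = Q c := by simp only [Q]; rw [rr_smul, CSys.π_smul]
      rw [← h1]
      simp only [Q]
      rw [rr_sim p hσ, map_mul, hΦ _ _ hσ.2, Lone hσ.cells]
      group
    refine ⟨Φ, fun s => if h : ∃ c : CC Γ, ms c = s then Q h.choose else 1, ?_⟩
    have hq : ∀ c : CC Γ, (if h : ∃ d : CC Γ, ms d = ms c then Q h.choose else 1) = Q c := by
      intro c
      have h : ∃ d : CC Γ, ms d = ms c := ⟨c, rfl⟩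
      rw [dif_pos h]
      exact hQ _ _ h.choose_spec
    intro v h a b hv
    obtain ⟨c, z, H⟩ := exists_flag hadj hv
    have mc : ms c = st (inl v) a b := by unfold ms; rw [H.c0, H.c1, H.c2]
    have mz : ms z = st (inr h) a b := by unfold ms; rw [H.z0, H.z1, H.z2]
    simp only []
    rw [← mc, ← mz, hq, hq, ← H.gm p]
    have hL : Lc lam (cells z) (cells c) = lam v h a b := by
      unfold Lc
      rw [H.z0, H.z1, H.z2, H.c0, H.c1, H.c2]; simp
    simp only [gp, map_mul, map_inv, hΦ _ _ H.deg, hL, Q]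
    group
  · obtain ⟨c0, hc0⟩ := (csys Γ).surj x
    refine ⟨ms c0, fun y => ?_⟩
    obtain ⟨γ, hγ⟩ := W_surj p (rr p c0 * y * (rr p c0)⁻¹)⁻¹
    have hz := (csys Γ).zig_path p (c0 := c0) (γ.cast hc0 rfl) c0 hc0
    have : W p (γ.cast hc0 rfl) = W p γ := W_congr p _ _ fun t => rfl
    rw [this, hγ, inv_inv] at hz
    have := reach_zig p c0 hz
    convert this using 1
    group

end

/-! ### Counting edges -/

section
open Sum SimpleGraph

section Counting
variable {V : Type} {Γ : SimpleGraph V}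

/-- Degree of `v` into the vertex set `S`. -/
def dg (Γ : SimpleGraph V) (S : Finset V) (v : V) : ℕ := (S.filter (Γ.Adj v)).card

/-- Degree sum of the subgraph induced on `S`. -/
def dsum (Γ : SimpleGraph V) (S : Finset V) : ℕ := ∑ v ∈ S, dg Γ S v

theorem dg_erase {S : Finset V} {x : V} (hx : x ∈ S) (v : V) :
    dg Γ S v = dg Γ (S.erase x) v + if Γ.Adj x v then 1 else 0 := by
  simp only [dg, Finset.card_filter]
  rw [← Finset.add_sum_erase S _ hx, add_comm]
  simp [Γ.adj_comm]

theorem dsum_erase {S : Finset V} {x : V} (hx : x ∈ S) :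
    dsum Γ S = dsum Γ (S.erase x) + 2 * dg Γ S x := by
  have h1 : dg Γ S x = ∑ v ∈ S.erase x, if Γ.Adj x v then 1 else 0 := by
    rw [dg_erase hx]
    simp [dg]
  have h2 : ∑ v ∈ S.erase x, dg Γ S v = dsum Γ (S.erase x) + dg Γ S x := by
    rw [h1, dsum, ← Finset.sum_add_distrib]
    exact Finset.sum_congr rfl fun v _ => dg_erase hx v
  rw [dsum, ← Finset.add_sum_erase S _ hx, h2]
  ring

/-- The graph induced on the complement of `p` is a forest: every nonempty vertex set avoiding `p`
spans a vertex of degree at most one. -/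
def Forest (Γ : SimpleGraph V) (p : V) : Prop :=
  ∀ S : Finset V, S.Nonempty → p ∉ S → ∃ x ∈ S, dg Γ S x ≤ 1

theorem Forest.dsum_le {p : V} (h : Forest Γ p) (S : Finset V) (hS : S.Nonempty) (hp : p ∉ S) :
    dsum Γ S + 2 ≤ 2 * S.card := by
  induction hn : S.card using Nat.strong_induction_on generalizing S with
  | _ n ih =>
    obtain ⟨x, hx, hd⟩ := h S hS hp
    have hc := Finset.card_erase_of_mem hx
    have hpos := hS.card_pos
    have he := dsum_erase (Γ := Γ) hx
    by_cases hE : (S.erase x).Nonempty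
    · have := ih _ (by omega) (S.erase x) hE (fun h => hp (Finset.mem_of_mem_erase h)) rfl
      have := hE.card_pos
      omega
    · rw [Finset.not_nonempty_iff_eq_empty] at hE
      have h0 : dg Γ S x = 0 := by
        rw [dg_erase hx, hE]
        simp [dg]
      rw [hE] at he
      simp [dsum, h0] at he
      have : dsum Γ S = 0 := by simpa [dsum] using he
      omega

/-- If all cycles pass through `p`, its complement is a forest. -/
theorem forest_of_cycles [Fintype V] {p : V}
    (hp : ∀ H : Γ.Subgraph, IsCycleSubgraph H → p ∈ H.verts) : Forest Γ p := by
  intro S hS hpS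
  let G := del Γ (↑S)ᶜ
  have hGadj : ∀ x y, G.Adj x y ↔ Γ.Adj x y ∧ x ∈ S ∧ y ∈ S := by
    intro x y
    simp [G, del]
  have hG : G.IsAcyclic := acyclic_del fun H hH => ⟨p, hp H hH, by simpa using hpS⟩
  have : Nonempty V := ⟨p⟩
  obtain ⟨u, v, w, hw, hmax⟩ := Walk.exists_isPath_forall_isPath_length_le_length G
  by_cases hE : ∃ x y, G.Adj x y
  · obtain ⟨x, y, hxy⟩ := hE
    have h1 : 1 ≤ w.length := by
      simpa using hmax x y (Walk.cons hxy .nil) (by simp [hxy.ne])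
    have huS : u ∈ S := by
      cases w with
      | nil => simp at h1
      | cons h _ => exact ((hGadj _ _).1 h).2.1
    refine ⟨u, huS, Finset.card_le_one.2 ?_⟩
    have key : ∀ a ∈ S.filter (Γ.Adj u), a = w.snd := by
      intro a ha
      rw [Finset.mem_filter] at ha
      have hua : G.Adj u a := (hGadj _ _).2 ⟨ha.2, huS, ha.1⟩
      refine hG.eq_snd_of_adj_start hw hua ?_
      by_contra hns
      have := hmax a v (Walk.cons hua.symm w) (by simp [Walk.cons_isPath_iff, hw, hns])
      simp at this
    intro a ha b hb
    rw [key a ha, key b hb]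
  · obtain ⟨x, hx⟩ := hS
    refine ⟨x, hx, Finset.card_le_one.2 fun a ha => ?_⟩
    rw [Finset.mem_filter] at ha
    exact absurd ⟨x, a, (hGadj _ _).2 ⟨ha.2, hx, ha.1⟩⟩ hE

/-- Three distinct vertices lying on all cycles force first Betti number at most one. -/
theorem no_three {p q r : V} (hpq : p ≠ q) (hpr : p ≠ r) (hqr : q ≠ r)
    (fp : Forest Γ p) (fq : Forest Γ q) (fr : Forest Γ r) (S : Finset V) :
    dsum Γ S ≤ 2 * S.card := by
  induction hn : S.card using Nat.strong_induction_on generalizing S with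
  | _ n ih =>
    by_contra hlt
    push Not at hlt
    have hne : S.Nonempty := by
      rw [Finset.nonempty_iff_ne_empty]
      rintro rfl
      simp [dsum] at hlt
    have hge : ∀ x ∈ S, 2 ≤ dg Γ S x := by
      intro x hx
      have hc := Finset.card_erase_of_mem hx
      have hpos := hne.card_pos
      have he := dsum_erase (Γ := Γ) hx
      have := ih _ (by omega) (S.erase x) rfl
      omega
    have hess : ∀ a, Forest Γ a → a ∈ S ∧ dsum Γ S + 4 ≤ 2 * dg Γ S a + 2 * n := by
      intro a fa
      have ha : a ∈ S := by
        by_contra ha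
        have := fa.dsum_le S hne ha
        omega
      refine ⟨ha, ?_⟩
      have hc := Finset.card_erase_of_mem ha
      have he := dsum_erase (Γ := Γ) ha
      have hE : (S.erase a).Nonempty := by
        rw [Finset.nonempty_iff_ne_empty]
        intro h0
        have h2 := hge a ha
        rw [dg_erase ha, h0] at h2
        simp [dg] at h2
      have := fa.dsum_le _ hE (by simp)
      have := hE.card_pos
      omega
    obtain ⟨hp, h1⟩ := hess p fp
    obtain ⟨hq, h2⟩ := hess q fq
    obtain ⟨hr, h3⟩ := hess r fr
    have hq' : q ∈ S.erase p := by simp [hq, hpq.symm]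
    have hr' : r ∈ (S.erase p).erase q := by simp [hr, hpr.symm, hqr.symm]
    have hs : dsum Γ S = dg Γ S p + (dg Γ S q + (dg Γ S r + ∑ v ∈ ((S.erase p).erase q).erase r, dg Γ S v)) := by
      rw [Finset.add_sum_erase _ _ hr', Finset.add_sum_erase _ _ hq', Finset.add_sum_erase _ _ hp, dsum]
    have hrest : (((S.erase p).erase q).erase r).card * 2 ≤ ∑ v ∈ ((S.erase p).erase q).erase r, dg Γ S v := by
      rw [← smul_eq_mul]
      refine Finset.card_nsmul_le_sum _ _ _ fun v hv => hge v ?_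
      simp at hv
      exact hv.2.2.2
    rw [Finset.card_erase_of_mem hr', Finset.card_erase_of_mem hq', Finset.card_erase_of_mem hp] at hrest
    omega

/-- In a connected graph, Betti number at least two on a vertex subset propagates to the whole
vertex set. -/
theorem dsum_grow [Fintype V] (hconn : Γ.Connected) (S : Finset V) (h : 2 * S.card + 1 ≤ dsum Γ S) :
    2 * Fintype.card V + 1 ≤ dsum Γ Finset.univ := by
  induction hn : Fintype.card V - S.card using Nat.strong_induction_on generalizing S with
  | _ n ih =>
    by_cases hS : S = Finset.univ
    · subst hS
      simpa using h
    have hne : S.Nonempty := by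
      rw [Finset.nonempty_iff_ne_empty]
      rintro rfl
      simp [dsum] at h
    obtain ⟨x, hx⟩ := hne
    obtain ⟨y, hy⟩ : ∃ y, y ∉ S := by
      by_contra hc
      push Not at hc
      exact hS (Finset.eq_univ_iff_forall.2 hc)
    obtain ⟨w⟩ := hconn.preconnected x y
    obtain ⟨d, -, h1, h2⟩ := w.exists_boundary_dart (↑S) (by simpa using hx) (by simpa using hy)
    simp only [Finset.mem_coe] at h1 h2
    have hc : (insert d.snd S).card = S.card + 1 := Finset.card_insert_of_notMem h2
    have hle : (insert d.snd S).card ≤ Fintype.card V := Finset.card_le_univ _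
    have he := dsum_erase (Γ := Γ) (Finset.mem_insert_self d.snd S)
    rw [Finset.erase_insert h2] at he
    have hd : 0 < dg Γ (insert d.snd S) d.snd :=
      Finset.card_pos.2 ⟨d.fst, by simp [h1, d.adj.symm]⟩
    exact ih _ (by omega) (insert d.snd S) (by omega) rfl

/-- The union of two distinct cycles with a common vertex has first Betti number at least two. -/
theorem dsum_two_cycles [Fintype V] {H H' : Γ.Subgraph} (hH : IsCycleSubgraph H)
    (hH' : IsCycleSubgraph H') (hne : H ≠ H') {p : V} (hp : p ∈ H.verts) (hp' : p ∈ H'.verts) :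
    ∃ S : Finset V, 2 * S.card + 1 ≤ dsum Γ S := by
  let S : Finset V := Finset.univ.filter fun v => v ∈ H.verts ∨ v ∈ H'.verts
  refine ⟨S, ?_⟩
  by_contra hlt
  push Not at hlt
  have sub : ∀ K : Γ.Subgraph, IsCycleSubgraph K → (∀ v ∈ K.verts, v ∈ S) → ∀ v ∈ K.verts,
      K.neighborSet v ⊆ ↑(S.filter (Γ.Adj v)) := by
    intro K hK hKS v hv u hu
    have hu' : K.Adj v u := hu
    simp only [Finset.coe_filter]
    exact ⟨hKS u (K.edge_vert hu'.symm), hu'.adj_sub⟩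
  have hS1 : ∀ v ∈ H.verts, v ∈ S := fun v hv => by simp [S, hv]
  have hS2 : ∀ v ∈ H'.verts, v ∈ S := fun v hv => by simp [S, hv]
  have two : ∀ K : Γ.Subgraph, IsCycleSubgraph K → (∀ v ∈ K.verts, v ∈ S) → ∀ v ∈ K.verts,
      2 ≤ dg Γ S v := by
    intro K hK hKS v hv
    rw [← hK.2.2 v hv, dg, ← Set.ncard_coe_finset]
    exact Set.ncard_le_ncard (sub K hK hKS v hv) (Finset.finite_toSet _)
  have hge : ∀ v ∈ S, 2 ≤ dg Γ S v := by
    intro v hv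
    rcases (Finset.mem_filter.1 hv).2 with h | h
    · exact two H hH hS1 v h
    · exact two H' hH' hS2 v h
  have heq : ∀ v ∈ S, dg Γ S v = 2 := by
    have h1 : ∑ v ∈ S, 2 = ∑ v ∈ S, dg Γ S v :=
      le_antisymm (Finset.sum_le_sum hge) (by rw [Finset.sum_const, smul_eq_mul]; unfold dsum at hlt; omega)
    intro v hv
    exact ((Finset.sum_eq_sum_iff_of_le hge).1 h1 v hv).symm
  have nb : ∀ K : Γ.Subgraph, IsCycleSubgraph K → (∀ v ∈ K.verts, v ∈ S) → ∀ v ∈ K.verts,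
      K.neighborSet v = ↑(S.filter (Γ.Adj v)) := by
    intro K hK hKS v hv
    refine Set.eq_of_subset_of_ncard_le (sub K hK hKS v hv) ?_ (Finset.finite_toSet _)
    rw [Set.ncard_coe_finset, hK.2.2 v hv]
    exact (heq v (hKS v hv)).le
  have incl : ∀ K L : Γ.Subgraph, IsCycleSubgraph K → IsCycleSubgraph L → (∀ v ∈ K.verts, v ∈ S) →
      (∀ v ∈ L.verts, v ∈ S) → p ∈ K.verts → p ∈ L.verts → K ≤ L := by
    intro K L hK hL hKS hLS hpK hpL
    have hv : ∀ v ∈ K.verts, v ∈ L.verts := by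
      intro v hv
      obtain ⟨w⟩ := hK.2.1.preconnected ⟨p, hpK⟩ ⟨v, hv⟩
      by_contra hvL
      obtain ⟨d, -, h1, h2⟩ := w.exists_boundary_dart {x | x.1 ∈ L.verts} hpL hvL
      have hd : K.Adj d.fst d.snd := d.adj
      have h3 : (d.snd : V) ∈ K.neighborSet d.fst := hd
      rw [nb K hK hKS _ d.fst.2, ← nb L hL hLS _ h1] at h3
      exact h2 (L.edge_vert (show L.Adj _ _ from h3).symm)
    refine ⟨hv, fun x y hxy => ?_⟩
    have hx := K.edge_vert hxy
    have h3 : y ∈ K.neighborSet x := hxy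
    rw [nb K hK hKS _ hx, ← nb L hL hLS _ (hv x hx)] at h3
    exact h3
  exact hne (le_antisymm (incl H H' hH hH' hS1 hS2 hp hp') (incl H' H hH' hH hS2 hS1 hp' hp))

end Counting

end

/-! ### Homeomorphisms of realizations -/

section
open Sum SimpleGraph

section Homeo

theorem real_compact {V : Type} [Fintype V] [DecidableEq V] (Γ : SimpleGraph V) :
    IsCompact (realization Γ) := by
  refine isCompact_iUnion fun u => isCompact_iUnion fun v => isCompact_iUnion fun _ => ?_
  rw [← convexHull_pair]
  exact Set.Finite.isCompact_convexHull ℝ (Set.toFinite _)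

/-- A continuous map of ambient spaces restricting to a bijection of a compact set onto another set
restricts to a homeomorphism. -/
theorem homeo_of_maps {V V' : Type} {A : Set (V → ℝ)} {B : Set (V' → ℝ)} (hA : IsCompact A)
    (L : (V → ℝ) → (V' → ℝ)) (hL : Continuous L) (hm : Set.MapsTo L A B) (hi : Set.InjOn L A)
    (hs : Set.SurjOn L A B) : Nonempty (A ≃ₜ B) := by
  have := isCompact_iff_compactSpace.1 hA
  let e : A ≃ B := Equiv.ofBijective (hm.restrict L A B)
    ⟨(Set.MapsTo.restrict_inj hm).2 hi, (Set.MapsTo.restrict_surjective_iff hm).2 hs⟩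
  have he : Continuous e := hL.restrict hm
  exact ⟨he.homeoOfEquivCompactToT2⟩

theorem iso_homeo {V V' : Type} [Fintype V] [DecidableEq V] [Fintype V'] [DecidableEq V']
    {Γ : SimpleGraph V} {Γ' : SimpleGraph V'} (e : V ≃ V')
    (h : ∀ x y, Γ'.Adj (e x) (e y) ↔ Γ.Adj x y) :
    Nonempty (realization Γ ≃ₜ realization Γ') := by
  refine homeo_of_maps (real_compact Γ) (fun f => f ∘ e.symm) (by fun_prop) ?_ ?_ ?_
  · intro f hf
    obtain ⟨a, b, hab, hs⟩ := real_edge ⟨f, hf⟩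
    refine real_mk (a := e a) (b := e b) (fun v => real_nonneg ⟨f, hf⟩ _) ?_ ((h _ _).2 hab) ?_
    · rw [← real_sum ⟨f, hf⟩]
      exact Equiv.sum_comp e.symm f
    · intro v hv
      rcases hs _ hv with h | h
      · left; rw [← h]; simp
      · right; rw [← h]; simp
  · intro f _ g _ hfg
    funext x
    simpa using congrFun hfg (e x)
  · intro f hf
    obtain ⟨a, b, hab, hs⟩ := real_edge ⟨f, hf⟩
    refine ⟨f ∘ e, ?_, by funext x; simp⟩
    refine real_mk (a := e.symm a) (b := e.symm b) (fun v => real_nonneg ⟨f, hf⟩ _) ?_ ?_ ?_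
    · rw [← real_sum ⟨f, hf⟩]
      exact Equiv.sum_comp e f
    · rw [← h]; simpa using hab
    · intro v hv
      rcases hs _ hv with h | h
      · left; rw [← h]; simp
      · right; rw [← h]; simp

/-- Smoothing a vertex of degree two. The homeomorphism is the restriction of the linear map that
sends the removed vertex to the midpoint of the new edge. -/
theorem smooth_homeo {V : Type} [Fintype V] [DecidableEq V] [DecidableEq (Option V)]
    {Γ : SimpleGraph (Option V)} {Γ' : SimpleGraph V} {u v : V} (huv : u ≠ v)
    (hN : ∀ x, Γ.Adj none (some x) ↔ x = u ∨ x = v) (hnadj : ¬ Γ.Adj (some u) (some v))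
    (hA : ∀ x y, Γ'.Adj x y ↔ Γ.Adj (some x) (some y) ∨ (x = u ∧ y = v) ∨ (x = v ∧ y = u)) :
    Nonempty (realization Γ ≃ₜ realization Γ') := by
  refine homeo_of_maps (real_compact Γ) (fun f y => f (some y) + (if y = u then f none / 2 else 0)
    + (if y = v then f none / 2 else 0)) ?_ ?_ ?_ ?_
  · refine continuous_pi fun y => ?_
    split_ifs <;> fun_prop
  · intro f hf
    have h0 := real_nonneg ⟨f, hf⟩
    have h1 := real_sum ⟨f, hf⟩
    simp only [Fintype.sum_option] at h1
    have hnn : ∀ y, 0 ≤ f (some y) + (if y = u then f none / 2 else 0)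
        + (if y = v then f none / 2 else 0) := by
      intro y
      have := h0 none
      have := h0 (some y)
      dsimp only at *
      split_ifs <;> linarith
    have hsum : ∑ y, (f (some y) + (if y = u then f none / 2 else 0)
        + (if y = v then f none / 2 else 0)) = 1 := by
      simp only [Finset.sum_add_distrib, Finset.sum_ite_eq', Finset.mem_univ, if_true]
      linarith
    -- an endpoint of the supporting edge is the smoothed vertex
    have key : ∀ x, Γ.Adj none (some x) → (∀ y, f y ≠ 0 → y = none ∨ y = some x) →
        (fun y => f (some y) + (if y = u then f none / 2 else 0)
        + (if y = v then f none / 2 else 0)) ∈ realization Γ' := by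
      intro x hx hs
      refine real_mk (a := u) (b := v) hnn hsum ((hA u v).2 (by simp)) fun y hy => ?_
      by_contra hc
      push Not at hc
      simp only [hc.1, hc.2, if_false, add_zero] at hy
      rcases hs _ hy with h | h
      · simp at h
      · obtain rfl := Option.some.inj h
        rcases (hN _).1 hx with h | h
        exacts [hc.1 h, hc.2 h]
    obtain ⟨a, b, hab, hs⟩ := real_edge ⟨f, hf⟩
    dsimp only at hs
    cases a with
    | none =>
      cases b with
      | none => exact absurd rfl hab.ne
      | some x => exact key x hab hs
    | some z =>
      cases b with
      | none => exact key z hab.symm fun y hy => (hs y hy).symm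
      | some x =>
        have hf0 : f none = 0 := by
          by_contra h
          rcases hs _ h with h | h <;> simp at h
        refine real_mk (a := z) (b := x) hnn hsum ((hA z x).2 (Or.inl hab)) fun y hy => ?_
        simp only [hf0, zero_div, ite_self, add_zero] at hy
        simpa using hs _ hy
  · have key : ∀ f ∈ realization Γ, f none / 2 = min (f (some u) + f none / 2) (f (some v) + f none / 2) := by
      intro f hf
      have h0 := real_nonneg ⟨f, hf⟩
      have hz : f (some u) = 0 ∨ f (some v) = 0 := by
        by_contra hc
        push Not at hc
        obtain ⟨a, b, hab, hs⟩ := real_edge ⟨f, hf⟩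
        rcases hs _ hc.1 with rfl | rfl <;> rcases hs _ hc.2 with h | h
        · exact huv (Option.some.inj h).symm
        · subst h; exact hnadj hab
        · subst h; exact hnadj hab.symm
        · exact huv (Option.some.inj h).symm
      have hu := h0 (some u)
      have hv := h0 (some v)
      dsimp only at hu hv
      rcases hz with h | h
      · rw [min_eq_left (by linarith)]; linarith
      · rw [min_eq_right (by linarith)]; linarith
    intro f hf g hg hfg
    have hu := congrFun hfg u
    have hv := congrFun hfg v
    simp only [huv, huv.symm, if_true, if_false, add_zero] at hu hv
    have hn : f none = g none := by
      have h1 := key f hf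
      have h2 := key g hg
      rw [hu, hv, ← h2] at h1
      linarith
    funext y
    cases y with
    | none => exact hn
    | some y =>
      have := congrFun hfg y
      simp only [hn] at this
      linarith
  · intro g hg
    have h0 := real_nonneg ⟨g, hg⟩
    have h1 := real_sum ⟨g, hg⟩
    dsimp only at h0 h1
    set m := min (g u) (g v) with hm
    have hmu : m ≤ g u := min_le_left _ _
    have hmv : m ≤ g v := min_le_right _ _
    have hm0 : 0 ≤ m := le_min (h0 u) (h0 v)
    let f : Option V → ℝ := fun o => o.elim (2 * m)
      fun y => g y - (if y = u then m else 0) - (if y = v then m else 0)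
    have fn : f none = 2 * m := rfl
    have fs : ∀ y, f (some y) = g y - (if y = u then m else 0) - (if y = v then m else 0) := fun _ => rfl
    have hf0 : ∀ o, 0 ≤ f o := by
      intro o
      cases o with
      | none => rw [fn]; linarith
      | some y =>
        rw [fs]
        have := h0 y
        by_cases hyu : y = u
        · subst hyu; simp [huv]; linarith
        · by_cases hyv : y = v
          · subst hyv; simp [huv.symm]; linarith
          · simpa [hyu, hyv] using this
    have hfsum : ∑ o, f o = 1 := by
      rw [Fintype.sum_option, fn]
      simp only [fs, Finset.sum_sub_distrib, Finset.sum_ite_eq', Finset.mem_univ, if_true]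
      linarith
    refine ⟨f, ?_, ?_⟩
    · by_cases hs : ∀ y, g y ≠ 0 → y = u ∨ y = v
      · rcases le_total (g u) (g v) with hle | hle
        · have hmm : m = g u := min_eq_left hle
          refine real_mk (a := none) (b := some v) hf0 hfsum ((hN v).2 (Or.inr rfl)) fun o ho => ?_
          cases o with
          | none => exact Or.inl rfl
          | some y =>
            right
            by_contra hy
            have hyv : y ≠ v := fun h => hy (by rw [h])
            rw [fs] at ho
            by_cases hyu : y = u
            · subst hyu; simp [huv, hmm] at ho
            · simp only [hyu, hyv, if_false, sub_zero] at ho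
              rcases hs y ho with h | h
              exacts [hyu h, hyv h]
        · have hmm : m = g v := min_eq_right hle
          refine real_mk (a := none) (b := some u) hf0 hfsum ((hN u).2 (Or.inl rfl)) fun o ho => ?_
          cases o with
          | none => exact Or.inl rfl
          | some y =>
            right
            by_contra hy
            have hyu : y ≠ u := fun h => hy (by rw [h])
            rw [fs] at ho
            by_cases hyv : y = v
            · subst hyv; simp [huv.symm, hmm] at ho
            · simp only [hyu, hyv, if_false, sub_zero] at ho
              rcases hs y ho with h | h
              exacts [hyu h, hyv h]
      · obtain ⟨a, b, hab, hs'⟩ := real_edge ⟨g, hg⟩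
        dsimp only at hs'
        have hab' : ¬ ((a = u ∧ b = v) ∨ (a = v ∧ b = u)) := by
          rintro (⟨rfl, rfl⟩ | ⟨rfl, rfl⟩)
          · exact hs hs'
          · exact hs fun y hy => (hs' y hy).symm
        have hadj : Γ.Adj (some a) (some b) := ((hA a b).1 hab).resolve_right hab'
        have hmz : m = 0 := by
          by_contra hne
          have hpos : 0 < m := lt_of_le_of_ne hm0 (Ne.symm hne)
          apply hab'
          rcases hs' u (by linarith) with h | h <;> rcases hs' v (by linarith) with h' | h'
          · exact absurd (h.trans h'.symm) huv
          · exact Or.inl ⟨h.symm, h'.symm⟩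
          · exact Or.inr ⟨h'.symm, h.symm⟩
          · exact absurd (h.trans h'.symm) huv
        refine real_mk (a := some a) (b := some b) hf0 hfsum hadj fun o ho => ?_
        cases o with
        | none => exact absurd (by rw [fn, hmz, mul_zero]) ho
        | some y =>
          rw [fs, hmz] at ho
          simp only [ite_self, sub_zero] at ho
          simpa using hs' y ho
    · funext y
      simp only [fn, fs]
      by_cases hyu : y = u
      · subst hyu; simp [huv]
      · by_cases hyv : y = v
        · subst hyv; simp [huv.symm]
        · simp [hyu, hyv]

end Homeo

end

/-! ### Generalized theta graphs -/

section
open Sum SimpleGraph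

section KG

/-- Adjacency of a branch vertex to a middle vertex or leaf. -/
def kadj {τ α β : Type} : KV τ α β → KV τ α β → Prop
  | .p, .mid _ => True
  | .q, .mid _ => True
  | .p, .la _ => True
  | .q, .lb _ => True
  | _, _ => False

/-- The graph with two vertices `p`, `q` joined by paths of length two indexed by `τ`, with pendant
edges at `p` indexed by `α` and at `q` indexed by `β`. -/
def KG (τ α β : Type) : SimpleGraph (KV τ α β) where
  Adj x y := kadj x y ∨ kadj y x
  symm := ⟨fun _ _ h => h.symm⟩
  loopless := ⟨fun x h => by cases x <;> simp [kadj] at h⟩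

/-- The vertices of the generalized theta graph as a sum type. -/
def kvEquiv (τ α β : Type) : KV τ α β ≃ (Fin 2 ⊕ τ) ⊕ (α ⊕ β) where
  toFun
    | .p => inl (inl 0)
    | .q => inl (inl 1)
    | .mid i => inl (inr i)
    | .la i => inr (inl i)
    | .lb i => inr (inr i)
  invFun
    | inl (inl 0) => .p
    | inl (inl 1) => .q
    | inl (inr i) => .mid i
    | inr (inl i) => .la i
    | inr (inr i) => .lb i
  left_inv x := by cases x <;> rfl
  right_inv x := by
    rcases x with (x | x) | (x | x)
    · fin_cases x <;> rfl
    all_goals rfl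

instance {τ α β : Type} [Fintype τ] [Fintype α] [Fintype β] : Fintype (KV τ α β) :=
  Fintype.ofEquiv _ (kvEquiv τ α β).symm

theorem KG_congr {τ α β τ' α' β' : Type} [Fintype τ] [Fintype α] [Fintype β] [Fintype τ']
    [Fintype α'] [Fintype β'] (f : τ ≃ τ') (g : α ≃ α') (h : β ≃ β') :
    Nonempty (realization (KG τ α β) ≃ₜ realization (KG τ' α' β')) := by
  let e : KV τ α β ≃ KV τ' α' β' := (kvEquiv τ α β).trans
    ((Equiv.sumCongr (Equiv.sumCongr (Equiv.refl _) f) (Equiv.sumCongr g h)).trans (kvEquiv τ' α' β').symm)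
  refine iso_homeo e fun x y => ?_
  cases x <;> cases y <;> exact Iff.rfl

theorem KG_K23 (a b : ℕ) :
    Nonempty (realization (KG (Fin 3) (Fin a) (Fin b)) ≃ₜ realization (K23Pendant a b)) := by
  refine iso_homeo (kvEquiv (Fin 3) (Fin a) (Fin b)) fun x y => ?_
  rw [K23Pendant, SimpleGraph.fromEdgeSet_adj]
  cases x <;> cases y <;> simp [kvEquiv, KG, kadj]

/-- A graph with nonadjacent vertices `p`, `q` such that each further vertex has all its neighbours
among `p`, `q`, and at least one, is a generalized theta graph with pendant edges. -/
theorem terminal_iso {V : Type} [Fintype V] [DecidableEq V] {Γ : SimpleGraph V} {p q : V}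
    (hpq : p ≠ q) (hn : ¬ Γ.Adj p q)
    (h1 : ∀ w, w ≠ p → w ≠ q → Γ.Adj w p ∨ Γ.Adj w q)
    (h2 : ∀ w, w ≠ p → w ≠ q → ∀ x, Γ.Adj w x → x = p ∨ x = q) :
    Nonempty (realization Γ ≃ₜ realization (KG {w // Γ.Adj w p ∧ Γ.Adj w q}
      {w // Γ.Adj w p ∧ ¬ Γ.Adj w q} {w // ¬ Γ.Adj w p ∧ Γ.Adj w q})) := by
  let f : KV {w // Γ.Adj w p ∧ Γ.Adj w q} {w // Γ.Adj w p ∧ ¬ Γ.Adj w q}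
      {w // ¬ Γ.Adj w p ∧ Γ.Adj w q} → V := fun x => match x with
    | .p => p
    | .q => q
    | .mid i => i.1
    | .la i => i.1
    | .lb i => i.1
  have hn' : ¬ Γ.Adj q p := fun h => hn h.symm
  have hpp : ¬ Γ.Adj p p := fun h => h.ne rfl
  have hqq : ¬ Γ.Adj q q := fun h => h.ne rfl
  have np : ∀ w, Γ.Adj w p ∨ Γ.Adj w q → w ≠ p ∧ w ≠ q := by
    rintro w h
    constructor
    · rintro rfl; tauto
    · rintro rfl; tauto
  have nn : ∀ w x, Γ.Adj w p ∨ Γ.Adj w q → Γ.Adj x p ∨ Γ.Adj x q → ¬ Γ.Adj w x := by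
    intro w x hw hx h
    have := np w hw
    have := np x hx
    have := h2 w (by tauto) (by tauto) x h
    tauto
  have hf : Function.Bijective f := by
    constructor
    · intro x y hxy
      rcases x with _ | _ | ⟨x, hx, hx'⟩ | ⟨x, hx, hx'⟩ | ⟨x, hx, hx'⟩ <;>
      rcases y with _ | _ | ⟨y, hy, hy'⟩ | ⟨y, hy, hy'⟩ | ⟨y, hy, hy'⟩ <;>
      simp only [f] at hxy <;> subst_vars <;> first | rfl | tauto
    · intro w
      by_cases hwp : w = p
      · exact ⟨.p, hwp.symm⟩
      by_cases hwq : w = q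
      · exact ⟨.q, hwq.symm⟩
      by_cases ha : Γ.Adj w p
      · by_cases hb : Γ.Adj w q
        · exact ⟨.mid ⟨w, ha, hb⟩, rfl⟩
        · exact ⟨.la ⟨w, ha, hb⟩, rfl⟩
      · exact ⟨.lb ⟨w, ha, (h1 w hwp hwq).resolve_left ha⟩, rfl⟩
  obtain ⟨e⟩ := iso_homeo (Γ := KG {w // Γ.Adj w p ∧ Γ.Adj w q}
      {w // Γ.Adj w p ∧ ¬ Γ.Adj w q} {w // ¬ Γ.Adj w p ∧ Γ.Adj w q}) (Γ' := Γ)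
      (Equiv.ofBijective f hf) (by
    intro x y
    simp only [Equiv.ofBijective_apply]
    rcases x with _ | _ | ⟨x, hx, hx'⟩ | ⟨x, hx, hx'⟩ | ⟨x, hx, hx'⟩ <;>
      rcases y with _ | _ | ⟨y, hy, hy'⟩ | ⟨y, hy, hy'⟩ | ⟨y, hy, hy'⟩ <;>
      simp only [f, KG, kadj, or_self, or_true, true_or, iff_true, iff_false] <;>
      first | assumption | (apply Adj.symm; assumption) | (apply nn <;> tauto) |
        exact fun h => by have := h.symm; tauto)
  exact ⟨e.symm⟩

end KG

end

/-! ### Smoothing a vertex of degree two -/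

section
open Sum SimpleGraph

section Reduce

/-- Conditions preserved by smoothing degree-two vertices: every component of `Γ - {p, q}` is
attached to `p` or `q`, both `p` and `q` lie on all cycles, all other vertices have degree at most
two, and the first Betti number is at least two. -/
structure Red {V : Type} [Fintype V] (Γ : SimpleGraph V) (p q : V) : Prop where
  ne : p ≠ q
  conn : ∀ S : Finset V, S.Nonempty → p ∉ S → q ∉ S → ∃ x ∈ S, ∃ y ∉ S, Γ.Adj x y
  fp : Forest Γ p
  fq : Forest Γ q
  deg : ∀ w, w ≠ p → w ≠ q → dg Γ Finset.univ w ≤ 2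
  big : 2 * Fintype.card V + 1 ≤ dsum Γ Finset.univ

/-- The graph obtained by removing `w` and joining `u` to `v`. -/
def smo {V : Type} (Γ : SimpleGraph V) (w : V) (u v : {x // x ≠ w}) (huv : u ≠ v) :
    SimpleGraph {x // x ≠ w} where
  Adj x y := Γ.Adj x.1 y.1 ∨ (x = u ∧ y = v) ∨ (x = v ∧ y = u)
  symm := ⟨fun x y h => by
    rcases h with h | h | h
    · exact Or.inl h.symm
    · exact Or.inr (Or.inr h.symm)
    · exact Or.inr (Or.inl h.symm)⟩
  loopless := ⟨fun x h => by
    rcases h with h | ⟨h, h'⟩ | ⟨h, h'⟩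
    · exact h.ne rfl
    · exact huv (h.symm.trans h')
    · exact huv (h'.symm.trans h)⟩

variable {V : Type} {Γ : SimpleGraph V} {w : V} {u v : {x // x ≠ w}} {huv : u ≠ v}

theorem smo_dg (hn : ¬ Γ.Adj u.1 v.1) (S : Finset {x // x ≠ w}) (x : {x // x ≠ w}) :
    dg (smo Γ w u v huv) S x = dg Γ (S.map (Function.Embedding.subtype _)) x.1 +
      (if x = u ∧ v ∈ S then 1 else 0) + (if x = v ∧ u ∈ S then 1 else 0) := by
  have hn' : ¬ Γ.Adj v.1 u.1 := fun h => hn h.symm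
  simp only [dg, Finset.card_filter, Finset.sum_map, Function.Embedding.subtype_apply]
  have h1 : (if x = u ∧ v ∈ S then 1 else 0) = ∑ z ∈ S, if x = u ∧ z = v then 1 else 0 := by
    by_cases h : x = u <;> simp [h]
  have h2 : (if x = v ∧ u ∈ S then 1 else 0) = ∑ z ∈ S, if x = v ∧ z = u then 1 else 0 := by
    by_cases h : x = v <;> simp [h]
  rw [h1, h2, ← Finset.sum_add_distrib, ← Finset.sum_add_distrib]
  refine Finset.sum_congr rfl fun z _ => ?_
  simp only [smo]
  by_cases ha : x = u ∧ z = v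
  · obtain ⟨rfl, rfl⟩ := ha
    simp [hn, huv]
  · by_cases hb : x = v ∧ z = u
    · obtain ⟨rfl, rfl⟩ := hb
      simp [hn', huv.symm]
    · simp [ha, hb]
      congr!

theorem smo_dg' (hN : ∀ x, Γ.Adj w x ↔ x = u.1 ∨ x = v.1) (S : Finset {x // x ≠ w})
    (x : {x // x ≠ w}) :
    dg Γ (insert w (S.map (Function.Embedding.subtype _))) x.1 =
      dg Γ (S.map (Function.Embedding.subtype _)) x.1 + (if x = u ∨ x = v then 1 else 0) := by
  rw [dg_erase (Finset.mem_insert_self _ _), Finset.erase_insert (by simp)]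
  simp only [hN, Subtype.ext_iff]

theorem smo_dg_both (hn : ¬ Γ.Adj u.1 v.1) (hN : ∀ x, Γ.Adj w x ↔ x = u.1 ∨ x = v.1)
    {S : Finset {x // x ≠ w}} (hu : u ∈ S) (hv : v ∈ S) (x : {x // x ≠ w}) :
    dg (smo Γ w u v huv) S x = dg Γ (insert w (S.map (Function.Embedding.subtype _))) x.1 := by
  rw [smo_dg hn, smo_dg' hN]
  simp only [hu, hv, and_true]
  by_cases h : x = u
  · subst h; simp [huv]
  · simp [h]

theorem smo_dg_not (hn : ¬ Γ.Adj u.1 v.1)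
    {S : Finset {x // x ≠ w}} (h : ¬ (u ∈ S ∧ v ∈ S)) {x : {x // x ≠ w}} (hx : x ∈ S) :
    dg (smo Γ w u v huv) S x = dg Γ (S.map (Function.Embedding.subtype _)) x.1 := by
  rw [smo_dg hn, if_neg, if_neg]
  · rfl
  · rintro ⟨rfl, h'⟩; exact h ⟨h', hx⟩
  · rintro ⟨rfl, h'⟩; exact h ⟨hx, h'⟩

theorem dg_w (huv : u ≠ v) (hN : ∀ x, Γ.Adj w x ↔ x = u.1 ∨ x = v.1) {S : Finset V} (hu : u.1 ∈ S) (hv : v.1 ∈ S) :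
    dg Γ S w = 2 := by
  have : S.filter (Γ.Adj w) = {u.1, v.1} := by
    ext x
    simp only [Finset.mem_filter, hN, Finset.mem_insert, Finset.mem_singleton]
    constructor
    · exact fun h => h.2
    · rintro (rfl | rfl) <;> simp [hu, hv]
  rw [dg, this, Finset.card_pair fun h => huv (Subtype.ext h)]

theorem smo_forest (hn : ¬ Γ.Adj u.1 v.1) (hN : ∀ x, Γ.Adj w x ↔ x = u.1 ∨ x = v.1)
    {p : {x // x ≠ w}} (hp : Forest Γ p.1) : Forest (smo Γ w u v huv) p := by
  intro S hS hpS
  by_cases h : u ∈ S ∧ v ∈ S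
  · obtain ⟨x, hx, hd⟩ := hp (insert w (S.map (Function.Embedding.subtype _)))
      (Finset.insert_nonempty _ _) (by simp [p.2, hpS])
    rcases Finset.mem_insert.1 hx with rfl | hx
    · rw [dg_w huv hN (by simp [h.1, u.2]) (by simp [h.2, v.2])] at hd
      omega
    · obtain ⟨x, hxS, rfl⟩ := Finset.mem_map.1 hx
      exact ⟨x, hxS, by rw [smo_dg_both hn hN h.1 h.2]; exact hd⟩
  · obtain ⟨x, hx, hd⟩ := hp (S.map (Function.Embedding.subtype _)) (by simpa using hS)
      (by simp [hpS])
    obtain ⟨x, hxS, rfl⟩ := Finset.mem_map.1 hx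
    exact ⟨x, hxS, by rw [smo_dg_not hn h hxS]; exact hd⟩

theorem smo_red [Fintype V] {p q : {x // x ≠ w}} (hn : ¬ Γ.Adj u.1 v.1)
    (hN : ∀ x, Γ.Adj w x ↔ x = u.1 ∨ x = v.1)
    (h : Red Γ p.1 q.1) : Red (smo Γ w u v huv) p q := by
  have huniv : insert w ((Finset.univ : Finset {x // x ≠ w}).map (Function.Embedding.subtype _)) =
      Finset.univ := by
    ext x
    by_cases hx : x = w <;> simp [hx]
  have hdg : ∀ x, dg (smo Γ w u v huv) Finset.univ x = dg Γ Finset.univ x.1 := by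
    intro x
    rw [smo_dg_both hn hN (Finset.mem_univ _) (Finset.mem_univ _), huniv]
  refine ⟨fun e => h.ne (congrArg Subtype.val e), ?_, smo_forest hn hN h.fp, smo_forest hn hN h.fq,
    ?_, ?_⟩
  · intro S hS hpS hqS
    by_cases hu : u ∈ S
    · by_cases hv : v ∈ S
      · obtain ⟨x, hx, y, hy, hxy⟩ := h.conn (insert w (S.map (Function.Embedding.subtype _)))
          (Finset.insert_nonempty _ _) (by simp [p.2, hpS]) (by simp [q.2, hqS])
        have hyw : y ≠ w := fun e => hy (by simp [e])
        rcases Finset.mem_insert.1 hx with rfl | hx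
        · rcases (hN y).1 hxy with rfl | rfl
          · exact absurd (by simp [hu, u.2]) hy
          · exact absurd (by simp [hv, v.2]) hy
        · obtain ⟨x, hxS, rfl⟩ := Finset.mem_map.1 hx
          exact ⟨x, hxS, ⟨y, hyw⟩, fun hyS => hy (by simp [hyw, hyS]), Or.inl hxy⟩
      · exact ⟨u, hu, v, hv, Or.inr (Or.inl ⟨rfl, rfl⟩)⟩
    · by_cases hv : v ∈ S
      · exact ⟨v, hv, u, hu, Or.inr (Or.inr ⟨rfl, rfl⟩)⟩
      · obtain ⟨x, hx, y, hy, hxy⟩ := h.conn (S.map (Function.Embedding.subtype _))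
          (by simpa using hS) (by simp [hpS]) (by simp [hqS])
        obtain ⟨x, hxS, rfl⟩ := Finset.mem_map.1 hx
        have hyw : y ≠ w := by
          rintro rfl
          rcases (hN _).1 hxy.symm with e | e
          · rw [Subtype.ext (a1 := x) (a2 := u) e] at hxS; exact hu hxS
          · rw [Subtype.ext (a1 := x) (a2 := v) e] at hxS; exact hv hxS
        exact ⟨x, hxS, ⟨y, hyw⟩, fun hyS => hy (by simp [hyw, hyS]), Or.inl hxy⟩
  · intro x hxp hxq
    rw [hdg]
    exact h.deg _ (fun e => hxp (Subtype.ext e)) (fun e => hxq (Subtype.ext e))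
  · have h1 := h.big
    have h2 : dsum Γ Finset.univ = 2 + dsum (smo Γ w u v huv) Finset.univ := by
      rw [dsum, ← Equiv.sum_comp (Equiv.optionSubtypeNe w), Fintype.sum_option, dsum]
      congr 1
      · rw [Equiv.optionSubtypeNe_none]
        exact dg_w huv hN (Finset.mem_univ _) (Finset.mem_univ _)
      · refine Finset.sum_congr (by congr!) fun x _ => ?_
        rw [Equiv.optionSubtypeNe_some, hdg]
    have h3 : Fintype.card V = Fintype.card {x // x ≠ w} + 1 := by
      rw [← Fintype.card_congr (Equiv.optionSubtypeNe w), Fintype.card_option]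
    omega

theorem smo_homeo [Fintype V] [DecidableEq V] (hn : ¬ Γ.Adj u.1 v.1)
    (hN : ∀ x, Γ.Adj w x ↔ x = u.1 ∨ x = v.1) :
    Nonempty (realization Γ ≃ₜ realization (smo Γ w u v huv)) := by
  obtain ⟨e1⟩ := iso_homeo (Γ := Γ.comap (Equiv.optionSubtypeNe w)) (Γ' := Γ)
    (Equiv.optionSubtypeNe w) (fun _ _ => Iff.rfl)
  obtain ⟨e2⟩ := smooth_homeo (Γ := Γ.comap (Equiv.optionSubtypeNe w)) (Γ' := smo Γ w u v huv) huv
    (by intro x; simp [hN, Subtype.ext_iff]) (by simpa using hn) (by intro x y; simp [smo])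
  exact ⟨e1.symm.trans e2⟩

end Reduce

end

/-! ### Reduction to a theta graph -/

section
open Sum SimpleGraph

section Terminal

/-- `Γ` is homeomorphic to a generalized theta graph with at least three strands and pendant edges
at its two branch vertices. -/
def ThetaLike {V : Type} [DecidableEq V] (Γ : SimpleGraph V) : Prop :=
  ∃ m a b : ℕ, 3 ≤ m ∧ Nonempty (realization Γ ≃ₜ realization (KG (Fin m) (Fin a) (Fin b)))

theorem thetaLike_of {V : Type} [Fintype V] [DecidableEq V] {Γ : SimpleGraph V} {τ α β : Type}
    [Fintype τ] [Fintype α] [Fintype β] (h : 3 ≤ Fintype.card τ)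
    (e : Nonempty (realization Γ ≃ₜ realization (KG τ α β))) : ThetaLike Γ := by
  obtain ⟨e⟩ := e
  obtain ⟨e2⟩ := KG_congr (Fintype.equivFin τ) (Fintype.equivFin α) (Fintype.equivFin β)
  exact ⟨_, _, _, h, ⟨e.trans e2⟩⟩

/-- Subdivision of the edge `p q`. -/
def subd {V : Type} (Γ : SimpleGraph V) (p q : V) : SimpleGraph (Option V) where
  Adj
    | some x, some y => Γ.Adj x y ∧ ¬ (x = p ∧ y = q) ∧ ¬ (x = q ∧ y = p)
    | none, some y => y = p ∨ y = q
    | some x, none => x = p ∨ x = q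
    | none, none => False
  symm := ⟨by
    rintro (_ | x) (_ | y) h
    · exact h
    · exact h
    · exact h
    · exact ⟨h.1.symm, fun h' => h.2.2 h'.symm, fun h' => h.2.1 h'.symm⟩⟩
  loopless := ⟨by
    rintro (_ | x) h
    · exact h
    · exact h.1.ne rfl⟩

variable {V : Type} [Fintype V] {Γ : SimpleGraph V} {p q : V}

/-- If all vertices other than `p`, `q` are adjacent to no vertices but `p` and `q`, the Betti
number condition gives at least three strands, an edge `p q` counting as one. -/
theorem terminal_count (hR : Red Γ p q)
    (h2 : ∀ w, w ≠ p → w ≠ q → ∀ x, Γ.Adj w x → x = p ∨ x = q) :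
    3 ≤ Fintype.card {w // Γ.Adj w p ∧ Γ.Adj w q} + (if Γ.Adj p q then 1 else 0) := by
  have hq : q ∈ Finset.univ.erase p := by simp [hR.ne.symm]
  have e1 := dsum_erase (Γ := Γ) (Finset.mem_univ p)
  have e2 := dsum_erase (Γ := Γ) hq
  have e3 := dg_erase (Γ := Γ) (Finset.mem_univ p) q
  have e4 : dsum Γ ((Finset.univ.erase p).erase q) = 0 := by
    refine Finset.sum_eq_zero fun w hw => ?_
    simp only [Finset.mem_erase, Finset.mem_univ, and_true] at hw
    refine Finset.card_eq_zero.2 (Finset.filter_eq_empty_iff.2 fun x hx ha => ?_)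
    simp only [Finset.mem_erase, Finset.mem_univ, and_true] at hx
    rcases h2 w hw.2 hw.1 x ha with h | h
    exacts [hx.2 h, hx.1 h]
  have e5 := Finset.card_union_add_card_inter (Finset.univ.filter (Γ.Adj p)) (Finset.univ.filter (Γ.Adj q))
  have e6 : Fintype.card {w // Γ.Adj w p ∧ Γ.Adj w q} =
      (Finset.univ.filter (Γ.Adj p) ∩ Finset.univ.filter (Γ.Adj q)).card := by
    rw [Fintype.card_subtype]
    congr 1
    ext x
    simp [Γ.adj_comm x]
  have e7 := hR.big
  change _ = dg Γ Finset.univ p + dg Γ Finset.univ q at e5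
  split_ifs at * with hpq
  · have e8 := Finset.card_le_univ (Finset.univ.filter (Γ.Adj p) ∪ Finset.univ.filter (Γ.Adj q))
    omega
  · have e8 : Finset.univ.filter (Γ.Adj p) ∪ Finset.univ.filter (Γ.Adj q) ⊆
        (Finset.univ.erase p).erase q := by
      intro x hx
      simp only [Finset.mem_union, Finset.mem_filter, Finset.mem_univ, true_and] at hx
      simp only [Finset.mem_erase, Finset.mem_univ, and_true]
      constructor
      · rintro rfl
        rcases hx with h | h
        exacts [hpq h, h.ne rfl]
      · rintro rfl
        rcases hx with h | h
        exacts [h.ne rfl, hpq h.symm]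
    have e9 := Finset.card_le_card e8
    have e10 : 1 < Fintype.card V := Fintype.one_lt_card_iff.2 ⟨p, q, hR.ne⟩
    rw [Finset.card_erase_of_mem hq, Finset.card_erase_of_mem (Finset.mem_univ p), Finset.card_univ] at e9
    omega

/-- A graph all of whose edges meet `p` or `q` is a generalized theta graph, after subdividing the
edge `p q` if present. -/
theorem terminal (hR : Red Γ p q)
    (h1 : ∀ w, w ≠ p → w ≠ q → Γ.Adj w p ∨ Γ.Adj w q)
    (h2 : ∀ w, w ≠ p → w ≠ q → ∀ x, Γ.Adj w x → x = p ∨ x = q) : ThetaLike Γ := by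
  have hc := terminal_count hR h2
  have hne := hR.ne
  by_cases hpq : Γ.Adj p q
  · rw [if_pos hpq] at hc
    obtain ⟨e1⟩ := smooth_homeo (Γ := subd Γ p q) (Γ' := Γ) hR.ne (fun x => Iff.rfl)
      (fun h => h.2.1 ⟨rfl, rfl⟩) (by
        intro x y
        change _ ↔ (Γ.Adj x y ∧ ¬ (x = p ∧ y = q) ∧ ¬ (x = q ∧ y = p)) ∨ _
        by_cases ha : x = p ∧ y = q
        · obtain ⟨rfl, rfl⟩ := ha; simp [hpq]
        · by_cases hb : x = q ∧ y = p
          · obtain ⟨rfl, rfl⟩ := hb; simp [hpq.symm]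
          · tauto)
    obtain ⟨e2⟩ := terminal_iso (Γ := subd Γ p q) (p := some p) (q := some q)
      (fun h => hR.ne (Option.some.inj h)) (fun h => h.2.1 ⟨rfl, rfl⟩) (by
        rintro (_ | w) hwp hwq
        · exact Or.inl (Or.inl rfl)
        · have hp : w ≠ p := fun h => hwp (by rw [h])
          have hq : w ≠ q := fun h => hwq (by rw [h])
          rcases h1 w hp hq with h | h
          · exact Or.inl ⟨h, by tauto, by tauto⟩
          · exact Or.inr ⟨h, by tauto, by tauto⟩) (by
        rintro (_ | w) hwp hwq (_ | x) h
        · exact absurd h (fun h => h)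
        · rcases h with h | h <;> simp [h]
        · rcases h with h | h
          · exact absurd (by rw [h]) hwp
          · exact absurd (by rw [h]) hwq
        · have hp : w ≠ p := fun h => hwp (by rw [h])
          have hq : w ≠ q := fun h => hwq (by rw [h])
          simpa using h2 w hp hq x h.1)
    refine thetaLike_of ?_ ⟨e1.symm.trans e2⟩
    let f : Option {w // Γ.Adj w p ∧ Γ.Adj w q} →
        {o // (subd Γ p q).Adj o (some p) ∧ (subd Γ p q).Adj o (some q)} := fun o => match o with
      | none => ⟨none, Or.inl rfl, Or.inr rfl⟩
      | some w => ⟨some w.1, ⟨w.2.1, fun h => hne h.2, fun h => w.2.2.ne h.1⟩,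
          ⟨w.2.2, fun h => w.2.1.ne h.1, fun h => hne h.2.symm⟩⟩
    have hf : Function.Injective f := by
      rintro (_ | ⟨x, hx⟩) (_ | ⟨y, hy⟩) h
      · rfl
      · simp [f] at h
      · simp [f] at h
      · simpa [f] using h
    have := Fintype.card_le_of_injective f hf
    rw [Fintype.card_option] at this
    omega
  · rw [if_neg hpq] at hc
    exact thetaLike_of (by omega) (terminal_iso hR.ne hpq h1 h2)

end Terminal

/-- Smoothing vertices of degree two with non-adjacent neighbours, by induction on the number of
vertices, leads to the terminal case. -/
theorem red_theta (n : ℕ) : ∀ (V : Type) [Fintype V] (Γ : SimpleGraph V) (p q : V),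
    Fintype.card V = n → Red Γ p q → ThetaLike Γ := by
  induction n with
  | zero =>
    intro V _ Γ p q h0 _
    exact absurd h0 (Fintype.card_pos_iff.2 ⟨p⟩).ne'
  | succ n ih =>
    intro V _ Γ p q hcard hR
    by_cases hsm : ∃ w u v : V, w ≠ p ∧ w ≠ q ∧ u ≠ v ∧ ¬ Γ.Adj u v ∧ ∀ x, Γ.Adj w x ↔ x = u ∨ x = v
    · obtain ⟨w, u, v, hwp, hwq, huv, hn, hN⟩ := hsm
      have huw : u ≠ w := ((hN u).2 (Or.inl rfl)).ne'
      have hvw : v ≠ w := ((hN v).2 (Or.inr rfl)).ne'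
      have huv' : (⟨u, huw⟩ : {x // x ≠ w}) ≠ ⟨v, hvw⟩ := fun h => huv (congrArg Subtype.val h)
      have hR' : Red (smo Γ w ⟨u, huw⟩ ⟨v, hvw⟩ huv') ⟨p, hwp.symm⟩ ⟨q, hwq.symm⟩ := smo_red hn hN hR
      obtain ⟨e⟩ := smo_homeo (huv := huv') hn hN
      have hc : Fintype.card V = Fintype.card {x // x ≠ w} + 1 := by
        rw [← Fintype.card_congr (Equiv.optionSubtypeNe w), Fintype.card_option]
      have hT : ThetaLike (smo Γ w ⟨u, huw⟩ ⟨v, hvw⟩ huv') := by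
        convert ih _ _ _ _ (by omega) hR'
      obtain ⟨m, a, b, hm, ⟨e'⟩⟩ := hT
      exact ⟨m, a, b, hm, ⟨e.trans e'⟩⟩
    · push Not at hsm
      have hge : ∀ w, w ≠ p → w ≠ q → ∃ y, Γ.Adj w y := by
        intro w hp hq
        obtain ⟨x, hx, y, hy, h⟩ := hR.conn {w} (by simp) (by simpa using hp.symm) (by simpa using hq.symm)
        rw [Finset.mem_singleton] at hx
        subst hx
        exact ⟨y, h⟩
      -- a vertex with two distinct neighbours is adjacent to exactly `p` and `q`
      have two : ∀ w, w ≠ p → w ≠ q → ∀ u v, Γ.Adj w u → Γ.Adj w v → u ≠ v →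
          ∀ x, Γ.Adj w x → x = p ∨ x = q := by
        intro w hp hq u v hu hv huv
        have hN : ∀ x, Γ.Adj w x ↔ x = u ∨ x = v := by
          intro x
          constructor
          · intro hx
            by_contra hc
            push Not at hc
            have hsub : ({x, u, v} : Finset V) ⊆ Finset.univ.filter (Γ.Adj w) := by
              intro y hy
              simp only [Finset.mem_insert, Finset.mem_singleton] at hy
              simp only [Finset.mem_filter, Finset.mem_univ, true_and]
              rcases hy with rfl | rfl | rfl <;> assumption
            have h3 := Finset.card_le_card hsub
            rw [Finset.card_eq_three.2 ⟨x, u, v, hc.1, hc.2, huv, rfl⟩] at h3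
            have := hR.deg w hp hq
            unfold dg at this
            omega
          · rintro (rfl | rfl) <;> assumption
        have hadj : Γ.Adj u v := by
          by_contra hn
          obtain ⟨x, hx⟩ := hsm w u v hp hq huv hn
          have := hN x
          tauto
        -- the triangle `w u v` contains both `p` and `q`
        have tri : ∀ a b c : V, a ∈ ({w, u, v} : Finset V) → b ∈ ({w, u, v} : Finset V) →
            c ∈ ({w, u, v} : Finset V) → b ≠ c → Γ.Adj a b → Γ.Adj a c →
            2 ≤ dg Γ {w, u, v} a := by
          intro a b c _ hb hc hbc hab hac
          rw [← Finset.card_pair hbc]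
          refine Finset.card_le_card fun y hy => ?_
          rw [Finset.mem_insert, Finset.mem_singleton] at hy
          rw [Finset.mem_filter]
          rcases hy with rfl | rfl
          exacts [⟨hb, hab⟩, ⟨hc, hac⟩]
        have tri' : ∀ a ∈ ({w, u, v} : Finset V), 2 ≤ dg Γ {w, u, v} a := by
          intro a ha
          simp only [Finset.mem_insert, Finset.mem_singleton] at ha
          rcases ha with rfl | rfl | rfl
          · exact tri a u v (by simp) (by simp) (by simp) huv hu hv
          · exact tri a w v (by simp) (by simp) (by simp) hv.ne hu.symm hadj
          · exact tri a w u (by simp) (by simp) (by simp) hu.ne hv.symm hadj.symm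
        have mem : ∀ a, Forest Γ a → a ≠ w → a = u ∨ a = v := by
          intro a fa haw
          by_contra hc
          obtain ⟨x, hx, hd⟩ := fa {w, u, v} (by simp) (by simpa [haw] using hc)
          have := tri' x hx
          omega
        have m1 := mem p hR.fp hp.symm
        have m2 := mem q hR.fq hq.symm
        have hne := hR.ne
        intro x hx
        have := (hN x).1 hx
        rcases m1 with rfl | rfl <;> rcases m2 with rfl | rfl <;> tauto
      have h2 : ∀ w, w ≠ p → w ≠ q → ∀ x, Γ.Adj w x → x = p ∨ x = q := by
        intro w hp hq x hx
        by_contra hc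
        push Not at hc
        have hw : ∀ y, Γ.Adj w y → y = x := by
          intro y hy
          by_contra hyx
          have := two w hp hq y x hy hx hyx x hx
          tauto
        have hx' : ∀ y, Γ.Adj x y → y = w := by
          intro y hy
          by_contra hyw
          have := two x hc.1 hc.2 y w hy hx.symm hyw w hx.symm
          tauto
        obtain ⟨a, ha, b, hb, hab⟩ := hR.conn {w, x} (by simp) (by simp [hp.symm, hc.1.symm])
          (by simp [hq.symm, hc.2.symm])
        simp only [Finset.mem_insert, Finset.mem_singleton] at ha hb
        rcases ha with rfl | rfl
        · exact hb (Or.inr (hw b hab))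
        · exact hb (Or.inl (hx' b hab))
      refine terminal hR (fun w hp hq => ?_) h2
      obtain ⟨y, hy⟩ := hge w hp hq
      rcases h2 w hp hq y hy with rfl | rfl
      exacts [Or.inl hy, Or.inr hy]

/-- If (a), (b), (c) fail and every cycle contains all essential vertices, the graph is a
generalized theta graph up to homeomorphism. -/
theorem exists_theta {V : Type} [Fintype V] [DecidableEq V] {Γ : SimpleGraph V} (hconn : Γ.Connected)
    (hall : ∀ H : Γ.Subgraph, IsCycleSubgraph H → ∀ v : V, 3 ≤ (Γ.neighborSet v).ncard → v ∈ H.verts)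
    (ha : ∃ H : Γ.Subgraph, IsCycleSubgraph H)
    (hb : ¬ {v : V | 3 ≤ (Γ.neighborSet v).ncard}.Subsingleton)
    (hc : ¬ ∃! H : Γ.Subgraph, IsCycleSubgraph H) : ThetaLike Γ := by
  have hdeg : ∀ v, (Γ.neighborSet v).ncard = dg Γ Finset.univ v := by
    intro v
    rw [dg, ← Set.ncard_coe_finset]
    congr 1
    ext x
    simp
  have hF : ∀ v, 3 ≤ (Γ.neighborSet v).ncard → Forest Γ v := fun v hv =>
    forest_of_cycles fun H hH => hall H hH v hv
  obtain ⟨p, hp, q, hq, hpq⟩ := Set.not_subsingleton_iff.1 hb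
  change 3 ≤ (Γ.neighborSet p).ncard at hp
  change 3 ≤ (Γ.neighborSet q).ncard at hq
  obtain ⟨H, hH⟩ := ha
  obtain ⟨H', hH', hne⟩ : ∃ H', IsCycleSubgraph H' ∧ H ≠ H' := by
    by_contra hno
    push Not at hno
    exact hc ⟨H, hH, fun K hK => (hno K hK).symm⟩
  obtain ⟨S, hS⟩ := dsum_two_cycles hH hH' hne (hall H hH p hp) (hall H' hH' p hp)
  have hbig := dsum_grow hconn S hS
  have hR : Red Γ p q := by
    refine ⟨hpq, ?_, hF p hp, hF q hq, ?_, hbig⟩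
    · rintro T ⟨x, hx⟩ hpT -
      obtain ⟨w⟩ := hconn.preconnected x p
      obtain ⟨d, -, h1, h2⟩ := w.exists_boundary_dart (↑T) (by simpa using hx) (by simpa using hpT)
      exact ⟨d.fst, h1, d.snd, h2, d.adj⟩
    · intro w hwp hwq
      by_contra h3
      have := no_three hpq hwp.symm hwq.symm (hF p hp) (hF q hq)
        (hF w (by rw [hdeg]; omega)) Finset.univ
      rw [Finset.card_univ] at this
      omega
  have := red_theta _ V Γ p q rfl hR
  convert this

end

/-! ### Transport and conclusion -/

section
open Sum SimpleGraph

section Transport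

theorem pi1_homeo {X Y : Type} [TopologicalSpace X] [TopologicalSpace Y] (h : X ≃ₜ Y) (x : X) :
    ∃ y : Y, Nonempty (FundamentalGroup X x ≃* FundamentalGroup Y y) := by
  let F := FundamentalGroupoidFunctor.equivOfHomotopyEquiv h.toHomotopyEquiv
  exact ⟨(F.functor.obj ⟨x⟩).as, ⟨F.fullyFaithfulFunctor.mulEquivEnd ⟨x⟩⟩⟩

theorem permRel_map {n : ℕ} {X Y : Type} [TopologicalSpace X] [TopologicalSpace Y] (h : X ≃ₜ Y)
    (f g : Conf n X) (hfg : permRel n X f g) :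
    permRel n Y ⟨h ∘ f.1, h.injective.comp f.2⟩ ⟨h ∘ g.1, h.injective.comp g.2⟩ := by
  obtain ⟨σ, hσ⟩ := hfg
  exact ⟨σ, by simp only [hσ]; rfl⟩

/-- The map of unordered configuration spaces induced by a homeomorphism. -/
def uconfMap {n : ℕ} {X Y : Type} [TopologicalSpace X] [TopologicalSpace Y] (h : X ≃ₜ Y) :
    UConf n X → UConf n Y :=
  Quot.map (fun f => ⟨h ∘ f.1, h.injective.comp f.2⟩) (permRel_map h)

theorem uconfMap_cont {n : ℕ} {X Y : Type} [TopologicalSpace X] [TopologicalSpace Y] (h : X ≃ₜ Y) :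
    Continuous (uconfMap (n := n) h) := by
  refine continuous_quot_lift _ (continuous_quot_mk.comp (Continuous.subtype_mk ?_ _))
  have := h.continuous
  exact continuous_pi fun i => this.comp ((continuous_apply i).comp continuous_subtype_val)

/-- The homeomorphism of unordered configuration spaces induced by a homeomorphism. -/
def uconfHomeo (n : ℕ) {X Y : Type} [TopologicalSpace X] [TopologicalSpace Y] (h : X ≃ₜ Y) :
    UConf n X ≃ₜ UConf n Y where
  toFun := uconfMap h
  invFun := uconfMap h.symm
  left_inv := by
    rintro ⟨f⟩
    exact congrArg (Quot.mk _) (Subtype.ext (by funext i; simp))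
  right_inv := by
    rintro ⟨f⟩
    exact congrArg (Quot.mk _) (Subtype.ext (by funext i; simp))
  continuous_toFun := uconfMap_cont h
  continuous_invFun := uconfMap_cont h.symm

theorem IsFreeGroupType.of_equiv {P Q : Type} [Group P] [Group Q] (e : P ≃* Q)
    (h : IsFreeGroupType Q) : IsFreeGroupType P := by
  obtain ⟨S, ⟨f⟩⟩ := h
  exact ⟨S, ⟨e.trans f⟩⟩

variable {V E E' : Type}

theorem st_mapC {W W' : Type} (c : V ⊕ E → W ⊕ W') (x a b : V ⊕ E) :
    (st x a b).map c = st (c x) (c a) (c b) := by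
  simp [st]

theorem reach_map {P : Type} [Group P] {inc : V → E → Prop} {inc' : V → E' → Prop} (f : E ≃ E')
    (hf : ∀ v k, inc' v (f k) ↔ inc v k) {g : V → E → V ⊕ E → V ⊕ E → P}
    {s t : Multiset (V ⊕ E)} {x : P} (h : Reach inc g s t x) :
    Reach inc' (fun v k a b => g v (f.symm k) (Sum.map id f.symm a) (Sum.map id f.symm b))
      (s.map (Sum.map id f)) (t.map (Sum.map id f)) x := by
  have hv : ∀ {v k a b}, Valid inc v k a b → Valid inc' v (f k) (Sum.map id f a) (Sum.map id f b) := by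
    rintro v k a b ⟨h1, h2, h3, h4⟩
    refine ⟨(hf v k).2 h1, ?_, ?_, ?_⟩
    · rcases a with a | a <;> simpa using h2
    · rcases b with b | b <;> simpa using h3
    · rcases a with a | a <;> rcases b with b | b <;> simpa using h4
  have hc : ∀ a : V ⊕ E, Sum.map id f.symm (Sum.map id f a) = a := by
    rintro (a | a) <;> simp
  induction h with
  | refl => exact .refl
  | @fwd x v k a b hva _ ih =>
    rw [st_mapC] at ih ⊢
    have := Reach.fwd (hv hva) ih
    simp only [hc, Equiv.symm_apply_apply] at this
    exact this
  | @bwd x v k a b hva _ ih =>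
    rw [st_mapC] at ih ⊢
    have := Reach.bwd (hv hva) ih
    simp only [hc, Equiv.symm_apply_apply] at this
    exact this

/-- Being presented by the moves is invariant under relabelling the edges. -/
theorem Presents.congr {P : Type} [Group P] {inc : V → E → Prop} {inc' : V → E' → Prop} (f : E ≃ E')
    (hf : ∀ v k, inc' v (f k) ↔ inc v k) (hP : Presents inc P) : Presents inc' P := by
  obtain ⟨g, hg, univ, s0, gen⟩ := hP.ex
  have hf' : ∀ v k, inc v (f.symm k) ↔ inc' v k := fun v k => by rw [← hf]; simp
  have hc : ∀ a : V ⊕ E, Sum.map id f.symm (Sum.map id f a) = a := by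
    rintro (a | a) <;> simp
  have hc' : ∀ a : V ⊕ E', Sum.map id f (Sum.map id f.symm a) = a := by
    rintro (a | a) <;> simp
  refine ⟨fun v k a b => g v (f.symm k) (Sum.map id f.symm a) (Sum.map id f.symm b), ?_, ?_,
    s0.map (Sum.map id f), fun x => reach_map f hf (gen x)⟩
  · refine ⟨fun v h a b => hg.symm _ _ _ _, fun v h w k e hvw hvh hwk he he' => ?_⟩
    refine hg.sq v (f.symm h) w (f.symm k) (Sum.map id f.symm e) hvw ((hf' _ _).2 hvh)
      ((hf' _ _).2 hwk) ?_ ?_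
    · rcases e with e | e <;> simpa using he
    · rcases e with e | e <;> simpa using he'
  · intro F _ lam hlam
    obtain ⟨Φ, q, hq⟩ := univ F (fun v k a b => lam v (f k) (Sum.map id f a) (Sum.map id f b)) (by
      refine ⟨fun v h a b => hlam.symm _ _ _ _, fun v h w k e hvw hvh hwk he he' => ?_⟩
      refine hlam.sq v (f h) w (f k) (Sum.map id f e) hvw ((hf _ _).2 hvh) ((hf _ _).2 hwk) ?_ ?_
      · rcases e with e | e <;> simpa using he
      · rcases e with e | e <;> simpa using he')
    refine ⟨Φ, fun s => q (s.map (Sum.map id f.symm)), ?_⟩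
    intro v k a b hva
    have := hq v (f.symm k) (Sum.map id f.symm a) (Sum.map id f.symm b) (by
      obtain ⟨h1, h2, h3, h4⟩ := hva
      refine ⟨(hf' v k).2 h1, ?_, ?_, ?_⟩
      · rcases a with a | a <;> simpa using h2
      · rcases b with b | b <;> simpa using h3
      · rcases a with a | a <;> rcases b with b | b <;> simpa using h4)
    simpa only [hc', st_mapC, Equiv.apply_symm_apply, Sum.map_inl, Sum.map_inr, id] using this

end Transport

section Final
variable {τ α β : Type}

/-- The edges of the generalized theta graph as edges of the simple graph `KG`. -/
def keMap : KE τ α β → (KG τ α β).edgeSet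
  | .pe i => ⟨s(.p, .mid i), by simp [KG, kadj]⟩
  | .qe i => ⟨s(.q, .mid i), by simp [KG, kadj]⟩
  | .ae i => ⟨s(.p, .la i), by simp [KG, kadj]⟩
  | .be i => ⟨s(.q, .lb i), by simp [KG, kadj]⟩

theorem keMap_bij : Function.Bijective (keMap : KE τ α β → _) := by
  constructor
  · intro x y h
    have h := congrArg Subtype.val h
    cases x <;> cases y <;> simp [keMap] at h <;> rw [h]
  · rintro ⟨e, he⟩
    have key : ∀ x y : KV τ α β, kadj x y → ∃ k : KE τ α β, (keMap k).1 = s(x, y) := by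
      intro x y h
      cases x <;> cases y <;> simp only [kadj] at h
      · exact ⟨.pe _, rfl⟩
      · exact ⟨.ae _, rfl⟩
      · exact ⟨.qe _, rfl⟩
      · exact ⟨.be _, rfl⟩
    induction e using Sym2.ind with
    | _ x y =>
      rcases (show kadj x y ∨ kadj y x from he) with h | h
      · obtain ⟨k, hk⟩ := key x y h
        exact ⟨k, Subtype.ext hk⟩
      · obtain ⟨k, hk⟩ := key y x h
        exact ⟨k, Subtype.ext (hk.trans Sym2.eq_swap)⟩

theorem keMap_inc (v : KV τ α β) (k : KE τ α β) : kinc v k ↔ einc (KG τ α β) v (keMap k) := by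
  constructor
  · intro h
    cases h <;> simp [einc, keMap]
  · intro h
    cases k <;> cases v <;> simp [einc, keMap] at h <;> first | constructor | (subst h; constructor)

theorem KG_conn (i0 : τ) : (KG τ α β).Connected := by
  have hp : ∀ v : KV τ α β, (KG τ α β).Reachable .p v := by
    have h1 : ∀ i : τ, (KG τ α β).Adj .p (.mid i) := fun i => Or.inl trivial
    have h2 : ∀ i : τ, (KG τ α β).Adj (.mid i) .q := fun i => Or.inr trivial
    have hq : (KG τ α β).Reachable .p .q := (h1 i0).reachable.trans (h2 i0).reachable
    intro v
    cases v with
    | p => rfl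
    | q => exact hq
    | mid i => exact (h1 i).reachable
    | la i => exact Adj.reachable (Or.inl trivial)
    | lb i => exact hq.trans (Adj.reachable (Or.inl trivial))
  exact (connected_iff_exists_forall_reachable _).2 ⟨.p, hp⟩

/-- For a space homeomorphic to a generalized theta graph with pendant edges, the braid group is
presented by the smoothed two-vertex graph. -/
theorem theta_presents {V : Type} [DecidableEq V] {Γ : SimpleGraph V} [Fintype τ] [Fintype α]
    [Fintype β] (i0 : τ) (e : realization Γ ≃ₜ realization (KG τ α β))
    (x : UConf 3 (realization Γ)) :
    ∃ y : UConf 3 (realization (KG τ α β)),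
      Nonempty (FundamentalGroup (UConf 3 (realization Γ)) x ≃*
        FundamentalGroup (UConf 3 (realization (KG τ α β))) y) ∧
      Presents (tinc (τ := τ) (α := α) (β := β))
        (FundamentalGroup (UConf 3 (realization (KG τ α β))) y) := by
  obtain ⟨y, hy⟩ := pi1_homeo (uconfHomeo 3 e) x
  refine ⟨y, hy, smooth_presents i0 ?_⟩
  have h := presents (Γ := KG τ α β) (KG_conn i0) ⟨s(.p, .mid i0), Or.inl trivial⟩ y
  let f := Equiv.ofBijective (keMap : KE τ α β → _) keMap_bij
  refine h.congr f.symm fun v k => ?_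
  rw [keMap_inc]
  change einc _ v (f (f.symm k)) ↔ _
  rw [f.apply_symm_apply]

theorem theta_free {V : Type} [DecidableEq V] {Γ : SimpleGraph V} {a b : ℕ}
    (e : realization Γ ≃ₜ realization (K23Pendant a b)) (x : UConf 3 (realization Γ)) :
    IsFreeGroupType (FundamentalGroup (UConf 3 (realization Γ)) x) := by
  obtain ⟨e1⟩ := KG_K23 a b
  let f : Three → Fin 3 := fun t => match t with
    | .x => 0
    | .y => 1
    | .z => 2
  have hf : Function.Bijective f := by
    constructor
    · intro s t h
      cases s <;> cases t <;> simp [f] at h <;> rfl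
    · intro i
      fin_cases i
      exacts [⟨.x, rfl⟩, ⟨.y, rfl⟩, ⟨.z, rfl⟩]
  let g := Equiv.ofBijective f hf
  have : Fintype Three := Fintype.ofEquiv _ g.symm
  obtain ⟨e2⟩ := KG_congr g (Equiv.refl (Fin a)) (Equiv.refl (Fin b))
  have e3 : realization Γ ≃ₜ realization (KG (Fin 3) (Fin a) (Fin b)) :=
    e.trans (by convert e1.symm)
  obtain ⟨y, ⟨h⟩, hP⟩ := theta_presents Three.x (e3.trans e2.symm) x
  exact (theta3_free hP).of_equiv h

theorem main_iff
    (V : Type) [Fintype V] [DecidableEq V] (Γ : SimpleGraph V)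
    (hconn : Γ.Connected) (hedge : Γ.edgeSet.Nonempty)
    (x : UConf 3 ↥(realization Γ)) :
    IsFreeGroupType (FundamentalGroup (UConf 3 ↥(realization Γ)) x) ↔
      ((¬ ∃ H : Γ.Subgraph, IsCycleSubgraph H) ∨
        ({v : V | 3 ≤ (Γ.neighborSet v).ncard}.Subsingleton) ∨
        ((∃! H : Γ.Subgraph, IsCycleSubgraph H) ∧
          ∀ H : Γ.Subgraph, IsCycleSubgraph H →
            ∀ v : V, 3 ≤ (Γ.neighborSet v).ncard → v ∈ H.verts) ∨
        (∃ a b : ℕ,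
          Nonempty (↥(realization Γ) ≃ₜ ↥(realization (K23Pendant a b))))) := by
  have hP := presents hconn hedge x
  constructor
  · intro hfree
    by_contra hno
    push Not at hno
    obtain ⟨ha, hb, hc, hd⟩ := hno
    by_cases hall : ∀ H : Γ.Subgraph, IsCycleSubgraph H →
        ∀ v : V, 3 ≤ (Γ.neighborSet v).ncard → v ∈ H.verts
    · obtain ⟨m, a, b, hm, ⟨e⟩⟩ := exists_theta hconn hall ha
        (Set.not_subsingleton_iff.2 hb) (fun h => by
          obtain ⟨H, hH, v, h3, hv⟩ := hc h
          exact hv (hall H hH v h3))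
      rcases hm.eq_or_lt with rfl | hm
      · obtain ⟨e1⟩ := KG_K23 a b
        exact (not_nonempty_iff.2 (hd a b)) ⟨e.trans (by convert e1)⟩
      · obtain ⟨y, ⟨h⟩, hP'⟩ := theta_presents (⟨0, by omega⟩ : Fin m) e x
        exact case2 hP' (Fin.castLE hm) (Fin.castLE_injective hm) (hfree.of_equiv h.symm)
    · push Not at hall
      obtain ⟨H, hH, v, h3, hv⟩ := hall
      exact case1_graph hP hH hv h3 hfree
  · rintro (h | h | h | ⟨a, b, ⟨e⟩⟩)
    · obtain ⟨D⟩ := abc_star hconn hedge (Or.inl h)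
      exact D.free hP
    · obtain ⟨D⟩ := abc_star hconn hedge (Or.inr (Or.inl h))
      exact D.free hP
    · obtain ⟨D⟩ := abc_star hconn hedge (Or.inr (Or.inr h))
      exact D.free hP
    · exact theta_free e x

end Final

end

/-- For a finite connected simple graph `Γ` with at least one edge, the
graph 3-braid group `B₃(Γ)` is free iff (a) `Γ` is a tree (no cycle subgraph), or (b) `Γ`
has at most one vertex of degree at least 3, or (c) `Γ` has exactly one cycle subgraph and
it contains all vertices of degree at least 3, or (d) the realization of `Γ` is homeomorphic
to the realization of a graph obtained from `K_{2,3}` by attaching pendant edges at its two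
degree-3 vertices. -/
theorem braid3_free_iff
    (V : Type) [Fintype V] [DecidableEq V] (Γ : SimpleGraph V)
    (hconn : Γ.Connected) (hedge : Γ.edgeSet.Nonempty)
    (x : UConf 3 ↥(realization Γ)) :
    IsFreeGroupType (FundamentalGroup (UConf 3 ↥(realization Γ)) x) ↔
      ((¬ ∃ H : Γ.Subgraph, IsCycleSubgraph H) ∨
        ({v : V | 3 ≤ (Γ.neighborSet v).ncard}.Subsingleton) ∨
        ((∃! H : Γ.Subgraph, IsCycleSubgraph H) ∧
          ∀ H : Γ.Subgraph, IsCycleSubgraph H →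
            ∀ v : V, 3 ≤ (Γ.neighborSet v).ncard → v ∈ H.verts) ∨
        (∃ a b : ℕ,
          Nonempty (↥(realization Γ) ≃ₜ ↥(realization (K23Pendant a b))))) := by
  exact main_iff V Γ hconn hedge x

end GraphBraid
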